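/- arXiv:1201.0701 — 2 statements merged into one kernel-verified Lean document; each statement's English description precedes it below -/
import Mathlib

section
/- Let p₁ ≡ 3 (mod 8) be a prime with p₁ ≠ 3, set N = 2p₁, and let p ≡ 3 (mod 4) be a prime with f := ord_N(p) = φ(N)/2. Let q = p^f and let I = ⟨p⟩ ∪ 2⟨p⟩ ∪ {0} ⊆ Z_N, where ⟨p⟩ denotes the subgroup of Z_N^* generated by p. Assume 1 + p₁ = 4p^h, where h is the class number of Q(√(−p₁)). Then there exists a primitive element γ of F_q such that, with C_i = γ^i⟨γ^N⟩ the cyclotomic classes of order N, the set D = ⋃_{i∈I} C_i is a skew Hadamard difference set in the additive group of F_q. -/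
open scoped Classical

/-- The cyclotomic class `C_i = γ^i ⟨γ^N⟩ = {γ^{i+Nk} : k ∈ ℤ}` of order `N` of a finite
field, with respect to the primitive element `γ`. -/
def cycClass {F : Type*} [Field F] (γ : Fˣ) (N i : ℕ) : Set F :=
  {x : F | ∃ k : ℤ, x = ((γ ^ ((i : ℤ) + (N : ℤ) * k) : Fˣ) : F)}

/-- `D` is a skew Hadamard difference set in `(G, +)`: it is a difference set
(every nonzero `g` has the same number of representations `g = d₁ - d₂` with
`d₁, d₂ ∈ D`) and `G` is the disjoint union of `D`, `-D` and `{0}`. -/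
def IsSkewHadamardDifferenceSet {G : Type*} [AddCommGroup G] (D : Set G) : Prop :=
  (0 : G) ∉ D ∧ (∀ g : G, g ≠ 0 → (g ∈ D ↔ -g ∉ D)) ∧
    ∃ l : ℕ, ∀ g : G, g ≠ 0 →
      Nat.card {x : G × G // x.1 ∈ D ∧ x.2 ∈ D ∧ x.1 - x.2 = g} = l


section
open Filter Topology Finset

/-- Dirichlet series with bounded partial sums: convergence at `1` and continuity from the right. -/
lemma dirichlet_abel (c : ℕ → ℝ) (B : ℝ) (hB : ∀ M, |∑ n ∈ range M, c n| ≤ B) :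
    ∃ l : ℝ, Tendsto (fun M => ∑ n ∈ range M, c n / ((n : ℝ) + 1)) atTop (𝓝 l) ∧
      Tendsto (fun s : ℝ => ∑' n : ℕ, c n * ((n : ℝ) + 1) ^ (-s)) (𝓝[>] 1) (𝓝 l) := by
  have hB0 : 0 ≤ B := by simpa using hB 0
  let S : ℕ → ℝ := fun M => ∑ n ∈ range M, c n
  let t : ℝ → ℕ → ℝ := fun s n => S (n + 1) * (((n : ℝ) + 1) ^ (-s) - ((n : ℝ) + 2) ^ (-s))
  have hparts : ∀ s : ℝ, ∀ M : ℕ, ∑ n ∈ range M, c n * ((n : ℝ) + 1) ^ (-s)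
      = ∑ n ∈ range M, t s n + S M * ((M : ℝ) + 1) ^ (-s) := by
    intro s M
    induction M with
    | zero => simp [S]
    | succ M ih =>
      rw [sum_range_succ, sum_range_succ, ih]
      simp only [t, S, sum_range_succ]
      push_cast
      rw [show (M : ℝ) + 1 + 1 = M + 2 by ring]
      ring
  have hbound : ∀ s : ℝ, 1 ≤ s → s ≤ 2 → ∀ n, ‖t s n‖ ≤ B * (2 * (((n : ℝ) + 1) ^ 2)⁻¹) := by
    intro s hs1 hs2 n
    have hn : (0 : ℝ) < (n : ℝ) + 1 := by positivity
    simp only [t]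
    rw [norm_mul]
    refine mul_le_mul (hB _) ?_ (norm_nonneg _) hB0
    have h1 : ((n : ℝ) + 2) ^ (-s) ≤ ((n : ℝ) + 1) ^ (-s) :=
      Real.rpow_le_rpow_of_nonpos hn (by linarith) (by linarith)
    rw [Real.norm_eq_abs, abs_of_nonneg (by linarith)]
    obtain ⟨ξ, hξ, he⟩ := exists_deriv_eq_slope (fun x : ℝ => x ^ (-s))
      (show (n : ℝ) + 1 < n + 2 by linarith)
      (by
        intro x hx
        exact (Real.continuousAt_rpow_const x (-s) (Or.inl (by linarith [hx.1]))).continuousWithinAt)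
      (by
        intro x hx
        exact (Real.differentiableAt_rpow_const_of_ne (-s) (by linarith [hx.1])).differentiableWithinAt)
    have hξ0 : 0 < ξ := by linarith [hξ.1]
    rw [Real.deriv_rpow_const] at he
    have : ((n : ℝ) + 2 - (n + 1)) = 1 := by ring
    rw [this, div_one] at he
    have h2 : ((n : ℝ) + 1) ^ (-s) - ((n : ℝ) + 2) ^ (-s) = s * ξ ^ (-s - 1) := by linarith
    rw [h2]
    have h3 : ξ ^ (-s - 1) ≤ ((n : ℝ) + 1) ^ (-s - 1) :=
      Real.rpow_le_rpow_of_nonpos hn hξ.1.le (by linarith)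
    have h4 : ((n : ℝ) + 1) ^ (-s - 1) ≤ ((n : ℝ) + 1) ^ (-2 : ℝ) :=
      Real.rpow_le_rpow_of_exponent_le (by linarith [Nat.cast_nonneg (α := ℝ) n]) (by linarith)
    have h5 : ((n : ℝ) + 1) ^ (-2 : ℝ) = (((n : ℝ) + 1) ^ 2)⁻¹ := by
      rw [Real.rpow_neg hn.le]; norm_cast
    rw [← h5]
    exact mul_le_mul hs2 (h3.trans h4) (by positivity) (by norm_num)
  have hsum : Summable (fun n : ℕ => B * (2 * (((n : ℝ) + 1) ^ 2)⁻¹)) := by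
    have := (summable_nat_add_iff 1).mpr (Real.summable_nat_pow_inv (p := 2) |>.mpr (by norm_num))
    simpa using (this.mul_left 2).mul_left B
  have hlast : ∀ s : ℝ, 1 ≤ s → Tendsto (fun M : ℕ => S M * ((M : ℝ) + 1) ^ (-s)) atTop (𝓝 0) := by
    intro s hs
    refine bdd_le_mul_tendsto_zero' B (Eventually.of_forall fun M => hB M) ?_
    have := (tendsto_rpow_neg_atTop (show 0 < s by linarith)).comp
      (tendsto_atTop_add_const_right _ 1 (tendsto_natCast_atTop_atTop (R := ℝ)))
    exact this
  have hlim : ∀ s : ℝ, 1 ≤ s → s ≤ 2 →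
      Tendsto (fun M => ∑ n ∈ range M, c n * ((n : ℝ) + 1) ^ (-s)) atTop (𝓝 (∑' n, t s n)) := by
    intro s h1 h2
    have hs : Summable (t s) := Summable.of_norm_bounded hsum (hbound s h1 h2)
    have := hs.hasSum.tendsto_sum_nat.add (hlast s h1)
    rw [add_zero] at this
    exact this.congr fun M => (hparts s M).symm
  refine ⟨∑' n, t 1 n, ?_, ?_⟩
  · refine (hlim 1 le_rfl (by norm_num)).congr fun M => sum_congr rfl fun n _ => ?_
    rw [Real.rpow_neg_one, div_eq_mul_inv]
  · have hev : ∀ᶠ s : ℝ in 𝓝[>] 1, s ∈ Set.Ioo (1 : ℝ) 2 :=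
      Ioo_mem_nhdsGT (by norm_num)
    have hT : Tendsto (fun s : ℝ => ∑' n, t s n) (𝓝[>] 1) (𝓝 (∑' n, t 1 n)) := by
      refine tendsto_tsum_of_dominated_convergence hsum ?_ ?_
      · intro n
        refine Tendsto.mono_left ?_ nhdsWithin_le_nhds
        simp only [t]
        have e1 : (n : ℝ) + 1 ≠ 0 := by positivity
        have e2 : (n : ℝ) + 2 ≠ 0 := by positivity
        have : Continuous fun s : ℝ => S (n + 1) * (((n : ℝ) + 1) ^ (-s) - ((n : ℝ) + 2) ^ (-s)) := by
          refine continuous_const.mul ((Continuous.sub ?_ ?_))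
          · exact continuous_const.rpow continuous_neg fun _ => Or.inl e1
          · exact continuous_const.rpow continuous_neg fun _ => Or.inl e2
        exact this.tendsto 1
      · filter_upwards [hev] with s hs n
        exact hbound s hs.1.le hs.2.le n
    refine hT.congr' ?_
    filter_upwards [hev] with s hs
    have hcs : Summable fun n : ℕ => c n * ((n : ℝ) + 1) ^ (-s) := by
      have hc : ∀ n, |c n| ≤ 2 * B := by
        intro n
        have h1 := hB n
        have h2 := hB (n + 1)
        rw [sum_range_succ] at h2
        rw [abs_le] at *
        constructor <;> linarith
      have hz : Summable (fun n : ℕ => 2 * B * ((n : ℝ) + 1) ^ (-s)) := by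
        have := (summable_nat_add_iff 1).mpr (Real.summable_nat_rpow (p := -s) |>.mpr (by linarith [hs.1]))
        simpa using this.mul_left (2 * B)
      refine Summable.of_norm_bounded hz fun n => ?_
      rw [norm_mul, Real.norm_eq_abs, Real.norm_eq_abs, abs_of_nonneg (a := ((n : ℝ) + 1) ^ (-s)) (by positivity)]
      exact mul_le_mul_of_nonneg_right (hc n) (by positivity)
    exact tendsto_nhds_unique (hlim s hs.1.le hs.2.le) hcs.hasSum.tendsto_sum_nat
end

section
open Filter Topology Finset

/-- the quadratic character mod `p₁` with values in an arbitrary ring -/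
noncomputable def qchi (p₁ : ℕ) [Fact p₁.Prime] (R : Type*) [CommRing R] : MulChar (ZMod p₁) R :=
  (quadraticChar (ZMod p₁)).ringHomComp (Int.castRingHom R)

lemma qchi_apply (p₁ : ℕ) [Fact p₁.Prime] (R : Type*) [CommRing R] (x : ZMod p₁) :
    qchi p₁ R x = ((quadraticChar (ZMod p₁) x : ℤ) : R) := rfl

lemma qchi_neg_one (p₁ : ℕ) [Fact p₁.Prime] (h4 : p₁ % 4 = 3) :
    quadraticChar (ZMod p₁) (-1) = -1 := by
  have h2 : ringChar (ZMod p₁) ≠ 2 := by rw [ZMod.ringChar_zmod_n]; omega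
  rw [quadraticChar_neg_one h2, ZMod.card, ZMod.χ₄_nat_three_mod_four h4]

lemma quadChar_neg (p₁ : ℕ) [Fact p₁.Prime] (h4 : p₁ % 4 = 3) (x : ZMod p₁) :
    quadraticChar (ZMod p₁) (-x) = - quadraticChar (ZMod p₁) x := by
  rw [← neg_one_mul, map_mul, qchi_neg_one p₁ h4]; ring

/-- the quadratic Gauss sum -/
noncomputable def qg (p₁ : ℕ) [Fact p₁.Prime] {R : Type*} [CommRing R] (ζ : R) : R :=
  ∑ x : ZMod p₁, (quadraticChar (ZMod p₁) x : R) * ζ ^ x.val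

lemma qg_eq (p₁ : ℕ) [Fact p₁.Prime] {R : Type*} [CommRing R] (ζ : R) (hζ : ζ ^ p₁ = 1) :
    qg p₁ ζ = gaussSum (qchi p₁ R) (AddChar.zmodChar p₁ hζ) := by
  simp [qg, gaussSum, qchi_apply, AddChar.zmodChar_apply]

lemma pow_val_mul (p₁ : ℕ) [Fact p₁.Prime] {R : Type*} [CommRing R] (ζ : R) (hζ : ζ ^ p₁ = 1)
    (x : ZMod p₁) (n : ℕ) : ζ ^ (x.val * n) = ζ ^ ((n : ZMod p₁) * x).val := by
  rw [ZMod.val_mul, ZMod.val_natCast, ← pow_mod_orderOf, eq_comm, ← pow_mod_orderOf, eq_comm]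
  congr 1
  have hd : orderOf ζ ∣ p₁ := orderOf_dvd_of_pow_eq_one hζ
  have : (n % p₁ * x.val % p₁) ≡ x.val * n [MOD p₁] := by
    refine (Nat.mod_modEq _ _).trans ?_
    rw [mul_comm]
    exact (Nat.mod_modEq n p₁).mul_left _
  exact (this.of_dvd hd).symm

lemma qg_shift (p₁ : ℕ) [Fact p₁.Prime] (h4 : p₁ % 4 = 3) {R : Type*} [CommRing R] [IsDomain R]
    [CharZero R] (ζ : R) (hζ : ζ ^ p₁ = 1) (n : ℕ) :
    ∑ x : ZMod p₁, (quadraticChar (ZMod p₁) x : R) * ζ ^ (x.val * n)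
      = (quadraticChar (ZMod p₁) (n : ZMod p₁) : R) * qg p₁ ζ := by
  simp_rw [pow_val_mul p₁ ζ hζ]
  have h2 : ringChar (ZMod p₁) ≠ 2 := by rw [ZMod.ringChar_zmod_n]; omega
  by_cases hn : (n : ZMod p₁) = 0
  · simp only [hn, zero_mul, ZMod.val_zero, pow_zero, mul_one]
    rw [← Int.cast_sum, quadraticChar_sum_zero h2, quadraticChar_zero, Int.cast_zero, zero_mul]
  · have hu := gaussSum_mulShift (qchi p₁ R) (AddChar.zmodChar p₁ hζ) (Units.mk0 _ hn)
    have : gaussSum (qchi p₁ R) (AddChar.mulShift (AddChar.zmodChar p₁ hζ) ((Units.mk0 _ hn : (ZMod p₁)ˣ) : ZMod p₁))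
        = ∑ x : ZMod p₁, (quadraticChar (ZMod p₁) x : R) * ζ ^ ((n : ZMod p₁) * x).val := by
      simp [gaussSum, qchi_apply, AddChar.mulShift_apply, AddChar.zmodChar_apply]
    rw [this, ← qg_eq, qchi_apply] at hu
    simp only [Units.val_mk0] at hu
    rw [← hu, ← mul_assoc, ← Int.cast_mul, ← sq, quadraticChar_sq_one hn]
    simp

lemma qg_sq (p₁ : ℕ) [Fact p₁.Prime] (h4 : p₁ % 4 = 3) {R : Type*} [CommRing R] [IsDomain R]
    [CharZero R] (ζ : R) (hζ : IsPrimitiveRoot ζ p₁) : qg p₁ ζ ^ 2 = -(p₁ : R) := by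
  have h2 : ringChar (ZMod p₁) ≠ 2 := by rw [ZMod.ringChar_zmod_n]; omega
  rw [qg_eq p₁ ζ hζ.pow_eq_one, gaussSum_sq]
  · rw [qchi_apply, qchi_neg_one p₁ h4, ZMod.card]; push_cast; ring
  · intro h
    have := congrArg (fun f => f (-1)) h
    simp only [qchi_apply, qchi_neg_one p₁ h4, MulChar.one_apply (isUnit_neg_one)] at this
    have h3 : (2 : R) = 0 := by push_cast at this; linear_combination this*(-1)
    exact two_ne_zero h3
  · exact (quadraticChar_isQuadratic (ZMod p₁)).comp _
  · exact AddChar.zmodChar_primitive_of_primitive_root p₁ hζ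

lemma log_one_sub_exp (x : ℝ) (h0 : 0 < x) (h1 : x < 1) :
    Complex.log (1 - Complex.exp (2 * Real.pi * Complex.I * x)) =
      (Real.log (2 * Real.sin (Real.pi * x)) : ℂ) + ((Real.pi * x - Real.pi / 2 : ℝ) : ℂ) * Complex.I := by
  have hpi := Real.pi_pos
  have hs : 0 < Real.sin (Real.pi * x) := Real.sin_pos_of_pos_of_lt_pi (by positivity) (by nlinarith)
  have key : 1 - Complex.exp (2 * Real.pi * Complex.I * x)
      = ((2 * Real.sin (Real.pi * x) : ℝ) : ℂ) * Complex.exp (((Real.pi * x - Real.pi / 2 : ℝ) : ℂ) * Complex.I) := by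
    have e1 : Complex.exp (2 * Real.pi * Complex.I * x)
        = Complex.exp ((Real.pi * x : ℝ) * Complex.I) * Complex.exp ((Real.pi * x : ℝ) * Complex.I) := by
      rw [← Complex.exp_add]; congr 1; push_cast; ring
    rw [e1]
    apply Complex.ext
    · simp only [Complex.sub_re, Complex.one_re, Complex.mul_re, Complex.exp_ofReal_mul_I_re,
        Complex.exp_ofReal_mul_I_im, Complex.ofReal_re, Complex.ofReal_im, Real.cos_sub_pi_div_two, Real.sin_sub_pi_div_two]
      nlinarith [Real.sin_sq_add_cos_sq (Real.pi * x)]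
    · simp only [Complex.sub_im, Complex.one_im, Complex.mul_im, Complex.exp_ofReal_mul_I_re,
        Complex.exp_ofReal_mul_I_im, Complex.ofReal_re, Complex.ofReal_im, Real.cos_sub_pi_div_two, Real.sin_sub_pi_div_two]
      ring
  rw [key, Complex.log_ofReal_mul (by positivity) (Complex.exp_ne_zero _), Complex.log_exp]
  · simp; nlinarith
  · simp; nlinarith

lemma L_one_value (p₁ : ℕ) [Fact p₁.Prime] (h4 : p₁ % 4 = 3) (l : ℝ)
    (hl : Tendsto (fun M => ∑ n ∈ range M,
      (quadraticChar (ZMod p₁) ((n + 1 : ℕ) : ZMod p₁) : ℝ) / ((n : ℝ) + 1)) atTop (𝓝 l)) :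
    |l| * (p₁ * Real.sqrt p₁) =
      Real.pi * |((∑ x : ZMod p₁, (x.val : ℤ) * quadraticChar (ZMod p₁) x : ℤ) : ℝ)| := by
  have hp : p₁.Prime := Fact.out
  have hp0 : p₁ ≠ 0 := hp.ne_zero
  have hp0' : (0 : ℝ) < p₁ := by exact_mod_cast hp.pos
  let χ := quadraticChar (ZMod p₁)
  let ζ : ℂ := Complex.exp (2 * Real.pi * Complex.I / p₁)
  have hζ : IsPrimitiveRoot ζ p₁ := Complex.isPrimitiveRoot_exp p₁ hp0
  let f : ℕ → ℝ := fun n => (χ (n : ZMod p₁) : ℝ) / n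
  have hf : Tendsto (fun M => ∑ n ∈ range M, f n) atTop (𝓝 l) := by
    rw [← tendsto_add_atTop_iff_nat 1]
    refine hl.congr fun M => ?_
    rw [sum_range_succ']
    simp [f, χ]
  have hA := Real.tendsto_tsum_powerSeries_nhdsWithin_lt hf
  have hζx : ∀ x : ZMod p₁, ζ ^ x.val = Complex.exp (2 * Real.pi * Complex.I * ((x.val / p₁ : ℝ) : ℂ)) := by
    intro x
    simp only [ζ]
    rw [← Complex.exp_nat_mul]
    congr 1; push_cast; ring
  have hlog : ∀ r : ℝ, r ∈ Set.Ioo (0 : ℝ) 1 → ((∑' n, f n * r ^ n : ℝ) : ℂ) * qg p₁ ζ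
      = ∑ x : ZMod p₁, (χ x : ℂ) * -Complex.log (1 - ζ ^ x.val * r) := by
    intro r hr
    have h1 : ∀ x : ZMod p₁, HasSum (fun n : ℕ => (χ x : ℂ) * ((ζ ^ x.val * r) ^ n / n))
        ((χ x : ℂ) * -Complex.log (1 - ζ ^ x.val * r)) := by
      intro x
      refine (Complex.hasSum_taylorSeries_neg_log ?_).mul_left _
      rw [norm_mul, norm_pow, hζ.norm'_eq_one hp0, one_pow, one_mul, Complex.norm_real, Real.norm_eq_abs, abs_of_pos hr.1]
      exact hr.2
    have h2 := hasSum_sum (s := univ) fun x _ => h1 x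
    have h3 : ∀ n : ℕ, ∑ x : ZMod p₁, (χ x : ℂ) * ((ζ ^ x.val * r) ^ n / n)
        = ((f n * r ^ n : ℝ) : ℂ) * qg p₁ ζ := by
      intro n
      have := qg_shift p₁ h4 ζ hζ.pow_eq_one n
      calc _ = (∑ x : ZMod p₁, (χ x : ℂ) * ζ ^ (x.val * n)) * (r ^ n / n) := by
            rw [sum_mul]
            refine sum_congr rfl fun x _ => ?_
            rw [mul_pow, pow_mul]; ring
        _ = _ := by rw [this]; simp only [f]; push_cast; ring
    simp_rw [h3] at h2
    rw [← h2.tsum_eq, tsum_mul_right, ← Complex.ofReal_tsum]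
  have hg0 : qg p₁ ζ ≠ 0 := by
    intro h
    have := qg_sq p₁ h4 ζ hζ
    rw [h] at this
    have h' : (p₁ : ℂ) = 0 := by linear_combination this
    exact hp0 (by exact_mod_cast h')
  have hval : ∀ x : ZMod p₁, x ≠ 0 → 0 < (x.val / p₁ : ℝ) ∧ (x.val / p₁ : ℝ) < 1 := by
    intro x hx
    have : 0 < x.val := Nat.pos_of_ne_zero (by simpa [ZMod.val_eq_zero] using hx)
    refine ⟨by positivity, ?_⟩
    rw [div_lt_one hp0']
    exact_mod_cast ZMod.val_lt x
  have hlim : Tendsto (fun r : ℝ => ∑ x : ZMod p₁, (χ x : ℂ) * -Complex.log (1 - ζ ^ x.val * r)) (𝓝[<] 1)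
      (𝓝 (∑ x : ZMod p₁, (χ x : ℂ) * -Complex.log (1 - ζ ^ x.val))) := by
    refine tendsto_finsetSum _ fun x _ => ?_
    by_cases hx : x = 0
    · simp [hx, χ]
    refine Tendsto.mul tendsto_const_nhds (Tendsto.neg ?_)
    refine Tendsto.mono_left ?_ nhdsWithin_le_nhds
    have hc : ContinuousAt (fun r : ℝ => Complex.log (1 - ζ ^ x.val * r)) 1 := by
      refine ContinuousAt.clog (by fun_prop) ?_
      left
      rw [Complex.ofReal_one, mul_one]
      have hne : ζ ^ x.val ≠ 1 := by
        refine hζ.pow_ne_one_of_pos_of_lt ?_ (ZMod.val_lt x)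
        simpa [ZMod.val_eq_zero] using hx
      have hn : ‖ζ ^ x.val‖ = 1 := by rw [norm_pow, hζ.norm'_eq_one hp0, one_pow]
      have hre : (ζ ^ x.val).re ≤ 1 := hn ▸ Complex.re_le_norm _
      have hre' : (ζ ^ x.val).re ≠ 1 := by
        intro h
        apply hne
        have h5 := Complex.sq_norm (ζ ^ x.val)
        rw [hn, Complex.normSq_apply, h] at h5
        have : (ζ ^ x.val).im = 0 := by nlinarith
        exact Complex.ext h this
      rw [Complex.sub_re, Complex.one_re]
      have := lt_of_le_of_ne hre hre'
      linarith
    have := hc.tendsto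
    simpa using this
  have hA' : Tendsto (fun r : ℝ => ((∑' n, f n * r ^ n : ℝ) : ℂ) * qg p₁ ζ) (𝓝[<] 1) (𝓝 (l * qg p₁ ζ)) :=
    ((Complex.continuous_ofReal.tendsto l).comp hA).mul_const _
  have hev : ∀ᶠ r : ℝ in 𝓝[<] 1, r ∈ Set.Ioo (0 : ℝ) 1 := Ioo_mem_nhdsLT (by norm_num)
  have heq : (l : ℂ) * qg p₁ ζ = ∑ x : ZMod p₁, (χ x : ℂ) * -Complex.log (1 - ζ ^ x.val) := by
    refine tendsto_nhds_unique hA' (hlim.congr' ?_)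
    filter_upwards [hev] with r hr
    exact (hlog r hr).symm
  -- evaluate
  have hterm : ∀ x : ZMod p₁, (χ x : ℂ) * -Complex.log (1 - ζ ^ x.val)
      = (((χ x : ℝ) * -Real.log (2 * Real.sin (Real.pi * (x.val / p₁))) : ℝ) : ℂ)
        + ((-(Real.pi / p₁ * ((x.val : ℝ) * χ x)) + Real.pi / 2 * χ x : ℝ) : ℂ) * Complex.I := by
    intro x
    by_cases hx : x = 0
    · simp [hx, χ]
    rw [hζx, log_one_sub_exp _ (hval x hx).1 (hval x hx).2]
    push_cast; ring
  have hre : ∑ x : ZMod p₁, (χ x : ℝ) * -Real.log (2 * Real.sin (Real.pi * (x.val / p₁))) = 0 := by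
    have h1 : ∑ x : ZMod p₁, (χ x : ℝ) * -Real.log (2 * Real.sin (Real.pi * (x.val / p₁)))
       = ∑ x : ZMod p₁, -((χ x : ℝ) * -Real.log (2 * Real.sin (Real.pi * (x.val / p₁)))) := by
      rw [← Equiv.sum_comp (Equiv.neg (ZMod p₁))]
      refine sum_congr rfl fun x _ => ?_
      by_cases hx : x = 0
      · simp [hx, χ]
      have : NeZero x := ⟨hx⟩
      simp only [Equiv.neg_apply, χ]
      rw [quadChar_neg p₁ h4, ZMod.val_neg_of_ne_zero, Nat.cast_sub (ZMod.val_lt x).le, sub_div, div_self hp0'.ne',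
        mul_sub, mul_one, Real.sin_pi_sub]
      push_cast; ring
    rw [sum_neg_distrib] at h1
    linarith
  have h2 : ringChar (ZMod p₁) ≠ 2 := by rw [ZMod.ringChar_zmod_n]; omega
  have hs0 : ∑ x : ZMod p₁, (χ x : ℝ) = 0 := by
    rw [← Int.cast_sum, quadraticChar_sum_zero h2, Int.cast_zero]
  have heq2 : (l : ℂ) * qg p₁ ζ = ((-(Real.pi / p₁ * ((∑ x : ZMod p₁, (x.val : ℤ) * χ x : ℤ) : ℝ)) : ℝ) : ℂ) * Complex.I := by
    rw [heq, sum_congr rfl fun x _ => hterm x, sum_add_distrib, ← sum_mul, ← Complex.ofReal_sum, ← Complex.ofReal_sum, hre,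
      sum_add_distrib, ← mul_sum, hs0]
    push_cast
    simp [mul_sum]
  have hng : ‖qg p₁ ζ‖ = Real.sqrt p₁ := by
    have := congrArg norm (qg_sq p₁ h4 ζ hζ)
    rw [norm_pow, norm_neg, Complex.norm_natCast] at this
    rw [← this, Real.sqrt_sq (norm_nonneg _)]
  have := congrArg norm heq2
  rw [norm_mul, norm_mul, hng, Complex.norm_real, Complex.norm_real, Complex.norm_I, mul_one, Real.norm_eq_abs,
    Real.norm_eq_abs, abs_neg, abs_mul, abs_of_pos (div_pos Real.pi_pos hp0')] at this
  rw [← mul_assoc, mul_right_comm, this]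
  field_simp
  rfl
end

section
open Filter Topology Finset NumberField

section quad
variable {K : Type*} [Field K] [NumberField K]

lemma quad_minpoly (p₁ : ℕ) (hp₁ : p₁.Prime) (α : K) (hα : α ^ 2 = -(p₁ : K)) :
    minpoly ℚ α = Polynomial.X ^ 2 + Polynomial.C (p₁ : ℚ) := by
  symm
  have hmonic : (Polynomial.X ^ 2 + Polynomial.C (p₁ : ℚ)).Monic := Polynomial.monic_X_pow_add_C _ (by norm_num)
  refine minpoly.eq_of_irreducible_of_monic ?_ ?_ hmonic
  · have hd : (Polynomial.X ^ 2 + Polynomial.C (p₁ : ℚ)).natDegree = 2 := Polynomial.natDegree_X_pow_add_C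
    rw [Polynomial.irreducible_iff_roots_eq_zero_of_degree_le_three (by rw [hd]) (by rw [hd]; norm_num)]
    refine Multiset.eq_zero_of_forall_notMem fun x hx => ?_
    rw [Polynomial.mem_roots hmonic.ne_zero] at hx
    simp at hx
    have : (0 : ℚ) < p₁ := by exact_mod_cast hp₁.pos
    nlinarith [sq_nonneg x]
  · simp [hα]

lemma quad_pb (p₁ : ℕ) (hp₁ : p₁.Prime) (α : K) (hα : α ^ 2 = -(p₁ : K))
    (hKα : Algebra.adjoin ℚ {α} = ⊤) :
    Module.finrank ℚ K = 2 ∧ Algebra.trace ℚ K α = 0 := by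
  have hInteg : IsIntegral ℚ α := Algebra.IsIntegral.isIntegral α
  let pb := PowerBasis.ofAdjoinEqTop hInteg hKα
  have hgen : pb.gen = α := by simp [pb]
  have hmp := quad_minpoly p₁ hp₁ α hα
  constructor
  · rw [pb.finrank, ← pb.natDegree_minpoly, hgen, hmp]
    exact Polynomial.natDegree_X_pow_add_C
  · have := pb.trace_gen_eq_nextCoeff_minpoly
    rw [hgen, hmp] at this
    rw [this, Polynomial.nextCoeff_of_natDegree_pos]
    · rw [Polynomial.natDegree_X_pow_add_C]; simp [Polynomial.coeff_X_pow]
    · rw [Polynomial.natDegree_X_pow_add_C]; norm_num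

lemma quad_abs_discr (p₁ : ℕ) (hp₁ : p₁.Prime) (α : K) (hα : α ^ 2 = -(p₁ : K))
    (hKα : Algebra.adjoin ℚ {α} = ⊤) : (p₁ : ℤ) ≤ |discr K| := by
  obtain ⟨hfin, htr⟩ := quad_pb p₁ hp₁ α hα hKα
  have hrank : Module.finrank ℤ (𝓞 K) = 2 := by rw [RingOfIntegers.rank, hfin]
  let b : Module.Basis (Fin 2) ℤ (𝓞 K) := (Module.finBasisOfFinrankEq ℤ (𝓞 K) hrank)
  have hαint : IsIntegral ℤ α := by
    refine ⟨Polynomial.X ^ 2 + Polynomial.C (p₁ : ℤ), Polynomial.monic_X_pow_add_C _ (by norm_num), ?_⟩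
    simp [hα]
  let a : 𝓞 K := ⟨α, hαint⟩
  let v : Fin 2 → 𝓞 K := ![1, a]
  let P : Matrix (Fin 2) (Fin 2) ℤ := b.toMatrix v
  have hv : v = Matrix.vecMul b (P.map (algebraMap ℤ (𝓞 K))) := by
    rw [← Module.Basis.toMatrix_map_vecMul b v]
  have hd : Algebra.discr ℤ v = P.det ^ 2 * Algebra.discr ℤ b := by
    rw [hv]; exact Algebra.discr_of_matrix_vecMul _ _
  rw [discr_eq_discr K b] at hd
  have htrZ : ∀ x : 𝓞 K, ((Algebra.trace ℤ (𝓞 K) x : ℤ) : ℚ) = Algebra.trace ℚ K (x : K) := by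
    intro x
    exact (Algebra.trace_localization ℤ (nonZeroDivisors ℤ) x).symm
  have ht1 : Algebra.trace ℤ (𝓞 K) 1 = 2 := by
    have := Algebra.trace_algebraMap (R := ℤ) (S := 𝓞 K) (1 : ℤ)
    rw [map_one, hrank] at this
    simpa using this
  have hta : Algebra.trace ℤ (𝓞 K) a = 0 := by
    have := htrZ a
    rw [show ((a : 𝓞 K) : K) = α from rfl, htr] at this
    exact_mod_cast this
  have haa : a * a = algebraMap ℤ (𝓞 K) (-(p₁ : ℤ)) := by
    apply RingOfIntegers.ext
    have : α * α = -(p₁ : K) := by rw [← sq, hα]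
    have h2 : ((a * a : 𝓞 K) : K) = α * α := rfl
    rw [h2, this]; simp
  have htaa : Algebra.trace ℤ (𝓞 K) (a * a) = -2 * p₁ := by
    rw [haa, Algebra.trace_algebraMap, hrank]; simp
  have hdv : Algebra.discr ℤ v = -4 * p₁ := by
    rw [Algebra.discr_def, Matrix.det_fin_two]
    simp [Algebra.traceMatrix, Algebra.traceForm_apply, v, ht1, hta, htaa]
    ring
  rw [hdv] at hd
  have h1 : 4 * (p₁ : ℤ) = P.det ^ 2 * |discr K| := by
    have := congrArg abs hd
    rw [abs_mul, abs_mul, abs_pow, sq_abs] at this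
    simpa using this
  -- `det ^ 2 ∣ 4 p₁`
  by_contra hlt
  push Not at hlt
  have hdpos : 0 < |discr K| := abs_pos.mpr (discr_ne_zero K)
  have hdet : 4 < P.det ^ 2 := by
    have hp : (0 : ℤ) < p₁ := by exact_mod_cast hp₁.pos
    nlinarith
  have hpp : Prime (p₁ : ℤ) := Nat.prime_iff_prime_int.mp hp₁
  have hdvd : (p₁ : ℤ) ∣ P.det ^ 2 * |discr K| := ⟨4, by linarith⟩
  rcases hpp.dvd_or_dvd hdvd with h2 | h2
  · have h3 := hpp.dvd_of_dvd_pow h2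
    obtain ⟨c, hc⟩ := h3
    rw [hc] at h1
    have hp : (0 : ℤ) < p₁ := by exact_mod_cast hp₁.pos
    have h4 : 4 = p₁ * (c ^ 2 * |discr K|) := by
      have : (p₁ : ℤ) * 4 = p₁ * (p₁ * (c ^ 2 * |discr K|)) := by linarith
      exact mul_left_cancel₀ hp.ne' this
    have h5 : (p₁ : ℤ) ∣ 4 := ⟨_, h4⟩
    have h6 : (p₁ : ℕ) ∣ 2 ^ 2 := by exact_mod_cast h5
    have h7 : p₁ = 2 := (Nat.prime_dvd_prime_iff_eq hp₁ Nat.prime_two).mp (hp₁.dvd_of_dvd_pow h6)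
    rw [h7] at h4 hlt
    push_cast at h4 hlt
    have h8 : |discr K| = 1 := by omega
    rw [h8] at h4
    have : c ^ 2 = 2 := by linarith
    have hc1 : c < 2 := by nlinarith
    have hc2 : -2 < c := by nlinarith
    interval_cases c <;> simp at this
  · have := Int.le_of_dvd hdpos h2
    omega

lemma quad_residue (p₁ : ℕ) (hp₁ : p₁.Prime) (α : K) (hα : α ^ 2 = -(p₁ : K))
    (hKα : Algebra.adjoin ℚ {α} = ⊤) :
    dedekindZeta_residue K ≤ Real.pi * classNumber K / Real.sqrt p₁ := by
  obtain ⟨hfin, htr⟩ := quad_pb p₁ hp₁ α hα hKα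
  have hreal : InfinitePlace.nrRealPlaces K = 0 := by
    classical
    rw [InfinitePlace.nrRealPlaces, Fintype.card_eq_zero_iff]
    refine ⟨fun ⟨w, hw⟩ => ?_⟩
    have h1 : InfinitePlace.embedding_of_isReal hw α ^ 2 = -(p₁ : ℝ) := by
      rw [← map_pow, hα]; simp
    have : (0 : ℝ) < p₁ := by exact_mod_cast hp₁.pos
    nlinarith [sq_nonneg (InfinitePlace.embedding_of_isReal hw α)]
  have hcplx : InfinitePlace.nrComplexPlaces K = 1 := by
    have := InfinitePlace.card_add_two_mul_card_eq_rank K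
    rw [hfin, hreal] at this
    omega
  have hcard : Fintype.card (InfinitePlace K) = 1 := by
    rw [InfinitePlace.card_eq_nrRealPlaces_add_nrComplexPlaces, hreal, hcplx]
  have hreg : Units.regulator K = 1 := by
    classical
    have : IsEmpty (Fin (Units.rank K)) := by
      rw [Units.rank, hcard]; exact Fin.isEmpty
    have h2 : IsEmpty {w : InfinitePlace K // w ≠ Units.dirichletUnitTheorem.w₀} :=
      (Units.equivFinRank K).symm.isEmpty
    rw [Units.regulator_eq_det' K]
    rw [Matrix.det_isEmpty]
    simp
  have htor : (2 : ℝ) ≤ Units.torsionOrder K := by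
    have h1 := Units.even_torsionOrder K
    have h2 := Units.torsionOrder_pos K
    have : 2 ≤ Units.torsionOrder K := Nat.le_of_dvd h2 h1.two_dvd
    exact_mod_cast this
  have hp0 : (0 : ℝ) < p₁ := by exact_mod_cast hp₁.pos
  have hsq : Real.sqrt p₁ ≤ Real.sqrt |discr K| := by
    refine Real.sqrt_le_sqrt ?_
    exact_mod_cast quad_abs_discr p₁ hp₁ α hα hKα
  have hsp : 0 < Real.sqrt p₁ := Real.sqrt_pos.mpr hp0
  rw [dedekindZeta_residue_def, hreal, hcplx, hreg]
  rw [div_le_div_iff₀ (mul_pos (by linarith [htor]) (lt_of_lt_of_le hsp hsq)) hsp]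
  have hpi := Real.pi_pos
  have hh : (0 : ℝ) ≤ classNumber K := by positivity
  calc (2 : ℝ) ^ 0 * (2 * Real.pi) ^ 1 * 1 * classNumber K * Real.sqrt p₁
      = Real.pi * classNumber K * (2 * Real.sqrt p₁) := by ring
    _ ≤ _ := by
      refine mul_le_mul_of_nonneg_left ?_ (by positivity)
      exact mul_le_mul htor hsq hsp.le (by positivity)

end quad
end

section
open Filter Topology Finset NumberField

lemma legendre_aux (p₁ ℓ : ℕ) [Fact p₁.Prime] [Fact ℓ.Prime] (h8 : p₁ % 8 = 3)
    (h : quadraticChar (ZMod p₁) (ℓ : ZMod p₁) = 1) :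
    ℓ ≠ 2 ∧ ∃ c : ℤ, (ℓ : ℤ) ∣ c ^ 2 + p₁ ∧ ¬ (ℓ : ℤ) ∣ 2 * c := by
  have hp2 : p₁ ≠ 2 := by omega
  have hl2 : ℓ ≠ 2 := by
    rintro rfl
    have hr : ringChar (ZMod p₁) ≠ 2 := by rw [ZMod.ringChar_zmod_n]; exact hp2
    have := quadraticChar_two hr
    push_cast at h
    rw [this, ZMod.card, ZMod.χ₈_nat_eq_if_mod_eight] at h
    simp [h8] at h
    omega
  refine ⟨hl2, ?_⟩
  have hl : legendreSym p₁ ℓ = 1 := by rw [legendreSym]; exact_mod_cast h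
  have hne : ((-(p₁ : ℤ) : ℤ) : ZMod ℓ) ≠ 0 := by
    intro h0
    rw [Int.cast_neg, neg_eq_zero] at h0
    have h1 : ((p₁ : ℕ) : ZMod ℓ) = 0 := by exact_mod_cast h0
    rw [ZMod.natCast_eq_zero_iff] at h1
    have h2 := (Nat.prime_dvd_prime_iff_eq (Fact.out : ℓ.Prime) (Fact.out : p₁.Prime)).mp h1
    subst h2
    simp at h
  have h1 : legendreSym ℓ (-(p₁ : ℤ)) = 1 := by
    rw [← neg_one_mul, legendreSym.mul, legendreSym.at_neg_one hl2,
      legendreSym.quadratic_reciprocity' hp2 hl2, hl, mul_one, pow_mul]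
    have h3 : (-1 : ℤ) ^ (p₁ / 2) = -1 := by
      apply Odd.neg_one_pow; rw [Nat.odd_iff]; omega
    rw [h3]
    have hodd : ℓ % 2 = 1 := (Nat.Prime.mod_two_eq_one_iff_ne_two Fact.out).mpr hl2
    rw [ZMod.χ₄_eq_neg_one_pow hodd, ← mul_pow]; simp
  rw [legendreSym.eq_one_iff ℓ hne] at h1
  obtain ⟨c, hc⟩ := h1
  refine ⟨(c.val : ℤ), ?_, ?_⟩
  · rw [← ZMod.intCast_zmod_eq_zero_iff_dvd]
    push_cast at hc ⊢
    rw [ZMod.natCast_val, ZMod.cast_id, sq, ← hc]; ring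
  · rw [← ZMod.intCast_zmod_eq_zero_iff_dvd]
    push_cast at hc ⊢
    rw [ZMod.natCast_val, ZMod.cast_id]
    intro h0
    rcases mul_eq_zero.mp h0 with h0 | h0
    · have : ((2 : ℕ) : ZMod ℓ) = 0 := by exact_mod_cast h0
      rw [ZMod.natCast_eq_zero_iff] at this
      exact hl2 ((Nat.prime_dvd_prime_iff_eq (Fact.out : ℓ.Prime) Nat.prime_two).mp this)
    · rw [h0] at hc; simp at hc; simp [hc] at hne

lemma mul_eq_prime_sq_aux {ℓ a b : ℕ} (hℓ : ℓ.Prime) (ha : a ≠ 1) (hb : b ≠ 1)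
    (h : a * b = ℓ ^ 2) : a = ℓ ∧ b = ℓ := by
  obtain ⟨i, hi, rfl⟩ := (Nat.dvd_prime_pow hℓ).mp (Dvd.intro _ h)
  obtain ⟨j, hj, rfl⟩ := (Nat.dvd_prime_pow hℓ).mp (Dvd.intro_left _ h)
  rw [← pow_add] at h
  have := Nat.pow_right_injective hℓ.two_le h
  have hi0 : i ≠ 0 := by rintro rfl; simp at ha
  have hj0 : j ≠ 0 := by rintro rfl; simp at hb
  have : i = 1 := by omega
  have : j = 1 := by omega
  subst_vars; simp

section count
variable {K : Type*} [Field K] [NumberField K]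

/-- number of ideals of norm `n` -/
noncomputable def rcount (K : Type*) [Field K] [NumberField K] (n : ℕ) : ℕ :=
  Nat.card {I : Ideal (𝓞 K) // Ideal.absNorm I = n}

instance rfin (n : ℕ) : Finite {I : Ideal (𝓞 K) // Ideal.absNorm I = n} :=
  Ideal.finite_setOfPred_absNorm_eq n

lemma ideal_recover {R : Type*} [CommRing R] (I J : Ideal R) (m n : ℕ) (hmn : m.Coprime n)
    (hI : (m : R) ∈ I) (hJ : (n : R) ∈ J) : I = I * J ⊔ Ideal.span {(m : R)} := by
  apply le_antisymm
  · have hb := Nat.isCoprime_iff_coprime.mpr hmn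
    obtain ⟨u, v, huv⟩ := hb
    intro x hx
    have h1 : (u : R) * m + v * n = 1 := by exact_mod_cast congrArg (Int.cast : ℤ → R) huv
    have : x = x * n * v + x * u * m := by
      calc x = x * ((u : R) * m + v * n) := by rw [h1, mul_one]
        _ = _ := by ring
    rw [this]
    refine Ideal.add_mem _ ?_ ?_
    · exact Ideal.mem_sup_left (Ideal.mul_mem_right _ _ (Ideal.mul_mem_mul hx hJ))
    · exact Ideal.mem_sup_right (Ideal.mul_mem_left _ _ (Ideal.mem_span_singleton_self _))
  · refine sup_le Ideal.mul_le_left ?_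
    rw [Ideal.span_singleton_le_iff_mem]; exact hI

lemma rcount_mul (m n : ℕ) (hmn : m.Coprime n) :
    rcount K m * rcount K n ≤ rcount K (m * n) := by
  unfold rcount
  rw [← Nat.card_prod]
  let φ : {I : Ideal (𝓞 K) // Ideal.absNorm I = m} × {I : Ideal (𝓞 K) // Ideal.absNorm I = n} →
      {I : Ideal (𝓞 K) // Ideal.absNorm I = m * n} :=
    fun x => ⟨x.1.1 * x.2.1, by rw [map_mul, x.1.2, x.2.2]⟩
  refine Nat.card_le_card_of_injective φ ?_
  rintro ⟨⟨I, hI⟩, ⟨J, hJ⟩⟩ ⟨⟨I', hI'⟩, ⟨J', hJ'⟩⟩ h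
  have h' : I * J = I' * J' := congrArg Subtype.val h
  have mI : (m : 𝓞 K) ∈ I := hI ▸ Ideal.absNorm_mem I
  have mI' : (m : 𝓞 K) ∈ I' := hI' ▸ Ideal.absNorm_mem I'
  have mJ : (n : 𝓞 K) ∈ J := hJ ▸ Ideal.absNorm_mem J
  have mJ' : (n : 𝓞 K) ∈ J' := hJ' ▸ Ideal.absNorm_mem J'
  have e1 : I = I' := by
    rw [ideal_recover I J m n hmn mI mJ, ideal_recover I' J' m n hmn mI' mJ', h']
  have e2 : J = J' := by
    rw [ideal_recover J I n m hmn.symm mJ mI, ideal_recover J' I' n m hmn.symm mJ' mI',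
      mul_comm J, mul_comm J', h']
  subst e1 e2; rfl

lemma rcount_pos_of (n : ℕ) (I : Ideal (𝓞 K)) (hI : Ideal.absNorm I = n) : 1 ≤ rcount K n := by
  have : Nonempty {I : Ideal (𝓞 K) // Ideal.absNorm I = n} := ⟨⟨I, hI⟩⟩
  exact Nat.card_pos

lemma rcount_split (hrank : Module.finrank ℤ (𝓞 K) = 2) (a : 𝓞 K)
    (hta : Algebra.trace ℤ (𝓞 K) a = 0) (p₁ : ℕ) (haa : a * a = -(p₁ : 𝓞 K))
    (ℓ : ℕ) (hℓ : ℓ.Prime) (c : ℤ) (hc : (ℓ : ℤ) ∣ c ^ 2 + p₁) (hc2 : ¬ (ℓ : ℤ) ∣ 2 * c) (k : ℕ) :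
    k + 1 ≤ rcount K (ℓ ^ k) := by
  have key : ∀ d : ℤ, ¬ (ℓ : ℤ) ∣ 2 * d → Ideal.span {(ℓ : 𝓞 K), a + (d : 𝓞 K)} ≠ Ideal.span {(ℓ : 𝓞 K)} := by
    intro d hd h
    have h1 : a + (d : 𝓞 K) ∈ Ideal.span {(ℓ : 𝓞 K)} := by
      rw [← h]; exact Ideal.subset_span (by simp)
    rw [Ideal.mem_span_singleton] at h1
    obtain ⟨b, hb⟩ := h1
    have h2 := congrArg (Algebra.trace ℤ (𝓞 K)) hb
    rw [map_add, hta] at h2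
    have h3 : Algebra.trace ℤ (𝓞 K) (d : 𝓞 K) = 2 * d := by
      have := Algebra.trace_algebraMap (R := ℤ) (S := 𝓞 K) d
      rw [hrank] at this
      simpa using this
    have h4 : Algebra.trace ℤ (𝓞 K) ((ℓ : 𝓞 K) * b) = ℓ * Algebra.trace ℤ (𝓞 K) b := by
      rw [← nsmul_eq_mul, map_nsmul, nsmul_eq_mul]
    rw [h3, h4, zero_add] at h2
    exact hd ⟨_, h2⟩
  set P := Ideal.span {(ℓ : 𝓞 K), a + ((-c : ℤ) : 𝓞 K)} with hP
  set Q := Ideal.span {(ℓ : 𝓞 K), a + (c : 𝓞 K)} with hQ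
  have lP : (ℓ : 𝓞 K) ∈ P := Ideal.subset_span (by simp)
  have lQ : (ℓ : 𝓞 K) ∈ Q := Ideal.subset_span (by simp)
  have aP : a + ((-c : ℤ) : 𝓞 K) ∈ P := Ideal.subset_span (by simp)
  have aQ : a + (c : 𝓞 K) ∈ Q := Ideal.subset_span (by simp)
  have hcop : P ⊔ Q = ⊤ := by
    rw [Ideal.eq_top_iff_one]
    have hco : IsCoprime (ℓ : ℤ) (2 * c) := by
      rw [(Nat.prime_iff_prime_int.mp hℓ).coprime_iff_not_dvd]; exact hc2
    obtain ⟨u, v, huv⟩ := hco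
    have h1 : (u : 𝓞 K) * ℓ + v * (2 * c) = 1 := by exact_mod_cast congrArg (Int.cast : ℤ → 𝓞 K) huv
    have h2 : (1 : 𝓞 K) = (u * ℓ - v * (a + ((-c : ℤ) : 𝓞 K))) + v * (a + (c : 𝓞 K)) := by
      rw [← h1]; push_cast; ring
    rw [h2]
    exact Ideal.add_mem _ (Ideal.mem_sup_left (Ideal.sub_mem _ (Ideal.mul_mem_left _ _ lP)
      (Ideal.mul_mem_left _ _ aP))) (Ideal.mem_sup_right (Ideal.mul_mem_left _ _ aQ))
  have hPQ : P * Q = Ideal.span {(ℓ : 𝓞 K)} := by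
    apply le_antisymm
    · rw [hP, hQ, Ideal.span_pair_mul_span_pair]
      rw [Ideal.span_le]
      obtain ⟨e, he⟩ := hc
      have he' : (c : 𝓞 K) ^ 2 + p₁ = ℓ * e := by exact_mod_cast congrArg (Int.cast : ℤ → 𝓞 K) he
      intro x hx
      simp only [Set.mem_insert_iff, Set.mem_singleton_iff] at hx
      rw [SetLike.mem_coe, Ideal.mem_span_singleton]
      rcases hx with rfl | rfl | rfl | rfl
      · exact dvd_mul_right _ _
      · exact dvd_mul_right _ _
      · exact dvd_mul_left _ _
      · refine ⟨-e, ?_⟩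
        push_cast
        linear_combination haa - he'
    · rw [Ideal.mul_eq_inf_of_coprime hcop, Ideal.span_singleton_le_iff_mem]
      exact ⟨lP, lQ⟩
  have hN : Ideal.absNorm P * Ideal.absNorm Q = ℓ ^ 2 := by
    rw [← map_mul, hPQ, Ideal.absNorm_span_natCast, hrank]
  have hP1 : Ideal.absNorm P ≠ 1 := by
    intro h
    rw [Ideal.absNorm_eq_one_iff] at h
    rw [h, Ideal.top_mul] at hPQ
    exact key c hc2 hPQ
  have hQ1 : Ideal.absNorm Q ≠ 1 := by
    intro h
    rw [Ideal.absNorm_eq_one_iff] at h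
    rw [h, Ideal.mul_top] at hPQ
    exact key (-c) (by rwa [mul_neg, dvd_neg]) hPQ
  obtain ⟨hPn, hQn⟩ := (mul_eq_prime_sq_aux hℓ hP1 hQ1 hN)
  have hPprime : P.IsPrime := Ideal.isPrime_of_irreducible_absNorm (by rw [hPn]; exact hℓ)
  have hP0 : P ≠ ⊥ := by
    intro h
    rw [h, Ideal.absNorm_bot] at hPn
    exact hℓ.ne_zero hPn.symm
  have hPp : Prime P := Ideal.prime_of_isPrime hP0 hPprime
  have hnd : ¬ P ∣ Q := by
    intro h
    have := Ideal.le_of_dvd h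
    rw [sup_eq_left.mpr this] at hcop
    exact hP1 (by rw [Ideal.absNorm_eq_one_iff, hcop])
  let φ : Fin (k + 1) → {I : Ideal (𝓞 K) // Ideal.absNorm I = ℓ ^ k} :=
    fun i => ⟨P ^ (i : ℕ) * Q ^ (k - i), by
      rw [map_mul, map_pow, map_pow, hPn, hQn, ← pow_add]; congr 1; omega⟩
  have hlt : ∀ i j : Fin (k + 1), i < j → φ i ≠ φ j := by
    intro i j hij h
    have h1 : P ^ (i : ℕ) * Q ^ (k - i) = P ^ (j : ℕ) * Q ^ (k - j) := congrArg Subtype.val h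
    have hij' : (i : ℕ) < j := hij
    obtain ⟨d, hd⟩ := Nat.exists_eq_add_of_lt hij'
    rw [hd, show (i : ℕ) + d + 1 = i + (d + 1) by ring, pow_add, mul_assoc] at h1
    have h2 := mul_left_cancel₀ (pow_ne_zero _ hP0) h1
    have h3 : P ∣ Q ^ (k - i) := by
      rw [h2, pow_succ', mul_assoc]; exact dvd_mul_right _ _
    exact hnd (hPp.dvd_of_dvd_pow h3)
  have hinj : Function.Injective φ := by
    intro i j h
    rcases lt_trichotomy i j with h1 | h1 | h1
    · exact absurd h (hlt i j h1)
    · exact h1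
    · exact absurd h.symm (hlt j i h1)
  have := Nat.card_le_card_of_injective φ hinj
  simpa [rcount] using this

lemma quad_int (p₁ : ℕ) (hp₁ : p₁.Prime) (α : K) (hα : α ^ 2 = -(p₁ : K))
    (hKα : Algebra.adjoin ℚ {α} = ⊤) : Module.finrank ℤ (𝓞 K) = 2 ∧
      ∃ a : 𝓞 K, a * a = -(p₁ : 𝓞 K) ∧ Algebra.trace ℤ (𝓞 K) a = 0 := by
  obtain ⟨hfin, htr⟩ := quad_pb p₁ hp₁ α hα hKα
  have hrank : Module.finrank ℤ (𝓞 K) = 2 := by rw [RingOfIntegers.rank, hfin]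
  have hαint : IsIntegral ℤ α := by
    refine ⟨Polynomial.X ^ 2 + Polynomial.C (p₁ : ℤ), Polynomial.monic_X_pow_add_C _ (by norm_num), ?_⟩
    simp [hα]
  let a : 𝓞 K := ⟨α, hαint⟩
  refine ⟨hrank, a, ?_, ?_⟩
  · apply RingOfIntegers.ext
    have : α * α = -(p₁ : K) := by rw [← sq, hα]
    have h2 : ((a * a : 𝓞 K) : K) = α * α := rfl
    rw [h2, this]; simp
  · have h1 : ((Algebra.trace ℤ (𝓞 K) a : ℤ) : ℚ) = Algebra.trace ℚ K (a : K) :=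
      (Algebra.trace_localization ℤ (nonZeroDivisors ℤ) a).symm
    rw [show ((a : 𝓞 K) : K) = α from rfl, htr] at h1
    exact_mod_cast h1

lemma zetaMul_le (p₁ : ℕ) [Fact p₁.Prime] (h8 : p₁ % 8 = 3) (α : K) (hα : α ^ 2 = -(p₁ : K))
    (hKα : Algebra.adjoin ℚ {α} = ⊤) (n : ℕ) :
    ‖DirichletCharacter.zetaMul (qchi p₁ ℂ : DirichletCharacter ℂ p₁) n‖ ≤ rcount K n := by
  obtain ⟨hrank, a, haa, hta⟩ := quad_int p₁ Fact.out α hα hKα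
  induction n using Nat.recOnPosPrimePosCoprime with
  | zero => simp
  | one =>
    rw [(DirichletCharacter.isMultiplicative_zetaMul _).1, norm_one]
    exact_mod_cast rcount_pos_of 1 (⊤ : Ideal (𝓞 K)) (Ideal.absNorm_top)
  | coprime m n _ _ hmn hm hn =>
    rw [(DirichletCharacter.isMultiplicative_zetaMul _).2 hmn, norm_mul]
    calc _ ≤ (rcount K m : ℝ) * rcount K n := mul_le_mul hm hn (norm_nonneg _) (by positivity)
      _ ≤ _ := by exact_mod_cast rcount_mul m n hmn
  | prime_pow ℓ k hℓ hk =>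
    haveI := Fact.mk hℓ
    have hform : DirichletCharacter.zetaMul (qchi p₁ ℂ : DirichletCharacter ℂ p₁) (ℓ ^ k) =
        ((∑ i ∈ range (k + 1), (quadraticChar (ZMod p₁) (ℓ : ZMod p₁)) ^ i : ℤ) : ℂ) := by
      rw [DirichletCharacter.zetaMul, ArithmeticFunction.coe_zeta_mul_apply,
        Nat.sum_divisors_prime_pow hℓ, Int.cast_sum]
      refine Finset.sum_congr rfl fun i _ => ?_
      rw [← DirichletCharacter.apply_eq_toArithmeticFunction_apply _ (pow_ne_zero _ hℓ.ne_zero),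
        Nat.cast_pow, map_pow, qchi_apply, Int.cast_pow]
    rw [hform]
    by_cases h0 : (ℓ : ZMod p₁) = 0
    · have hl : ℓ = p₁ := by
        rw [ZMod.natCast_eq_zero_iff] at h0
        exact ((Nat.prime_dvd_prime_iff_eq Fact.out hℓ).mp h0).symm
      have hna : Ideal.absNorm (Ideal.span {a}) = p₁ := by
        have h1 : Ideal.span {a} * Ideal.span {a} = Ideal.span {(p₁ : 𝓞 K)} := by
          rw [Ideal.span_singleton_mul_span_singleton, haa, Ideal.span_singleton_neg]
        have h2 := congrArg Ideal.absNorm h1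
        rw [map_mul, Ideal.absNorm_span_natCast, hrank, ← sq] at h2
        exact Nat.pow_left_injective (n := 2) (by norm_num) h2
      have := rcount_pos_of (ℓ ^ k) (Ideal.span {a} ^ k) (by rw [map_pow, hna, hl])
      rw [h0, quadraticChar_zero]
      simp [Finset.sum_range_succ']
      exact_mod_cast this
    · rcases quadraticChar_dichotomy h0 with h1 | h1
      · obtain ⟨_, c, hc, hc2⟩ := legendre_aux p₁ ℓ h8 h1
        rw [h1]
        have := rcount_split hrank a hta p₁ haa ℓ hℓ c hc hc2 k
        simp
        have h3 : ((k + 1 : ℕ) : ℝ) ≤ rcount K (ℓ ^ k) := by exact_mod_cast this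
        push_cast at h3
        calc ‖(k : ℂ) + 1‖ = ‖((k + 1 : ℕ) : ℂ)‖ := by push_cast; rfl
          _ ≤ _ := by rw [Complex.norm_natCast]; push_cast; exact h3
      · rw [h1, neg_one_geom_sum]
        split_ifs with he
        · simp
        · have hev : Even k := by
            rw [Nat.even_add_one, not_not] at he; exact he
          obtain ⟨j, hj⟩ := hev
          have := rcount_pos_of (ℓ ^ k) (Ideal.span {(ℓ : 𝓞 K)} ^ j) (by
            rw [map_pow, Ideal.absNorm_span_natCast, hrank, hj, ← pow_mul]; congr 1; ring)
          simp
          exact_mod_cast this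
end count
end

section
open Filter Topology Finset NumberField

lemma sum_range_zmod (p₁ : ℕ) [NeZero p₁] {M : Type*} [AddCommMonoid M] (g : ZMod p₁ → M) :
    ∑ i ∈ range p₁, g (i : ZMod p₁) = ∑ x : ZMod p₁, g x := by
  refine Finset.sum_nbij' (fun i => (i : ZMod p₁)) ZMod.val ?_ ?_ ?_ ?_ ?_
  · simp
  · intro x _; simp [ZMod.val_lt]
  · intro i hi; exact ZMod.val_cast_of_lt (by simpa using hi)
  · intro x _; simp
  · simp

lemma chi_partial (p₁ : ℕ) [Fact p₁.Prime] (h2 : p₁ ≠ 2) (M : ℕ) :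
    |∑ n ∈ range M, ((quadraticChar (ZMod p₁) ((n : ZMod p₁) + 1) : ℤ) : ℝ)| ≤ p₁ := by
  induction M using Nat.strong_induction_on with
  | _ M ih =>
    rcases lt_or_ge M p₁ with h | h
    · calc _ ≤ ∑ n ∈ range M, |((quadraticChar (ZMod p₁) ((n : ZMod p₁) + 1) : ℤ) : ℝ)| :=
            Finset.abs_sum_le_sum_abs _ _
        _ ≤ ∑ n ∈ range M, (1 : ℝ) := by
            refine Finset.sum_le_sum fun n _ => ?_
            by_cases h0 : (n : ZMod p₁) + 1 = 0
            · simp [h0]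
            · rcases quadraticChar_dichotomy h0 with h1 | h1 <;> simp [h1]
        _ ≤ _ := by simp; exact_mod_cast h.le
    · obtain ⟨d, rfl⟩ := Nat.exists_eq_add_of_le' h
      rw [Finset.sum_range_add]
      have h0 : ∑ x ∈ range p₁, ((quadraticChar (ZMod p₁) (((d + x : ℕ) : ZMod p₁) + 1) : ℤ) : ℝ) = 0 := by
        have h1 := sum_range_zmod p₁ (fun x => ((quadraticChar (ZMod p₁) ((d : ZMod p₁) + x + 1) : ℤ) : ℝ))
        push_cast
        rw [h1, ← Int.cast_sum]
        have h3 : ∑ x : ZMod p₁, quadraticChar (ZMod p₁) ((d : ZMod p₁) + x + 1) =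
            ∑ x : ZMod p₁, quadraticChar (ZMod p₁) x := by
          refine Fintype.sum_equiv (Equiv.addLeft ((d : ZMod p₁) + 1)) _ _ fun x => ?_
          simp; congr 1; ring
        rw [h3, quadraticChar_sum_zero (by rw [ZMod.ringChar_zmod_n]; exact h2)]
        simp
      rw [h0, add_zero]
      exact ih d (by have := (Fact.out : p₁.Prime).pos; omega)

section
variable {K : Type*} [Field K] [NumberField K]

lemma L_le_residue (p₁ : ℕ) [Fact p₁.Prime] (h8 : p₁ % 8 = 3) (α : K) (hα : α ^ 2 = -(p₁ : K))
    (hKα : Algebra.adjoin ℚ {α} = ⊤) (l : ℝ)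
    (hl : Tendsto (fun s : ℝ => ∑' n : ℕ, ((quadraticChar (ZMod p₁) ((n : ZMod p₁) + 1) : ℤ) : ℝ) *
      ((n : ℝ) + 1) ^ (-s)) (𝓝[>] 1) (𝓝 l)) : |l| ≤ dedekindZeta_residue K := by
  set χ : DirichletCharacter ℂ p₁ := qchi p₁ ℂ with hχ
  have hD := (tendsto_sub_one_mul_dedekindZeta_nhdsGT K).norm
  have hres : ‖(dedekindZeta_residue K : ℂ)‖ = dedekindZeta_residue K := by
    rw [Complex.norm_real, Real.norm_of_nonneg (dedekindZeta_residue_pos K).le]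
  rw [hres] at hD
  -- eventually summable
  have hne : ∀ᶠ s : ℝ in 𝓝[>] 1, ‖((s : ℂ) - 1) * dedekindZeta K s‖ ≠ 0 :=
    hD.eventually_ne (dedekindZeta_residue_ne_zero K)
  have hz : Tendsto (fun s : ℝ => ‖((s : ℂ) - 1) * riemannZeta s‖) (𝓝[>] 1) (𝓝 1) := by
    have h1 := riemannZeta_residue_one
    have h2 : Tendsto (fun s : ℝ => (s : ℂ)) (𝓝[>] 1) (𝓝[≠] 1) := by
      rw [tendsto_nhdsWithin_iff]
      constructor
      · have : Tendsto (fun s : ℝ => (s : ℂ)) (𝓝 1) (𝓝 ((1 : ℝ) : ℂ)) :=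
          Complex.continuous_ofReal.tendsto 1
        simpa using this.mono_left nhdsWithin_le_nhds
      · filter_upwards [self_mem_nhdsWithin] with s hs
        simp only [Set.mem_compl_iff, Set.mem_singleton_iff]
        intro h
        have : s = 1 := by exact_mod_cast h
        rw [this] at hs; exact lt_irrefl (1 : ℝ) hs
    simpa using (h1.comp h2).norm
  have hL : ∀ s : ℝ, 1 < s → LSeries (χ ·) s = ((∑' n : ℕ, ((quadraticChar (ZMod p₁) ((n : ZMod p₁) + 1) : ℤ) : ℝ) *
      ((n : ℝ) + 1) ^ (-s) : ℝ) : ℂ) := by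
    intro s hs
    have hsum : LSeriesSummable (χ ·) s :=
      DirichletCharacter.LSeriesSummable_of_one_lt_re χ (by simpa using hs)
    rw [LSeries, hsum.tsum_eq_zero_add, LSeries.term_zero, zero_add, Complex.ofReal_tsum]
    refine tsum_congr fun n => ?_
    rw [LSeries.term_of_ne_zero (by omega), hχ, qchi_apply]
    rw [Complex.ofReal_mul, Complex.ofReal_cpow (by positivity), Complex.ofReal_neg,
      Complex.cpow_neg]
    push_cast
    rw [div_eq_mul_inv]
  have hprod : ∀ s : ℝ, 1 < s → LSeries χ.zetaMul s = riemannZeta s * LSeries (χ ·) s := by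
    intro s hs
    have hs' : 1 < (s : ℂ).re := by simpa using hs
    rw [DirichletCharacter.zetaMul, ← ArithmeticFunction.coe_mul, LSeries_convolution']
    · rw [← ArithmeticFunction.LSeries_zeta_eq_riemannZeta hs']
      congr 1
      exact LSeries_congr
          (fun h => (DirichletCharacter.apply_eq_toArithmeticFunction_apply χ h).symm) _
    · exact ArithmeticFunction.LSeriesSummable_zeta_iff.mpr hs'
    · exact (LSeriesSummable_congr _ fun h =>
        (DirichletCharacter.apply_eq_toArithmeticFunction_apply χ h).symm).mpr <|
        DirichletCharacter.LSeriesSummable_of_one_lt_re χ hs'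
  have hle : ∀ᶠ s : ℝ in 𝓝[>] 1, ‖((s : ℂ) - 1) * riemannZeta s‖ * ‖LSeries (χ ·) s‖ ≤
      ‖((s : ℂ) - 1) * dedekindZeta K s‖ := by
    filter_upwards [hne, self_mem_nhdsWithin] with s h1 hs
    have hs : 1 < s := hs
    rw [norm_mul, mul_assoc, ← norm_mul, ← hprod s hs, norm_mul]
    refine mul_le_mul_of_nonneg_left ?_ (norm_nonneg _)
    have hsumm : LSeriesSummable (fun n => (rcount K n : ℂ)) s := by
      by_contra hns
      apply h1
      have : dedekindZeta K s = 0 := by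
        exact tsum_eq_zero_of_not_summable hns
      rw [this]; simp
    have hle1 : ∀ n, ‖LSeries.term χ.zetaMul s n‖ ≤ ‖LSeries.term (fun n => (rcount K n : ℂ)) s n‖ := by
      intro n
      refine LSeries.norm_term_le _ ?_
      rw [Complex.norm_natCast]
      exact zetaMul_le p₁ h8 α hα hKα n
    have hreal : ∀ n, LSeries.term (fun n => (rcount K n : ℂ)) s n =
        ((‖LSeries.term (fun n => (rcount K n : ℂ)) s n‖ : ℝ) : ℂ) := by
      intro n
      rcases eq_or_ne n 0 with rfl | hn
      · simp
      · rw [LSeries.norm_term_eq, LSeries.term_of_ne_zero hn, if_neg hn, Complex.norm_natCast]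
        simp
        rw [Complex.ofReal_cpow (by positivity)]
        simp
    have hdz : dedekindZeta K s = ((∑' n, ‖LSeries.term (fun n => (rcount K n : ℂ)) s n‖ : ℝ) : ℂ) := by
      rw [Complex.ofReal_tsum]
      exact tsum_congr hreal
    rw [hdz, Complex.norm_real, Real.norm_of_nonneg (tsum_nonneg fun _ => norm_nonneg _)]
    have hsn : Summable fun n => ‖LSeries.term (fun n => (rcount K n : ℂ)) s n‖ := hsumm.norm
    have hsn2 := Summable.of_nonneg_of_le (fun _ => norm_nonneg _) hle1 hsn
    exact (norm_tsum_le_tsum_norm hsn2).trans (hsn2.tsum_le_tsum hle1 hsn)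
  have hlim : Tendsto (fun s : ℝ => ‖((s : ℂ) - 1) * riemannZeta s‖ * ‖LSeries (χ ·) s‖) (𝓝[>] 1)
      (𝓝 (1 * |l|)) := by
    refine hz.mul (hl.abs.congr' ?_)
    filter_upwards [self_mem_nhdsWithin] with s hs
    rw [hL s hs, Complex.norm_real, Real.norm_eq_abs]
  rw [one_mul] at hlim
  exact le_of_tendsto_of_tendsto hlim hD hle

lemma class_bound (p₁ : ℕ) [Fact p₁.Prime] (h8 : p₁ % 8 = 3) (α : K) (hα : α ^ 2 = -(p₁ : K))
    (hKα : Algebra.adjoin ℚ {α} = ⊤) :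
    |∑ x : ZMod p₁, (x.val : ℤ) * quadraticChar (ZMod p₁) x| ≤ classNumber K * p₁ := by
  obtain ⟨l, h1, h2⟩ := dirichlet_abel
    (fun n => ((quadraticChar (ZMod p₁) ((n : ZMod p₁) + 1) : ℤ) : ℝ)) p₁
    (chi_partial p₁ (by omega))
  have h3 := L_le_residue p₁ h8 α hα hKα l h2
  have h4 := quad_residue p₁ Fact.out α hα hKα
  have h5 := L_one_value p₁ (by omega) l (by simpa using h1)
  have hp : (0 : ℝ) < p₁ := by exact_mod_cast (Fact.out : p₁.Prime).pos
  have hs : 0 < Real.sqrt p₁ := Real.sqrt_pos.mpr hp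
  have h6 : |l| * Real.sqrt p₁ ≤ Real.pi * classNumber K := by
    rw [← le_div_iff₀ hs]; exact h3.trans h4
  have h7 : Real.pi * |((∑ x : ZMod p₁, (x.val:ℤ) * quadraticChar (ZMod p₁) x : ℤ):ℝ)| ≤
      Real.pi * (classNumber K * p₁) := by
    rw [← h5]
    nlinarith
  have h8 := le_of_mul_le_mul_left h7 Real.pi_pos
  exact_mod_cast h8
end
end

section
open IsLocalRing

lemma witt_charZero (p : ℕ) [Fact p.Prime] (F : Type*) [Field F] [CharP F p] :
    CharZero (WittVector p F) := by
  obtain ⟨c, hc⟩ := CharP.exists (WittVector p F)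
  rcases CharP.char_is_prime_or_zero (WittVector p F) c with h | h
  · exfalso
    have h0 : (c : WittVector p F) = 0 := CharP.cast_eq_zero _ _
    have h1 : (c : F) = 0 := by
      have := congrArg (WittVector.constantCoeff (p := p) (R := F)) h0
      rwa [map_natCast, map_zero] at this
    rw [CharP.cast_eq_zero_iff F p] at h1
    have h2 := (Nat.prime_dvd_prime_iff_eq (Fact.out : p.Prime) h).mp h1
    subst h2
    exact WittVector.p_nonzero p F h0
  · subst h
    exact CharP.charP_to_charZero _

universe u in
lemma exists_local (p : ℕ) [Fact p.Prime] (F : Type u) [Field F] [Finite F] [CharP F p] :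
    ∃ (A : Type u) (_ : CommRing A) (_ : IsDomain A) (_ : IsLocalRing A) (_ : CharZero A)
      (ω : F →*₀ A) (i : F →+* ResidueField A) (ζ : A),
      (∀ x, residue A (ω x) = i x) ∧ IsPrimitiveRoot ζ p := by
  have hcz := witt_charZero p F
  let W := WittVector p F
  let Q := FractionRing W
  let Ω := AlgebraicClosure Q
  have : CharZero Q := charZero_of_injective_algebraMap (IsFractionRing.injective W Q)
  have : CharZero Ω := charZero_of_injective_algebraMap (algebraMap Q Ω).injective
  let O := integralClosure W Ω
  have hinj : Function.Injective (algebraMap W Ω) := by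
    rw [IsScalarTower.algebraMap_eq W Q Ω]
    exact (algebraMap Q Ω).injective.comp (IsFractionRing.injective W Q)
  have hinjO : Function.Injective (algebraMap W O) := by
    intro x y h
    exact hinj (congrArg (algebraMap O Ω) h)
  have : NeZero (p : Ω) := ⟨by exact_mod_cast (Fact.out : p.Prime).ne_zero⟩
  obtain ⟨ζ, hζ⟩ := HasEnoughRootsOfUnity.exists_primitiveRoot Ω p
  have hζint : IsIntegral W ζ := by
    refine ⟨Polynomial.X ^ p - 1, Polynomial.monic_X_pow_sub_C 1 (Fact.out : p.Prime).ne_zero, ?_⟩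
    simp [hζ.pow_eq_one]
  obtain ⟨M, hM, hMc⟩ := Ideal.exists_ideal_over_maximal_of_isIntegral (R := W) (S := O)
    (maximalIdeal W) (by
      rw [(RingHom.injective_iff_ker_eq_bot _).mp hinjO]; exact bot_le)
  have : M.IsPrime := hM.isPrime
  let A := Localization.AtPrime M
  have hOA : Function.Injective (algebraMap O A) :=
    IsLocalization.injective A M.primeCompl_le_nonZeroDivisors
  have hAd : IsDomain A := IsLocalization.isDomain_of_le_nonZeroDivisors A (M := M.primeCompl) M.primeCompl_le_nonZeroDivisors
  let g : W →+* A := (algebraMap O A).comp (algebraMap W O)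
  have hginj : Function.Injective g := hOA.comp hinjO
  have hAz : CharZero A := charZero_of_injective_ringHom hginj
  have hker : RingHom.ker (WittVector.constantCoeff (p := p) (R := F)) ≤ RingHom.ker ((residue A).comp g) := by
    intro x hx
    have h1 : x ∈ maximalIdeal W := by
      refine IsLocalRing.le_maximalIdeal ?_ hx
      exact RingHom.ker_ne_top _
    rw [← hMc] at h1
    rw [RingHom.mem_ker, RingHom.comp_apply, residue_eq_zero_iff]
    have := (IsLocalization.AtPrime.to_map_mem_maximal_iff A M (algebraMap W O x)).mpr h1
    exact this
  have hsurj : Function.Surjective (WittVector.constantCoeff (p := p) (R := F)) := by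
    intro x
    exact ⟨WittVector.teichmuller p x, by simp [WittVector.constantCoeff]⟩
  let i : F →+* ResidueField A := RingHom.liftOfRightInverse _ (Function.surjInv hsurj)
    (Function.rightInverse_surjInv hsurj) ⟨(residue A).comp g, hker⟩
  let ω : F →*₀ A :=
    { toFun := fun x => g (WittVector.teichmuller p x)
      map_zero' := by simp
      map_one' := by simp
      map_mul' := by simp }
  refine ⟨A, inferInstance, hAd, inferInstance, hAz, ω, i, algebraMap O A ⟨ζ, hζint⟩, ?_, ?_⟩
  · intro x
    have h1 : i (WittVector.constantCoeff (WittVector.teichmuller p x)) =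
        ((residue A).comp g) (WittVector.teichmuller p x) := RingHom.liftOfRightInverse_comp_apply _ _ _ _ _
    have h2 : WittVector.constantCoeff (WittVector.teichmuller p x) = x := by
      simp [WittVector.constantCoeff]
    rw [h2] at h1
    exact h1.symm
  · refine IsPrimitiveRoot.map_of_injective ?_ hOA
    refine IsPrimitiveRoot.of_map_of_injective (f := algebraMap O Ω) ?_ (Subtype.val_injective)
    exact hζ
end

section
open IsLocalRing Finset
set_option linter.unusedSectionVars false

section
variable (p : ℕ) [Fact p.Prime] (F : Type*) [Field F] [Fintype F] [Algebra (ZMod p) F]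
variable {A : Type*} [CommRing A]

/-- the additive character `x ↦ ζ ^ Tr x` -/
noncomputable def trChar (ζ : A) (hζ : ζ ^ p = 1) : AddChar F A :=
  (AddChar.zmodChar p hζ).compAddMonoidHom (Algebra.trace (ZMod p) F).toAddMonoidHom

lemma trChar_apply (ζ : A) (hζ : ζ ^ p = 1) (x : F) :
    trChar p F ζ hζ x = ζ ^ (Algebra.trace (ZMod p) F x).val := rfl

lemma trace_frob (x : F) : Algebra.trace (ZMod p) F (x ^ p) = Algebra.trace (ZMod p) F x := by
  have h := Algebra.trace_eq_of_algEquiv (FiniteField.frobeniusAlgEquivOfAlgebraic (ZMod p) F) x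
  rw [← h]
  congr 1
  simp [FiniteField.frobeniusAlgEquivOfAlgebraic]

lemma charP_of_alg : CharP F p := charP_of_injective_algebraMap (algebraMap (ZMod p) F).injective p

lemma frob_bij : Function.Bijective (fun x : F => x ^ p) := by
  have := charP_of_alg p F
  exact (frobeniusEquiv F p).bijective

lemma trChar_frob (ζ : A) (hζ : ζ ^ p = 1) (x : F) :
    trChar p F ζ hζ (x ^ p) = trChar p F ζ hζ x := by
  rw [trChar_apply, trChar_apply, trace_frob]

lemma gauss_frob (ζ : A) (hζ : ζ ^ p = 1) (χ : MulChar F A) :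
    gaussSum (χ ^ p) (trChar p F ζ hζ) = gaussSum χ (trChar p F ζ hζ) := by
  unfold gaussSum
  refine Fintype.sum_bijective _ (frob_bij p F) _ _ fun x => ?_
  rw [trChar_frob, MulChar.pow_apply' _ (Fact.out : p.Prime).ne_zero, map_pow]

lemma trChar_ne_one (ζ : A) (hζ : IsPrimitiveRoot ζ p) : trChar p F ζ hζ.pow_eq_one ≠ 1 := by
  intro h
  obtain ⟨x, hx⟩ := Algebra.trace_surjective (ZMod p) F 1
  have h1 : trChar p F ζ hζ.pow_eq_one x = 1 := by rw [h]; rfl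
  have : Fact (1 < p) := ⟨(Fact.out : p.Prime).one_lt⟩
  rw [trChar_apply, hx, ZMod.val_one, pow_one] at h1
  have := hζ.eq_orderOf
  rw [h1, orderOf_one] at this
  exact (Fact.out : p.Prime).one_lt.ne' this

lemma trChar_prim (ζ : A) (hζ : IsPrimitiveRoot ζ p) : (trChar p F ζ hζ.pow_eq_one).IsPrimitive :=
  AddChar.IsPrimitive.of_ne_one (trChar_ne_one p F ζ hζ)

variable {F} in
/-- a multiplicative map as a character -/
noncomputable def teichChar (ω : F →*₀ A) : MulChar F A where
  toMonoidHom := ω.toMonoidHom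
  map_nonunit' := by
    intro a ha
    have : a = 0 := by simpa using ha
    subst this
    exact map_zero ω

variable {F} in
lemma teichChar_apply (ω : F →*₀ A) (x : F) : teichChar ω x = ω x := rfl

section loc
variable [IsDomain A] [IsLocalRing A] [CharZero A]
variable {F} (ω : F →*₀ A) (i : F →+* ResidueField A) (hω : ∀ x, residue A (ω x) = i x)
include hω

lemma res_charP : CharP (ResidueField A) p := by
  have := charP_of_alg p F
  exact charP_of_injective_ringHom i.injective p

lemma zeta_sub_one_mem (ζ : A) (hζ : ζ ^ p = 1) : ζ - 1 ∈ maximalIdeal A := by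
  have := res_charP p ω i hω
  rw [← residue_eq_zero_iff, map_sub, map_one]
  have h1 : (residue A ζ - 1) ^ p = 0 := by
    rw [sub_pow_char, ← map_pow, hζ]; simp
  exact pow_eq_zero_iff (Fact.out : p.Prime).ne_zero |>.mp h1

omit [Algebra (ZMod p) F] in
lemma teich_pow_ne_one (n : ℕ) (hn : 0 < n) (hn2 : n < Fintype.card F - 1) :
    (teichChar ω)⁻¹ ^ n ≠ 1 := by
  intro h
  obtain ⟨g, hg⟩ := IsCyclic.exists_generator (α := Fˣ)
  have h1 : ((teichChar ω)⁻¹ ^ n) g = 1 := by rw [h]; simp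
  rw [MulChar.pow_apply' _ hn.ne', MulChar.inv_apply', teichChar_apply, ← map_pow] at h1
  have h2 := congrArg (residue A) h1
  rw [hω, map_one, ← map_one i] at h2
  have h3 := i.injective h2
  have h4 : g ^ n = 1 := by
    ext
    rw [inv_pow, inv_eq_one] at h3
    simpa using h3
  have h5 := orderOf_dvd_of_pow_eq_one h4
  rw [orderOf_eq_card_of_forall_mem_zpowers hg, Nat.card_units, Nat.card_eq_fintype_card] at h5
  exact absurd (Nat.le_of_dvd hn h5) (by omega)

omit hω [IsDomain A] [IsLocalRing A] [CharZero A] [Algebra (ZMod p) F] in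
lemma teich_pow_card : (teichChar ω)⁻¹ ^ (Fintype.card F - 1) = 1 := by
  ext x
  have h0 : Fintype.card F - 1 ≠ 0 := by have := Fintype.one_lt_card (α := F); omega
  rw [MulChar.pow_apply' _ h0, MulChar.inv_apply', teichChar_apply, ← map_pow, inv_pow,
    FiniteField.pow_card_sub_one_eq_one _ x.ne_zero]
  simp

lemma sum_inv_trace : ∑ x : F, x⁻¹ * algebraMap (ZMod p) F (Algebra.trace (ZMod p) F x) = -1 := by
  classical
  have := charP_of_alg p F
  simp_rw [FiniteField.algebraMap_trace_eq_sum_pow, Nat.card_zmod, Finset.mul_sum]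
  rw [Finset.sum_comm]
  have hcard : Fintype.card F = p ^ Module.finrank (ZMod p) F := by
    rw [Module.card_eq_pow_finrank (K := ZMod p), ZMod.card]
  have hfr : 0 < Module.finrank (ZMod p) F := Module.finrank_pos
  have key : ∀ j ∈ range (Module.finrank (ZMod p) F), ∑ x : F, x⁻¹ * x ^ p ^ j = if j = 0 then -1 else 0 := by
    intro j hj
    have hj : j < Module.finrank (ZMod p) F := by simpa using hj
    have e1 : ∑ x : F, x⁻¹ * x ^ p ^ j = ∑ x : Fˣ, ((x : F) ^ (p ^ j - 1)) := by
      rw [← Finset.sum_subset (Finset.subset_univ (univ.image (fun x : Fˣ => (x : F))))]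
      · rw [Finset.sum_image (fun a _ b _ h => Units.ext h)]
        refine Finset.sum_congr rfl fun x _ => ?_
        obtain ⟨m, hm⟩ := Nat.exists_eq_succ_of_ne_zero (pow_pos (Fact.out : p.Prime).pos j).ne'
        rw [hm, Nat.succ_sub_one, pow_succ', inv_mul_cancel_left₀ x.ne_zero]
      · intro x _ hx
        have : x = 0 := by
          by_contra h0
          exact hx (by simp only [mem_image, mem_univ, true_and]; exact ⟨Units.mk0 x h0, rfl⟩)
        rw [this]; simp
    rw [e1]
    classical
    rw [FiniteField.sum_pow_units]
    by_cases h0 : j = 0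
    · subst h0; simp
    · rw [if_neg h0, if_neg]
      intro hd
      have hlt : p ^ j < p ^ Module.finrank (ZMod p) F := Nat.pow_lt_pow_right (Fact.out : p.Prime).one_lt hj
      have h1 : 1 < p ^ j := Nat.one_lt_pow h0 (Fact.out : p.Prime).one_lt
      have := Nat.le_of_dvd (by omega) hd
      omega
  rw [Finset.sum_congr rfl key]
  simp [hfr]

lemma gauss_one_dvd (hcard : 2 < Fintype.card F) (ζ : A) (hζ : ζ ^ p = 1) :
    gaussSum ((teichChar ω)⁻¹ ^ 1) (trChar p F ζ hζ) ∣ ζ - 1 := by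
  set l := ζ - 1 with hl
  have hlm : l ∈ maximalIdeal A := zeta_sub_one_mem p ω i hω ζ hζ
  have hexp : ∀ n : ℕ, ∃ c : A, ζ ^ n = 1 + n * l + l ^ 2 * c := by
    intro n
    induction n with
    | zero => exact ⟨0, by simp⟩
    | succ n ih =>
      obtain ⟨c, hc⟩ := ih
      refine ⟨n + c + l * c, ?_⟩
      rw [pow_succ, hc, show ζ = 1 + l by rw [hl]; ring]
      push_cast; ring
  choose c hc using hexp
  have h0 : ∑ x : F, ((teichChar ω)⁻¹ ^ 1) x = 0 :=
    MulChar.sum_eq_zero_of_ne_one (teich_pow_ne_one ω i hω 1 one_pos (by omega))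
  have h1 : gaussSum ((teichChar ω)⁻¹ ^ 1) (trChar p F ζ hζ) =
      l * (∑ x : F, ((teichChar ω)⁻¹ ^ 1) x * ((Algebra.trace (ZMod p) F x).val : A)
        + l * ∑ x : F, ((teichChar ω)⁻¹ ^ 1) x * c (Algebra.trace (ZMod p) F x).val) := by
    have : gaussSum ((teichChar ω)⁻¹ ^ 1) (trChar p F ζ hζ) =
      ∑ x : F, ((teichChar ω)⁻¹ ^ 1) x + l * (∑ x : F, ((teichChar ω)⁻¹ ^ 1) x * ((Algebra.trace (ZMod p) F x).val : A)
        + l * ∑ x : F, ((teichChar ω)⁻¹ ^ 1) x * c (Algebra.trace (ZMod p) F x).val) := by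
      rw [gaussSum, Finset.mul_sum, ← Finset.sum_add_distrib, Finset.mul_sum, ← Finset.sum_add_distrib]
      refine Finset.sum_congr rfl fun x _ => ?_
      rw [trChar_apply, hc]; ring
    rw [this, h0, zero_add]
  rw [h1]
  have hunit : IsUnit (∑ x : F, ((teichChar ω)⁻¹ ^ 1) x * ((Algebra.trace (ZMod p) F x).val : A)
        + l * ∑ x : F, ((teichChar ω)⁻¹ ^ 1) x * c (Algebra.trace (ZMod p) F x).val) := by
    rw [← residue_ne_zero_iff_isUnit, map_add, map_mul, (residue_eq_zero_iff l).mpr hlm, zero_mul, add_zero]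
    have h2 : residue A (∑ x : F, ((teichChar ω)⁻¹ ^ 1) x * ((Algebra.trace (ZMod p) F x).val : A)) =
        i (∑ x : F, x⁻¹ * algebraMap (ZMod p) F (Algebra.trace (ZMod p) F x)) := by
      rw [map_sum, map_sum]
      refine Finset.sum_congr rfl fun x _ => ?_
      rw [map_mul, map_mul, pow_one, MulChar.inv_apply', teichChar_apply, hω, map_natCast]
      congr 1
      rw [← map_natCast i]
      congr 1
      rw [← map_natCast (algebraMap (ZMod p) F)]
      congr 1
      simp
    rw [h2, sum_inv_trace p ω i hω]
    simp
  exact (hunit.dvd_mul_right).mp (dvd_refl _) 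
end loc
end
end

section
open IsLocalRing Finset
set_option linter.unusedSectionVars false

section
/-- Stickelberger digit-type sum -/
def digS (p f a : ℕ) : ℕ := ∑ i ∈ range f, (p ^ i * a) % (p ^ f - 1)

lemma pow_f_mod (p f a : ℕ) (hp : 0 < p) : p ^ f * a ≡ a [MOD (p ^ f - 1)] := by
  have h1 : p ^ f = (p ^ f - 1) + 1 := by have := (Nat.pow_pos hp : 0 < p ^ f); omega
  have : p ^ f * a = a + (p ^ f - 1) * a := by
    conv_lhs => rw [h1]
    ring
  rw [this]
  simp [Nat.ModEq]

lemma digS_mul (p f a : ℕ) (hp : 0 < p) : digS p f (p * a) = digS p f a := by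
  unfold digS
  have h1 : ∑ i ∈ range f, (p ^ i * (p * a)) % (p ^ f - 1) + (p ^ 0 * a) % (p ^ f - 1) =
      ∑ i ∈ range f, (p ^ i * a) % (p ^ f - 1) + (p ^ f * a) % (p ^ f - 1) := by
    rw [← Finset.sum_range_succ (fun i => (p ^ i * a) % (p ^ f - 1)),
      Finset.sum_range_succ' (fun i => (p ^ i * a) % (p ^ f - 1))]
    congr 1
    refine Finset.sum_congr rfl fun i _ => ?_
    rw [pow_succ, mul_assoc]
  have h2 : (p ^ f * a) % (p ^ f - 1) = a % (p ^ f - 1) := pow_f_mod p f a hp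
  rw [h2, pow_zero, one_mul] at h1
  omega

lemma digS_succ (p f a : ℕ) (hp : 1 < p) (hpa : ¬ p ∣ a + 1) (ha : a + 1 < p ^ f - 1) :
    digS p f (a + 1) = digS p f a + ∑ i ∈ range f, p ^ i := by
  unfold digS
  rw [← Finset.sum_add_distrib]
  refine Finset.sum_congr rfl fun i hi => ?_
  have hi : i < f := by simpa using hi
  set Q := p ^ f - 1 with hQ
  have hQ1 : p ^ f = Q + 1 := by omega
  set r := (p ^ i * a) % Q with hr
  have hrQ : r < Q := Nat.mod_lt _ (by omega)
  have hmod : p ^ i * (a + 1) ≡ r + p ^ i [MOD Q] := by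
    rw [mul_add, mul_one]
    exact Nat.ModEq.add_right _ (Nat.mod_modEq _ _).symm
  suffices h : r + p ^ i < Q by
    have := Nat.mod_eq_of_lt h
    rw [← this]; exact hmod
  by_contra hcon
  push Not at hcon
  have hpi : p ^ i ≤ Q := by
    have : p ^ i < p ^ f := Nat.pow_lt_pow_right hp hi
    omega
  obtain ⟨r', hr'⟩ := Nat.exists_eq_add_of_le hcon
  have hr'lt : r' < p ^ i := by omega
  have hm2 : r' ≡ p ^ i * (a + 1) [MOD Q] := by
    refine Nat.ModEq.trans ?_ hmod.symm
    rw [hr']; simp [Nat.ModEq]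
  have hff : p ^ (f - i) * p ^ i = p ^ f := by rw [← pow_add]; congr 1; omega
  have hm3 : p ^ (f - i) * r' ≡ a + 1 [MOD Q] := by
    refine (hm2.mul_left _).trans ?_
    rw [← mul_assoc, hff]
    exact pow_f_mod p f (a + 1) (by omega)
  have hlt : p ^ (f - i) * r' < Q + 1 := by
    rw [← hQ1, ← hff]
    exact Nat.mul_lt_mul_of_pos_left hr'lt (by positivity)
  have hm4 : (p ^ (f - i) * r') % Q = a + 1 := by
    rw [hm3, Nat.mod_eq_of_lt ha]
  rcases Nat.lt_or_ge (p ^ (f - i) * r') Q with h | h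
  · rw [Nat.mod_eq_of_lt h] at hm4
    apply hpa
    rw [← hm4]
    exact Dvd.dvd.mul_right (dvd_pow_self p (by omega)) _
  · have : p ^ (f - i) * r' = Q := by omega
    rw [this, Nat.mod_self] at hm4
    omega

lemma digS_compl (p f a : ℕ) (hp : 0 < p) (ha : 0 < a) (ha2 : a < p ^ f - 1) :
    digS p f a + digS p f (p ^ f - 1 - a) = f * (p ^ f - 1) := by
  unfold digS
  rw [← Finset.sum_add_distrib]
  have hcop : ∀ i, (p ^ i).Coprime (p ^ f - 1) := by
    intro i
    apply Nat.Coprime.pow_left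
    rcases Nat.eq_zero_or_pos f with rfl | hf
    · simp at ha2
    rw [Nat.coprime_comm]
    have h1 : (p ^ f - 1).Coprime (p ^ f) := by
      have := (Nat.pow_pos hp : 0 < p ^ f)
      have h2 : p ^ f = (p ^ f - 1) + 1 := by omega
      rw [h2]; simp
    exact Nat.Coprime.coprime_dvd_right (dvd_pow_self p hf.ne') h1
  set Q := p ^ f - 1 with hQ
  rw [Finset.sum_congr rfl (g := fun _ => Q), Finset.sum_const, card_range, smul_eq_mul]
  intro i _
  have hne : (p ^ i * a) % Q ≠ 0 := by
    intro h
    have h1 : Q ∣ p ^ i * a := Nat.dvd_of_mod_eq_zero h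
    have h2 : Q ∣ a := (hcop i).symm.dvd_of_dvd_mul_left h1
    exact absurd (Nat.le_of_dvd ha h2) (by omega)
  have hsum : (p ^ i * a + p ^ i * (Q - a)) % Q = 0 := by
    rw [← mul_add, Nat.add_sub_cancel' ha2.le]; simp
  rw [Nat.add_mod] at hsum
  have l1 : (p ^ i * a) % Q < Q := Nat.mod_lt _ (by omega)
  have l2 : (p ^ i * (Q - a)) % Q < Q := Nat.mod_lt _ (by omega)
  obtain ⟨k, hk⟩ := Nat.dvd_of_mod_eq_zero hsum
  have : k = 1 := by
    have : 0 < k := by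
      rcases Nat.eq_zero_or_pos k with rfl | h
      · omega
      · exact h
    have : k < 2 := by
      by_contra h
      push Not at h
      have := Nat.mul_le_mul_left Q h
      omega
    omega
  subst this
  omega

lemma digS_mul_div (p f p₁ M j : ℕ) (hM : p ^ f - 1 = p₁ * M) :
    digS p f (j * M) = M * ∑ i ∈ range f, (p ^ i * j) % p₁ := by
  unfold digS
  rw [Finset.mul_sum]
  refine Finset.sum_congr rfl fun i _ => ?_
  rw [hM, ← mul_assoc, Nat.mul_mod_mul_right, mul_comm]

end
end

section
open IsLocalRing Finset
set_option linter.unusedSectionVars false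

section
lemma assoc_p (p : ℕ) [Fact p.Prime] {A : Type*} [CommRing A] [IsDomain A] (ζ : A)
    (hζ : IsPrimitiveRoot ζ p) : Associated ((ζ - 1) ^ (p - 1)) (p : A) := by
  have hp : p.Prime := Fact.out
  obtain ⟨n, rfl⟩ : ∃ n, p = n + 1 := ⟨p - 1, by have := hp.pos; omega⟩
  have h := hζ.prod_one_sub_pow_eq_order
  rw [Nat.add_sub_cancel]
  push_cast
  rw [← h]
  have : (ζ - 1) ^ n = ∏ k ∈ range n, (ζ - 1) := by simp
  rw [this]
  refine Associated.prod _ _ _ fun k hk => ?_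
  have hk : k < n := by simpa using hk
  have h1 := hζ.associated_sub_one_pow_sub_one_of_coprime (j := k + 1) (by
    rw [Nat.coprime_comm, hp.coprime_iff_not_dvd]
    intro hd
    have := Nat.le_of_dvd (by omega) hd
    omega)
  refine h1.trans ?_
  rw [← neg_sub]
  exact (Associated.refl _).neg_left

variable (p : ℕ) [Fact p.Prime] {F : Type*} [Field F] [Fintype F] [Algebra (ZMod p) F]
variable {A : Type*} [CommRing A] [IsDomain A] [IsLocalRing A] [CharZero A]
variable (ω : F →*₀ A) (i : F →+* ResidueField A) (hω : ∀ x, residue A (ω x) = i x)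
include hω

lemma gauss_dvd (f : ℕ) (hcard : Fintype.card F = p ^ f) (h2 : 2 < Fintype.card F)
    (ζ : A) (hζ : IsPrimitiveRoot ζ p) (a : ℕ) (ha : a < p ^ f - 1) :
    ∃ s : ℕ, s * (p ^ f - 1) = (p - 1) * digS p f a ∧
      gaussSum ((teichChar ω)⁻¹ ^ a) (trChar p F ζ hζ.pow_eq_one) ∣ (ζ - 1) ^ s := by
  have hp : p.Prime := Fact.out
  induction a using Nat.strong_induction_on with
  | _ a ih =>
  rcases Nat.eq_zero_or_pos a with rfl | hpos
  · refine ⟨0, by simp [digS], ?_⟩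
    rw [pow_zero, pow_zero, gaussSum_one_left (trChar_ne_one p F ζ hζ)]
    simp
  by_cases hd : p ∣ a
  · obtain ⟨b, rfl⟩ := hd
    have hb : 0 < b := Nat.pos_of_mul_pos_left hpos
    have hlt : b < p * b := by have := hp.two_le; nlinarith
    obtain ⟨s, hs, hs2⟩ := ih b hlt (by omega)
    refine ⟨s, by rw [digS_mul p f b hp.pos, hs], ?_⟩
    rwa [mul_comm p b, pow_mul, gauss_frob]
  · obtain ⟨b, rfl⟩ : ∃ b, a = b + 1 := ⟨a - 1, by omega⟩
    obtain ⟨s, hs, hs2⟩ := ih b (by omega) (by omega)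
    refine ⟨s + 1, ?_, ?_⟩
    · rw [digS_succ p f b hp.one_lt hd ha, mul_add, ← hs, add_mul, one_mul]
      congr 1
      rw [Nat.geomSum_eq hp.two_le, Nat.mul_div_cancel']
      simpa using Nat.sub_dvd_pow_sub_pow p 1 f
    · have hne : (teichChar ω)⁻¹ ^ b * (teichChar ω)⁻¹ ^ 1 ≠ 1 := by
        rw [← pow_add]
        exact teich_pow_ne_one ω i hω (b + 1) (by omega) (by omega)
      have hj := jacobiSum_mul_nontrivial hne (trChar p F ζ hζ.pow_eq_one)
      rw [← pow_add] at hj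
      refine (Dvd.intro _ hj).trans ?_
      rw [pow_succ (ζ - 1) s]
      exact mul_dvd_mul hs2 (gauss_one_dvd p ω i hω h2 ζ hζ.pow_eq_one)

lemma dvd_gauss (f : ℕ) (hcard : Fintype.card F = p ^ f) (h2 : 2 < Fintype.card F)
    (ζ : A) (hζ : IsPrimitiveRoot ζ p) (a : ℕ) (ha0 : 0 < a) (ha : a < p ^ f - 1) :
    ∃ s : ℕ, s * (p ^ f - 1) = (p - 1) * digS p f a ∧
      (ζ - 1) ^ s ∣ gaussSum ((teichChar ω)⁻¹ ^ a) (trChar p F ζ hζ.pow_eq_one) := by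
  have hp : p.Prime := Fact.out
  obtain ⟨s, hs, -⟩ := gauss_dvd p ω i hω f hcard h2 ζ hζ a ha
  obtain ⟨s', hs', c, hc⟩ := gauss_dvd p ω i hω f hcard h2 ζ hζ (p ^ f - 1 - a) (by omega)
  refine ⟨s, hs, ?_⟩
  have hss : s + s' = (p - 1) * f := by
    have h1 := digS_compl p f a hp.pos ha0 ha
    have : (s + s') * (p ^ f - 1) = ((p - 1) * f) * (p ^ f - 1) := by
      rw [add_mul, hs, hs', ← mul_add, h1, mul_assoc]
    exact Nat.eq_of_mul_eq_mul_right (by omega) this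
  set ψ := trChar p F ζ hζ.pow_eq_one with hψ
  have hψp : ψ.IsPrimitive := trChar_prim p F ζ hζ
  have hne : (teichChar ω)⁻¹ ^ a ≠ 1 := teich_pow_ne_one ω i hω a ha0 (by omega)
  have hinv : ((teichChar ω)⁻¹ ^ a)⁻¹ = (teichChar ω)⁻¹ ^ (p ^ f - 1 - a) := by
    rw [inv_eq_iff_mul_eq_one, ← pow_add, Nat.add_sub_cancel' ha.le, ← hcard, teich_pow_card]
  have hprod := gaussSum_mul_gaussSum_eq_card hne hψp
  rw [hinv] at hprod
  have hneg := mul_gaussSum_inv_eq_gaussSum ((teichChar ω)⁻¹ ^ (p ^ f - 1 - a)) ψ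
  have hpd : (ζ - 1) ^ ((p - 1) * f) ∣ ((p ^ f : ℕ) : A) := by
    rw [pow_mul]; push_cast
    exact pow_dvd_pow_of_dvd (assoc_p p ζ hζ).dvd f
  obtain ⟨w, hw⟩ := hpd
  have hg0 : gaussSum ((teichChar ω)⁻¹ ^ (p ^ f - 1 - a)) ψ ≠ 0 := by
    intro h0
    rw [h0] at hneg
    have hc0 : (Fintype.card F : A) ≠ 0 := by exact_mod_cast Fintype.card_ne_zero
    rw [← hprod] at hc0
    have : gaussSum ((teichChar ω)⁻¹ ^ (p ^ f - 1 - a)) ψ⁻¹ ≠ 0 := right_ne_zero_of_mul hc0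
    rcases mul_eq_zero.mp hneg with h | h
    · have hu : IsUnit (((teichChar ω)⁻¹ ^ (p ^ f - 1 - a)) (-1)) := (isUnit_neg_one).map _
      exact hu.ne_zero h
    · exact this h
  set ε := ((teichChar ω)⁻¹ ^ (p ^ f - 1 - a)) (-1)
  refine ⟨c * w * ε, ?_⟩
  apply mul_right_cancel₀ hg0
  rw [hcard, hw, ← hss, pow_add, hc] at hprod
  rw [show (ζ - 1) ^ s * (c * w * ε) * gaussSum ((teichChar ω)⁻¹ ^ (p ^ f - 1 - a)) ψ
    = ε * ((ζ - 1) ^ s * (gaussSum ((teichChar ω)⁻¹ ^ (p ^ f - 1 - a)) ψ * c) * w) by ring, ← hprod]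
  nth_rewrite 1 [← hneg]
  ring

/-- Stickelberger for characters of order dividing `p₁`. -/
lemma stick (f p₁ M j : ℕ) (hcard : Fintype.card F = p ^ f) (h2 : 2 < Fintype.card F)
    (hM : p ^ f - 1 = p₁ * M) (hcop : p₁.Coprime (p - 1)) (hj : 0 < j) (hj2 : j < p₁)
    (ζ : A) (hζ : IsPrimitiveRoot ζ p) :
    ∃ b, ∑ k ∈ range f, (p ^ k * j) % p₁ = p₁ * b ∧
      (p : A) ^ b ∣ gaussSum ((teichChar ω)⁻¹ ^ (j * M)) (trChar p F ζ hζ.pow_eq_one) := by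
  have hM0 : 0 < M := by
    rcases Nat.eq_zero_or_pos M with rfl | h
    · omega
    · exact h
  obtain ⟨s, hs, hs2⟩ := dvd_gauss p ω i hω f hcard h2 ζ hζ (j * M) (by positivity) (by
    rw [hM]; exact Nat.mul_lt_mul_of_pos_right hj2 hM0)
  rw [digS_mul_div p f p₁ M j hM, hM] at hs
  have hs' : s * p₁ = (p - 1) * ∑ k ∈ range f, (p ^ k * j) % p₁ := by
    apply Nat.eq_of_mul_eq_mul_right hM0
    rw [mul_assoc, hs]; ring
  have hd : p₁ ∣ ∑ k ∈ range f, (p ^ k * j) % p₁ :=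
    hcop.dvd_of_dvd_mul_left (Dvd.intro_left _ hs')
  obtain ⟨b, hb⟩ := hd
  refine ⟨b, hb, ?_⟩
  have hsb : s = (p - 1) * b := by
    apply Nat.eq_of_mul_eq_mul_right (show 0 < p₁ by omega)
    rw [hs', hb]; ring
  rw [hsb, pow_mul] at hs2
  exact (pow_dvd_pow_of_dvd (assoc_p p ζ hζ).symm.dvd b).trans hs2
end
end

section
open IsLocalRing Finset
set_option linter.unusedSectionVars false

section
variable (p₁ : ℕ) [Fact p₁.Prime]

lemma quad_three (m : ZMod p₁ → ℤ) (h4 : p₁ % 4 = 3) (p : ℕ)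
    (hgen : ∀ t : ZMod p₁, quadraticChar (ZMod p₁) t = 1 → ∃ k : ℕ, t = (p : ZMod p₁) ^ k)
    (hm : ∀ t, m ((p : ZMod p₁) * t) = m t) (t : ZMod p₁) :
    2 * m t = (m 1 + m (-1)) + (m 1 - m (-1)) * quadraticChar (ZMod p₁) t +
      if t = 0 then (2 * m 0 - m 1 - m (-1)) else 0 := by
  have hk : ∀ (k : ℕ) t, m ((p : ZMod p₁) ^ k * t) = m t := by
    intro k
    induction k with
    | zero => intro t; simp
    | succ k ih => intro t; rw [pow_succ, mul_assoc, ih, hm]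
  by_cases h0 : t = 0
  · subst h0; simp
  rw [if_neg h0]
  rcases quadraticChar_dichotomy h0 with h | h
  · obtain ⟨k, hk'⟩ := hgen t h
    have := hk k 1
    rw [mul_one, ← hk'] at this
    rw [this, h]; ring
  · have h' : quadraticChar (ZMod p₁) (-t) = 1 := by
      rw [quadChar_neg p₁ h4, h]; rfl
    obtain ⟨k, hk'⟩ := hgen (-t) h'
    have := hk k (-1)
    rw [← hk', neg_mul_neg, mul_one] at this
    rw [this, h]; ring

variable {A : Type*} [CommRing A] [IsDomain A] [CharZero A]

lemma sum_root (ζ : A) (hζ : IsPrimitiveRoot ζ p₁) (j : ℕ) (hj : ¬ p₁ ∣ j) :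
    ∑ t : ZMod p₁, ζ ^ (t.val * j) = 0 := by
  have hp : p₁.Prime := Fact.out
  have h1 : IsPrimitiveRoot (ζ ^ j) p₁ :=
    hζ.pow_of_coprime j ((Nat.coprime_comm.mp ((hp.coprime_iff_not_dvd).mpr hj)))
  have h2 := h1.geom_sum_eq_zero hp.one_lt
  have h3 := sum_range_zmod p₁ (fun t : ZMod p₁ => ζ ^ (t.val * j))
  rw [← h3, ← h2]
  refine Finset.sum_congr rfl fun k hk => ?_
  have hk : k < p₁ := by simpa using hk
  simp only [ZMod.val_natCast, Nat.mod_eq_of_lt hk]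
  rw [← pow_mul, mul_comm]

lemma quad_eval (m : ZMod p₁ → ℤ) (h4 : p₁ % 4 = 3) (p : ℕ)
    (hgen : ∀ t : ZMod p₁, quadraticChar (ZMod p₁) t = 1 → ∃ k : ℕ, t = (p : ZMod p₁) ^ k)
    (hm : ∀ t, m ((p : ZMod p₁) * t) = m t) (ζ : A) (hζ : IsPrimitiveRoot ζ p₁)
    (j : ℕ) (hj : ¬ p₁ ∣ j) :
    2 * ∑ t : ZMod p₁, (m t : A) * ζ ^ (t.val * j) =
      ((2 * m 0 - m 1 - m (-1) : ℤ) : A) +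
       ((m 1 - m (-1) : ℤ) : A) * ((quadraticChar (ZMod p₁) (j : ZMod p₁) : ℤ) : A) * qg p₁ ζ := by
  rw [Finset.mul_sum]
  have h1 : ∀ t : ZMod p₁, 2 * ((m t : A) * ζ ^ (t.val * j)) =
      ((m 1 + m (-1) : ℤ) : A) * ζ ^ (t.val * j) +
      ((m 1 - m (-1) : ℤ) : A) * (((quadraticChar (ZMod p₁) t : ℤ) : A) * ζ ^ (t.val * j)) +
      if t = 0 then ((2 * m 0 - m 1 - m (-1) : ℤ) : A) else 0 := by
    intro t
    have h := congrArg (Int.cast : ℤ → A) (quad_three p₁ m h4 p hgen hm t)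
    rw [← mul_assoc]
    push_cast at h
    rw [h]
    split_ifs with h0
    · subst h0; simp
    · push_cast; ring
  rw [Finset.sum_congr rfl fun t _ => h1 t, Finset.sum_add_distrib, Finset.sum_add_distrib,
    ← Finset.mul_sum, ← Finset.mul_sum, sum_root p₁ ζ hζ j hj,
    qg_shift p₁ h4 ζ hζ.pow_eq_one]
  simp
  ring
end
end

section
open IsLocalRing Finset
set_option linter.unusedSectionVars false

section
variable (p : ℕ) [Fact p.Prime] {F : Type*} [Field F] [Fintype F] [Algebra (ZMod p) F]
variable {A : Type*} [CommRing A] [IsDomain A] [CharZero A]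

/-- integer weight -/
noncomputable def wt (x : F) : ℤ :=
  if Algebra.trace (ZMod p) F x = 0 then 1 else if Algebra.trace (ZMod p) F x = 1 then -1 else 0

lemma wt_frob (x : F) : wt p (x ^ p) = wt p x := by
  unfold wt; rw [trace_frob]

lemma char_base_one (p₁ : ℕ) (hcop : p₁.Coprime (p - 1)) (θ : MulChar F A) (hθ : θ ^ p₁ = 1)
    (h0 : p₁ ≠ 0) (c : ZMod p) (hc : c ≠ 0) : θ (algebraMap (ZMod p) F c) = 1 := by
  have hu : algebraMap (ZMod p) F c ≠ 0 := by simpa using hc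
  have h1 : θ (algebraMap (ZMod p) F c) ^ (p - 1) = 1 := by
    rw [← map_pow, ← map_pow, ZMod.pow_card_sub_one_eq_one hc, map_one, map_one]
  have h2 : θ (algebraMap (ZMod p) F c) ^ p₁ = 1 := by
    rw [← MulChar.pow_apply' _ h0, hθ, MulChar.one_apply (isUnit_iff_ne_zero.mpr hu)]
  have h3 := orderOf_dvd_of_pow_eq_one h1
  have h4 := orderOf_dvd_of_pow_eq_one h2
  have h5 := Nat.dvd_gcd h4 h3
  rw [hcop.gcd_eq_one, Nat.dvd_one, orderOf_eq_one_iff] at h5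
  exact h5

lemma gauss_int (p₁ : ℕ) (hcop : p₁.Coprime (p - 1)) (θ : MulChar F A) (hθ : θ ^ p₁ = 1)
    (h0 : p₁ ≠ 0) (ζ : A) (hζ : IsPrimitiveRoot ζ p) :
    gaussSum θ (trChar p F ζ hζ.pow_eq_one) = ∑ x : F, θ x * (wt p x : A) := by
  classical
  have hp : p.Prime := Fact.out
  set T : ZMod p → A := fun c => ∑ x : F, if Algebra.trace (ZMod p) F x = c then θ x else 0 with hT
  have hTc : ∀ c : ZMod p, c ≠ 0 → T c = T 1 := by
    intro c hc
    have hu : algebraMap (ZMod p) F c ≠ 0 := by simpa using hc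
    simp only [hT]
    symm
    refine Fintype.sum_bijective _ (mulLeft_bijective₀ _ hu) _ _ fun x => ?_
    have e : Algebra.trace (ZMod p) F (algebraMap (ZMod p) F c * x) = c * Algebra.trace (ZMod p) F x := by
      rw [← Algebra.smul_def, map_smul, smul_eq_mul]
    simp only [e, map_mul, char_base_one p p₁ hcop θ hθ h0 c hc, one_mul]
    congr 1
    apply propext
    constructor
    · intro h; rw [h, mul_one]
    · intro h; exact mul_left_cancel₀ hc (by rw [h, mul_one])
  have hG : gaussSum θ (trChar p F ζ hζ.pow_eq_one) = ∑ c : ZMod p, T c * ζ ^ c.val := by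
    simp only [gaussSum, hT, Finset.sum_mul]
    rw [Finset.sum_comm]
    refine Finset.sum_congr rfl fun x _ => ?_
    simp [trChar_apply]
  have hz : ∑ c : ZMod p, ζ ^ c.val = 0 := by
    have := sum_root p ζ hζ 1 (by
      intro h; exact hp.one_lt.ne' (Nat.dvd_one.mp h))
    simpa using this
  have hR : ∑ x : F, θ x * (wt p x : A) = T 0 - T 1 := by
    simp only [hT]
    rw [← Finset.sum_sub_distrib]
    refine Finset.sum_congr rfl fun x _ => ?_
    unfold wt
    by_cases h0 : Algebra.trace (ZMod p) F x = 0
    · simp [h0]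
    · by_cases h1 : Algebra.trace (ZMod p) F x = 1 <;> simp [h0, h1]
  rw [hG, hR]
  have : ∑ c : ZMod p, T c * ζ ^ c.val = ∑ c : ZMod p, (T 1 * ζ ^ c.val + if c = 0 then T 0 - T 1 else 0) := by
    refine Finset.sum_congr rfl fun c _ => ?_
    by_cases hc : c = 0
    · subst hc; simp
    · rw [if_neg hc, hTc c hc, add_zero]
  rw [this, Finset.sum_add_distrib, ← Finset.mul_sum, hz]
  simp

variable (p₁ : ℕ) [Fact p₁.Prime]

open scoped Classical in
/-- weight of a class -/
noncomputable def mcl (θ : MulChar F A) (ζ₁ : A) (t : ZMod p₁) : ℤ :=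
  ∑ x : F, if θ x = ζ₁ ^ t.val then wt p x else 0

lemma root_pow_inj (ζ₁ : A) (hζ₁ : IsPrimitiveRoot ζ₁ p₁) (s t : ZMod p₁) (h : ζ₁ ^ s.val = ζ₁ ^ t.val) :
    s = t :=
  ZMod.val_injective _ (hζ₁.pow_inj (ZMod.val_lt s) (ZMod.val_lt t) h)

lemma theta_exists (θ : MulChar F A) (hθ : θ ^ p₁ = 1) (ζ₁ : A) (hζ₁ : IsPrimitiveRoot ζ₁ p₁)
    (x : F) (hx : x ≠ 0) : ∃ t : ZMod p₁, θ x = ζ₁ ^ t.val := by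
  have hp : p₁.Prime := Fact.out
  have h : θ x ^ p₁ = 1 := by
    rw [← MulChar.pow_apply' _ hp.ne_zero, hθ, MulChar.one_apply (isUnit_iff_ne_zero.mpr hx)]
  obtain ⟨k, hk, hk2⟩ := hζ₁.eq_pow_of_pow_eq_one h
  exact ⟨(k : ZMod p₁), by rw [ZMod.val_natCast, Nat.mod_eq_of_lt hk, hk2]⟩

lemma mcl_frob (θ : MulChar F A) (hθ : θ ^ p₁ = 1) (ζ₁ : A) (hζ₁ : IsPrimitiveRoot ζ₁ p₁)
    (hpp : (p : ZMod p₁) ≠ 0) (t : ZMod p₁) :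
    mcl (F := F) p p₁ θ ζ₁ ((p : ZMod p₁) * t) = mcl (F := F) p p₁ θ ζ₁ t := by
  unfold mcl
  symm
  refine Fintype.sum_bijective _ (frob_bij p F) _ _ fun x => ?_
  rw [wt_frob]
  congr 1
  apply propext
  have hp : p.Prime := Fact.out
  by_cases hx : x = 0
  · subst hx
    have hz : ∀ n, (0 : A) ≠ ζ₁ ^ n := fun n => (pow_ne_zero n (hζ₁.ne_zero (Fact.out : p₁.Prime).ne_zero)).symm
    simp [hp.ne_zero, hz, MulChar.map_zero]
  obtain ⟨s, hs⟩ := theta_exists p₁ θ hθ ζ₁ hζ₁ x hx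
  rw [map_pow, hs, ← pow_mul, pow_val_mul p₁ ζ₁ hζ₁.pow_eq_one]
  constructor
  · intro h; rw [root_pow_inj p₁ ζ₁ hζ₁ _ _ h]
  · intro h
    rw [mul_left_cancel₀ hpp (root_pow_inj p₁ ζ₁ hζ₁ _ _ h)]

lemma gauss_mcl (θ : MulChar F A) (hθ : θ ^ p₁ = 1) (ζ₁ : A) (hζ₁ : IsPrimitiveRoot ζ₁ p₁)
    (hcop : p₁.Coprime (p - 1)) (ζ : A) (hζ : IsPrimitiveRoot ζ p) (j : ℕ) (hj : j ≠ 0) :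
    gaussSum (θ ^ j) (trChar p F ζ hζ.pow_eq_one) =
      ∑ t : ZMod p₁, (mcl (F := F) p p₁ θ ζ₁ t : A) * ζ₁ ^ (t.val * j) := by
  classical
  have hp : p₁.Prime := Fact.out
  rw [gauss_int p p₁ hcop (θ ^ j) (by rw [← pow_mul, mul_comm, pow_mul, hθ, one_pow]) hp.ne_zero ζ hζ]
  unfold mcl
  push_cast
  simp_rw [Finset.sum_mul]
  rw [Finset.sum_comm]
  refine Finset.sum_congr rfl fun x _ => ?_
  by_cases hx : x = 0
  · subst hx
    have hz : ∀ n, (0 : A) ≠ ζ₁ ^ n := fun n => (pow_ne_zero n (hζ₁.ne_zero hp.ne_zero)).symm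
    rw [MulChar.pow_apply' _ hj]
    simp [hz, hj, MulChar.map_zero]
  obtain ⟨s, hs⟩ := theta_exists p₁ θ hθ ζ₁ hζ₁ x hx
  rw [MulChar.pow_apply' _ hj, hs, Finset.sum_eq_single s]
  · rw [if_pos rfl, pow_mul, mul_comm]
  · intro t _ ht
    rw [if_neg]
    · simp
    · intro h; exact ht (root_pow_inj p₁ ζ₁ hζ₁ _ _ h).symm
  · simp

/-- the Gauss sums lie in the quadratic subfield -/
lemma gauss_quad (θ : MulChar F A) (hθ : θ ^ p₁ = 1) (ζ₁ : A) (hζ₁ : IsPrimitiveRoot ζ₁ p₁)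
    (h4 : p₁ % 4 = 3) (hpp : (p : ZMod p₁) ≠ 0)
    (hgen : ∀ t : ZMod p₁, quadraticChar (ZMod p₁) t = 1 → ∃ k : ℕ, t = (p : ZMod p₁) ^ k)
    (hcop : p₁.Coprime (p - 1)) (ζ : A) (hζ : IsPrimitiveRoot ζ p) :
    ∃ X Y : ℤ, ∀ j : ℕ, ¬ p₁ ∣ j → 2 * gaussSum (θ ^ j) (trChar p F ζ hζ.pow_eq_one) =
      (X : A) + (Y : A) * ((quadraticChar (ZMod p₁) (j : ZMod p₁) : ℤ) : A) * qg p₁ ζ₁ := by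
  refine ⟨2 * mcl (F := F) p p₁ θ ζ₁ 0 - mcl (F := F) p p₁ θ ζ₁ 1 - mcl (F := F) p p₁ θ ζ₁ (-1),
    mcl (F := F) p p₁ θ ζ₁ 1 - mcl (F := F) p p₁ θ ζ₁ (-1), fun j hj => ?_⟩
  rw [gauss_mcl p p₁ θ hθ ζ₁ hζ₁ hcop ζ hζ j (by rintro rfl; simp at hj)]
  exact quad_eval p₁ (mcl (F := F) p p₁ θ ζ₁) h4 p hgen (mcl_frob p p₁ θ hθ ζ₁ hζ₁ hpp) ζ₁ hζ₁ j hj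
end
end

section
open IsLocalRing Finset
set_option linter.unusedSectionVars false

section
lemma int_dvd_of_local (p : ℕ) [Fact p.Prime] {A : Type*} [CommRing A] [IsDomain A] [CharZero A]
    (hp : ¬ IsUnit (p : A)) (m : ℕ) (X : ℤ) (h : (p : A) ^ m ∣ (X : A)) : (p : ℤ) ^ m ∣ X := by
  have hpp : p.Prime := Fact.out
  induction m generalizing X with
  | zero => simp
  | succ m ih =>
    have h1 : (p : ℤ) ∣ X := by
      by_contra hnd
      have hc : IsCoprime (p : ℤ) X := (Int.prime_iff_natAbs_prime.mpr (by simpa using hpp)).coprime_iff_not_dvd.mpr hnd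
      obtain ⟨a, b, hab⟩ := hc
      apply hp
      apply isUnit_of_dvd_one
      have h2 : (p : A) ∣ (X : A) := (dvd_pow_self _ (Nat.succ_ne_zero m)).trans h
      have h3 : (a : A) * (p : A) + (b : A) * (X : A) = 1 := by exact_mod_cast hab
      rw [← h3]
      exact dvd_add (Dvd.intro_left _ rfl) (h2.mul_left _)
    obtain ⟨Z, rfl⟩ := h1
    rw [pow_succ']
    apply mul_dvd_mul_left
    apply ih
    rw [pow_succ'] at h
    push_cast at h
    exact (mul_dvd_mul_iff_left (by exact_mod_cast hpp.ne_zero)).mp h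

variable (p₁ : ℕ) [Fact p₁.Prime]

lemma gen_of_order (p f : ℕ) (h2f : 2 * f + 1 = p₁) (hord : orderOf (p : ZMod p₁) = f)
    (t : ZMod p₁) (ht : quadraticChar (ZMod p₁) t = 1) : ∃ k < f, t = (p : ZMod p₁) ^ k := by
  have h2 : ringChar (ZMod p₁) ≠ 2 := by rw [ZMod.ringChar_zmod_n]; omega
  have hp : p₁.Prime := Fact.out
  have hf : NeZero f := ⟨by rintro rfl; simp at h2f; exact hp.one_lt.ne h2f⟩
  have h1 := quadraticChar_eq_pow_of_char_ne_two' h2 t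
  rw [ht, ZMod.card, show p₁ / 2 = f by omega] at h1
  have h3 : IsPrimitiveRoot (p : ZMod p₁) f := hord ▸ IsPrimitiveRoot.orderOf _
  obtain ⟨k, hk, hk2⟩ := h3.eq_pow_of_pow_eq_one (ξ := t) (by rw [← h1]; simp)
  exact ⟨k, hk, hk2.symm⟩

lemma chi_p (p f : ℕ) (h2f : 2 * f + 1 = p₁) (hord : orderOf (p : ZMod p₁) = f) :
    quadraticChar (ZMod p₁) (p : ZMod p₁) = 1 := by
  have h2 : ringChar (ZMod p₁) ≠ 2 := by rw [ZMod.ringChar_zmod_n]; omega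
  have hp : p₁.Prime := Fact.out
  have hf : f ≠ 0 := by rintro rfl; simp at h2f; exact hp.one_lt.ne h2f
  have h0 : (p : ZMod p₁) ≠ 0 := by
    intro h
    have := pow_orderOf_eq_one (p : ZMod p₁)
    rw [hord, h, zero_pow hf] at this
    exact zero_ne_one this
  rw [quadraticChar_one_iff_isSquare h0, FiniteField.isSquare_iff h2 h0, ZMod.card,
    show p₁ / 2 = f by omega, ← hord, pow_orderOf_eq_one]

lemma sum_R (p f : ℕ) (h2f : 2 * f + 1 = p₁) (hord : orderOf (p : ZMod p₁) = f)
    (v : ZMod p₁ → ℤ) :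
    ∑ x : ZMod p₁, (if quadraticChar (ZMod p₁) x = 1 then v x else 0) =
      ∑ k ∈ range f, v ((p : ZMod p₁) ^ k) := by
  classical
  rw [← Finset.sum_filter]
  have hinj : Set.InjOn (fun k : ℕ => (p : ZMod p₁) ^ k) (range f : Finset ℕ) := by
    intro a ha b hb hab
    have h3 : IsPrimitiveRoot (p : ZMod p₁) f := hord ▸ IsPrimitiveRoot.orderOf _
    exact h3.pow_inj (by simpa using ha) (by simpa using hb) hab
  rw [← Finset.sum_image (f := v) hinj]
  refine Finset.sum_congr ?_ fun _ _ => rfl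
  ext t
  simp only [mem_filter, mem_univ, true_and, mem_image, mem_range]
  constructor
  · intro h
    obtain ⟨k, hk, hk2⟩ := gen_of_order p₁ p f h2f hord t h
    exact ⟨k, hk, hk2.symm⟩
  · rintro ⟨k, hk, rfl⟩
    rw [map_pow, chi_p p₁ p f h2f hord, one_pow]

lemma sum_chi_val (h4 : p₁ % 4 = 3) (p f : ℕ) (h2f : 2 * f + 1 = p₁) (hord : orderOf (p : ZMod p₁) = f) :
    ∑ x : ZMod p₁, (x.val : ℤ) * quadraticChar (ZMod p₁) x =
      ((∑ k ∈ range f, (p ^ k * 1) % p₁ : ℕ) : ℤ) - ((∑ k ∈ range f, (p ^ k * (p₁ - 1)) % p₁ : ℕ) : ℤ) := by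
  classical
  have hp : p₁.Prime := Fact.out
  have e1 : ∑ x : ZMod p₁, (x.val : ℤ) * quadraticChar (ZMod p₁) x =
      ∑ x : ZMod p₁, (if quadraticChar (ZMod p₁) x = 1 then (x.val : ℤ) else 0) -
      ∑ x : ZMod p₁, (if quadraticChar (ZMod p₁) x = -1 then (x.val : ℤ) else 0) := by
    rw [← Finset.sum_sub_distrib]
    refine Finset.sum_congr rfl fun x _ => ?_
    by_cases h0 : x = 0
    · subst h0; simp
    · rcases quadraticChar_dichotomy h0 with h | h <;> simp [h]
  have e2 : ∑ x : ZMod p₁, (if quadraticChar (ZMod p₁) x = -1 then (x.val : ℤ) else 0) =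
      ∑ x : ZMod p₁, (if quadraticChar (ZMod p₁) x = 1 then ((-x).val : ℤ) else 0) := by
    refine Fintype.sum_equiv (Equiv.neg _) _ _ fun x => ?_
    simp only [Equiv.neg_apply, neg_neg, quadChar_neg p₁ h4, neg_eq_iff_eq_neg]
  rw [e1, e2, sum_R p₁ p f h2f hord (fun x => (x.val : ℤ)), sum_R p₁ p f h2f hord (fun x => ((-x).val : ℤ))]
  push_cast
  congr 1
  · refine Finset.sum_congr rfl fun k _ => ?_
    rw [mul_one, ← Nat.cast_pow, ZMod.val_natCast]
    push_cast; rfl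
  · refine Finset.sum_congr rfl fun k _ => ?_
    have : (-(p : ZMod p₁) ^ k) = ((p ^ k * (p₁ - 1) : ℕ) : ZMod p₁) := by
      rw [Nat.cast_mul, Nat.cast_sub hp.one_lt.le]; simp
    rw [this, ZMod.val_natCast]
    push_cast [hp.one_lt.le]; rfl

lemma sum_B (p f : ℕ) (hpp : (p : ZMod p₁) ≠ 0) :
    ∑ k ∈ range f, (p ^ k * 1) % p₁ + ∑ k ∈ range f, (p ^ k * (p₁ - 1)) % p₁ = p₁ * f := by
  have hp : p₁.Prime := Fact.out
  rw [← Finset.sum_add_distrib, Finset.sum_congr rfl (g := fun _ => p₁)]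
  · simp [mul_comm]
  intro k _
  have h1 : (p ^ k * 1) % p₁ = ((p : ZMod p₁) ^ k).val := by
    rw [mul_one, ← Nat.cast_pow, ZMod.val_natCast]
  have h2 : (p ^ k * (p₁ - 1)) % p₁ = (-(p : ZMod p₁) ^ k).val := by
    have : (-(p : ZMod p₁) ^ k) = ((p ^ k * (p₁ - 1) : ℕ) : ZMod p₁) := by
      rw [Nat.cast_mul, Nat.cast_sub hp.one_lt.le]; simp
    rw [this, ZMod.val_natCast]
  have : NeZero ((p : ZMod p₁) ^ k) := ⟨pow_ne_zero k hpp⟩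
  rw [h1, h2, ZMod.val_neg_of_ne_zero]
  have := ZMod.val_lt ((p : ZMod p₁) ^ k)
  omega

/-- the final diophantine step -/
lemma dioph (p h H : ℕ) (hp : p.Prime) (hp2 : p ≠ 2) (hH : H ≤ h) (hodd : Odd H) (hcl : 1 + p₁ = 4 * p ^ h)
    (hp₁odd : Odd p₁) (x y : ℤ) (hxy : x ^ 2 + p₁ * y ^ 2 = 4 * p ^ H) : x ^ 2 = 1 ∧ y ^ 2 = 1 := by
  have hp₁ : p₁.Prime := Fact.out
  have hle : (p : ℤ) ^ H ≤ (p : ℤ) ^ h := by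
    exact_mod_cast Nat.pow_le_pow_right hp.pos hH
  have hcl' : (1 : ℤ) + p₁ = 4 * p ^ h := by exact_mod_cast hcl
  have hy : y ≠ 0 := by
    rintro rfl
    have h1 : x ^ 2 = 4 * (p : ℤ) ^ H := by simpa using hxy
    have h2 : x.natAbs ^ 2 = 4 * p ^ H := by
      zify; simpa using h1
    have : Fact p.Prime := ⟨hp⟩
    have h3 := congrArg (padicValNat p) h2
    have hx0 : x.natAbs ≠ 0 := by
      intro h0; rw [h0] at h2; have := hp.pos; simp at h2; omega
    have h4 : padicValNat p 4 = 0 := by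
      apply padicValNat.eq_zero_of_not_dvd
      intro hd
      have : p ∣ 2 ^ 2 := by simpa using hd
      exact hp2 ((Nat.prime_dvd_prime_iff_eq hp Nat.prime_two).mp (hp.dvd_of_dvd_pow this))
    rw [padicValNat.pow, padicValNat.mul (by norm_num) (pow_ne_zero _ hp.ne_zero),
      padicValNat.prime_pow, h4] at h3
    obtain ⟨r, hr⟩ := hodd
    omega
  have hp1 : (1 : ℤ) < p₁ := by exact_mod_cast hp₁.one_lt
  have hy1 : 1 ≤ y ^ 2 := by have := sq_pos_of_ne_zero hy; omega
  have hx0 : 0 ≤ x ^ 2 := sq_nonneg x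
  have hy2 : y ^ 2 = 1 := by
    by_contra hne
    have : 2 ≤ y ^ 2 := by omega
    nlinarith
  refine ⟨?_, hy2⟩
  rw [hy2, mul_one] at hxy
  have hx1 : x ^ 2 ≤ 1 := by linarith
  rcases (show x ^ 2 = 0 ∨ x ^ 2 = 1 by omega) with h0 | h0
  · rw [h0, zero_add] at hxy
    have : p₁ = 4 * p ^ H := by exact_mod_cast hxy
    obtain ⟨r, hr⟩ := hp₁odd
    omega
  · exact h0
end
end

section
open IsLocalRing Finset
set_option linter.unusedSectionVars false

section
lemma theta_neg_one {F A : Type*} [Field F] [CommRing A] [IsDomain A] (θ : MulChar F A) (n : ℕ)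
    (hn : Odd n) (hθ : θ ^ n = 1) : θ (-1) = 1 := by
  have h0 : n ≠ 0 := by rintro rfl; simp at hn
  have h1 : θ (-1) ^ n = 1 := by
    rw [← MulChar.pow_apply' _ h0, hθ, MulChar.one_apply isUnit_neg_one]
  rw [← map_pow, hn.neg_one_pow] at h1
  exact h1

variable (p : ℕ) [Fact p.Prime] {F : Type*} [Field F] [Fintype F] [Algebra (ZMod p) F]
variable {A : Type*} [CommRing A] [IsDomain A] [IsLocalRing A] [CharZero A]
variable (ω : F →*₀ A) (i : F →+* ResidueField A) (hω : ∀ x, residue A (ω x) = i x)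
variable (p₁ : ℕ) [Fact p₁.Prime]
include hω

lemma p_not_unit : ¬ IsUnit (p : A) := by
  have := res_charP p ω i hω
  rw [← residue_ne_zero_iff_isUnit, map_natCast, CharP.cast_eq_zero]
  simp

lemma gauss_final (h4 : p₁ % 4 = 3) (hp2 : p ≠ 2) (f M h : ℕ) (hcard : Fintype.card F = p ^ f)
    (h2f : 2 * f + 1 = p₁) (hord : orderOf (p : ZMod p₁) = f) (hf1 : 1 < f)
    (hM : p ^ f - 1 = p₁ * M) (hcl : 1 + p₁ = 4 * p ^ h)
    (hB : |∑ x : ZMod p₁, (x.val : ℤ) * quadraticChar (ZMod p₁) x| ≤ h * p₁)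
    (ζ : A) (hζ : IsPrimitiveRoot ζ p) (ζ₁ : A) (hζ₁ : IsPrimitiveRoot ζ₁ p₁) :
    ∃ m : ℕ, ∃ x y : ℤ, x ^ 2 = 1 ∧ y ^ 2 = 1 ∧ ∀ j : ℕ, ¬ p₁ ∣ j →
      2 * gaussSum (((teichChar ω)⁻¹ ^ M) ^ j) (trChar p F ζ hζ.pow_eq_one) =
        (p : A) ^ m * ((x : A) + (y : A) * ((quadraticChar (ZMod p₁) (j : ZMod p₁) : ℤ) : A) * qg p₁ ζ₁) := by
  have hp : p.Prime := Fact.out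
  have hp₁ : p₁.Prime := Fact.out
  have hq2 : 2 < Fintype.card F := by
    rw [hcard]
    calc 2 < 3 ^ 1 := by norm_num
      _ ≤ p ^ 1 := by have := hp.two_le; simp; omega
      _ ≤ p ^ f := Nat.pow_le_pow_right hp.pos hf1.le
  have hpp : (p : ZMod p₁) ≠ 0 := by
    intro h0
    have := pow_orderOf_eq_one (p : ZMod p₁)
    rw [hord, h0, zero_pow (by omega)] at this
    exact zero_ne_one this
  have hcop : p₁.Coprime (p - 1) := by
    rw [hp₁.coprime_iff_not_dvd]
    intro hd
    have h1 : ((p - 1 : ℕ) : ZMod p₁) = 0 := (ZMod.natCast_eq_zero_iff _ _).mpr hd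
    rw [Nat.cast_sub hp.one_lt.le, Nat.cast_one, sub_eq_zero] at h1
    rw [h1, orderOf_one] at hord
    omega
  set θ := (teichChar ω)⁻¹ ^ M with hθdef
  have hM0 : 0 < M := by
    rcases Nat.eq_zero_or_pos M with h0 | h0
    · rw [h0] at hM; rw [hcard] at hq2; omega
    · exact h0
  have hθ : θ ^ p₁ = 1 := by
    rw [hθdef, ← pow_mul, mul_comm, ← hM, ← hcard, teich_pow_card]
  have hθ1 : θ ≠ 1 := teich_pow_ne_one ω i hω M hM0 (by
    rw [hcard, hM]; have := hp₁.one_lt; nlinarith)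
  have hordθ : orderOf θ = p₁ := orderOf_eq_prime hθ hθ1
  obtain ⟨X, Y, hXY⟩ := gauss_quad p p₁ θ hθ ζ₁ hζ₁ h4 hpp
    (fun t ht => (gen_of_order p₁ p f h2f hord t ht).imp fun k hk => hk.2) hcop ζ hζ
  obtain ⟨b1, hb1, hd1⟩ := stick p ω i hω f p₁ M 1 hcard hq2 hM hcop one_pos hp₁.one_lt ζ hζ
  obtain ⟨b2, hb2, hd2⟩ := stick p ω i hω f p₁ M (p₁ - 1) hcard hq2 hM hcop
    (by have := hp₁.one_lt; omega) (by have := hp₁.pos; omega) ζ hζ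
  rw [one_mul] at hd1
  rw [mul_comm, pow_mul, ← hθdef] at hd2
  have hX1 := hXY 1 (by intro hd; exact hp₁.one_lt.ne' (Nat.dvd_one.mp hd))
  have hX2 := hXY (p₁ - 1) (by
    intro hd; have := Nat.le_of_dvd (by have := hp₁.one_lt; omega) hd; have := hp₁.pos; omega)
  have hχ2 : quadraticChar (ZMod p₁) ((p₁ - 1 : ℕ) : ZMod p₁) = -1 := by
    rw [Nat.cast_sub hp₁.one_lt.le]
    simp only [CharP.cast_eq_zero, Nat.cast_one, zero_sub]
    rw [quadChar_neg p₁ h4, map_one]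
  rw [hχ2] at hX2
  rw [pow_one, Nat.cast_one, map_one] at hX1
  set ψ := trChar p F ζ hζ.pow_eq_one
  set g := qg p₁ ζ₁ with hgdef
  have hg2 : g ^ 2 = -(p₁ : A) := qg_sq p₁ h4 ζ₁ hζ₁
  have hprod : gaussSum θ ψ * gaussSum (θ ^ (p₁ - 1)) ψ = (p : A) ^ f := by
    have := gaussSum_mul_gaussSum_pow_orderOf_sub_one hθ1 (trChar_prim p F ζ hζ)
    rw [hordθ, theta_neg_one θ p₁ (Nat.odd_iff.mpr (by omega)) hθ, hcard] at this
    rw [this]; push_cast; ring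
  have hnorm : X ^ 2 + p₁ * Y ^ 2 = 4 * (p : ℤ) ^ f := by
    have : ((X ^ 2 + p₁ * Y ^ 2 : ℤ) : A) = ((4 * (p : ℤ) ^ f : ℤ) : A) := by
      push_cast
      rw [← hprod]
      push_cast at hX1 hX2
      linear_combination (-2 * gaussSum (θ ^ (p₁ - 1)) ψ) * hX1 - (X + Y * g) * hX2 + Y ^ 2 * hg2
    exact_mod_cast this
  -- divisibility
  set m := min b1 b2 with hm
  have hnu := p_not_unit p ω i hω
  have hd1' : (p : A) ^ m ∣ gaussSum θ ψ := (pow_dvd_pow _ (min_le_left _ _)).trans hd1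
  have hd2' : (p : A) ^ m ∣ gaussSum (θ ^ (p₁ - 1)) ψ := (pow_dvd_pow _ (min_le_right _ _)).trans hd2
  have hXd : (p : ℤ) ^ m ∣ X := by
    apply int_dvd_of_local p hnu
    have h2X : (2 : A) * X = 2 * (gaussSum θ ψ + gaussSum (θ ^ (p₁ - 1)) ψ) := by
      push_cast at hX1 hX2
      linear_combination -hX1 - hX2
    rw [mul_left_cancel₀ two_ne_zero h2X]
    exact dvd_add hd1' hd2'
  have hYd : (p : ℤ) ^ m ∣ Y := by
    have h1 : (p : ℤ) ^ m ∣ p₁ * Y := by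
      apply int_dvd_of_local p hnu
      have h2Y : (2 : A) * ((p₁ * Y : ℤ) : A) = 2 * ((gaussSum θ ψ - gaussSum (θ ^ (p₁ - 1)) ψ) * (-g)) := by
        push_cast at hX1 hX2 ⊢
        linear_combination g * hX1 - g * hX2 + 2 * Y * hg2
      rw [mul_left_cancel₀ two_ne_zero h2Y]
      exact (dvd_sub hd1' hd2').mul_right _
    refine IsCoprime.dvd_of_dvd_mul_left ?_ h1
    apply IsCoprime.pow_left
    rw [Nat.isCoprime_iff_coprime]
    rw [Nat.coprime_comm, hp₁.coprime_iff_not_dvd]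
    intro hd
    exact hpp ((ZMod.natCast_eq_zero_iff _ _).mpr hd)
  obtain ⟨x, rfl⟩ := hXd
  obtain ⟨y, rfl⟩ := hYd
  -- exponents
  have hsum : b1 + b2 = f := by
    have := sum_B p₁ p f hpp
    rw [hb1, hb2, ← mul_add] at this
    exact Nat.eq_of_mul_eq_mul_left hp₁.pos this
  have hdiff : |(b1 : ℤ) - b2| ≤ h := by
    rw [sum_chi_val p₁ h4 p f h2f hord, hb1, hb2] at hB
    push_cast at hB
    rw [← mul_sub, abs_mul, mul_comm, Nat.abs_cast] at hB
    exact le_of_mul_le_mul_right hB (by exact_mod_cast hp₁.pos)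
  have hle : f - 2 * m ≤ h := by
    rw [abs_le] at hdiff
    omega
  have h2m : 2 * m ≤ f := by omega
  have hfodd : Odd (f - 2 * m) := by
    rw [Nat.odd_iff]; omega
  have hxy : x ^ 2 + p₁ * y ^ 2 = 4 * (p : ℤ) ^ (f - 2 * m) := by
    have hpz : ((p : ℤ) ^ (2 * m)) ≠ 0 := pow_ne_zero _ (by exact_mod_cast hp.ne_zero)
    apply mul_left_cancel₀ hpz
    have e : (p : ℤ) ^ (2 * m) * (4 * (p : ℤ) ^ (f - 2 * m)) = 4 * (p : ℤ) ^ f := by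
      rw [mul_left_comm, ← pow_add, Nat.add_sub_cancel' h2m]
    rw [e, ← hnorm]; ring
  obtain ⟨hx1, hy1⟩ := dioph p₁ p h (f - 2 * m) hp hp2 hle hfodd hcl (Nat.odd_iff.mpr (by omega)) x y hxy
  refine ⟨m, x, y, hx1, hy1, fun j hj => ?_⟩
  rw [hXY j hj]
  push_cast; ring
end
end

section
open Finset
set_option linter.unusedSectionVars false

section
variable {F : Type*} [Field F] [Fintype F]

lemma odd_sum_zero (S : F → ℤ) (hodd : ∀ x, S (-x) = - S x) : ∑ x, S x = 0 := by
  have h : ∑ x, S x = ∑ x, S (-x) := (Fintype.sum_equiv (Equiv.neg F) _ _ (fun x => by simp))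
  simp only [hodd, Finset.sum_neg_distrib] at h
  omega

lemma autocorr {A : Type*} [CommRing A] [IsDomain A] [CharZero A] (S : F → ℤ) (h0 : S 0 = 0)
    (h1 : ∀ x, x ≠ 0 → S x ^ 2 = 1) (hodd : ∀ x, S (-x) = - S x) (ψ : AddChar F A)
    (hψ : ψ.IsPrimitive) (G : A) (hG : G ^ 2 = -(Fintype.card F : A))
    (hS : ∀ a, ∑ x, (S x : A) * ψ (a * x) = G * S a) (g : F) (hg : g ≠ 0) :
    ∑ x, S x * S (x + g) = -1 := by
  classical
  have hq : (Fintype.card F : A) ≠ 0 := by exact_mod_cast Fintype.card_ne_zero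
  have hsum : ∀ b : F, ∑ a, ψ (a * b) = if b = 0 then (Fintype.card F : A) else 0 := by
    intro b
    rw [AddChar.sum_mulShift b hψ]; split_ifs <;> simp
  have e1 : ∑ a, (∑ x, (S x : A) * ψ (a * x)) * (∑ y, (S y : A) * ψ (-a * y)) * ψ (a * g) =
      Fintype.card F * ((∑ x, S x * S (x + g) : ℤ) : A) := by
    have : ∀ a, (∑ x, (S x : A) * ψ (a * x)) * (∑ y, (S y : A) * ψ (-a * y)) * ψ (a * g) =
        ∑ x, ∑ y, ((S x : A) * S y) * ψ (a * (x - y + g)) := by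
      intro a
      rw [Finset.sum_mul_sum, Finset.sum_mul]
      refine Finset.sum_congr rfl fun x _ => ?_
      rw [Finset.sum_mul]
      refine Finset.sum_congr rfl fun y _ => ?_
      rw [show a * (x - y + g) = a * x + (-a * y) + a * g by ring, AddChar.map_add_eq_mul,
        AddChar.map_add_eq_mul]
      ring
    simp_rw [this]
    rw [Finset.sum_comm]
    push_cast
    rw [Finset.mul_sum]
    refine Finset.sum_congr rfl fun x _ => ?_
    rw [Finset.sum_comm]
    simp_rw [← Finset.mul_sum, hsum]
    rw [Finset.sum_eq_single (x + g)]
    · rw [if_pos (by ring)]; ring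
    · intro y _ hy
      rw [if_neg, mul_zero]
      intro h
      exact hy (by linear_combination -h)
    · simp
  have e2 : ∑ a, (∑ x, (S x : A) * ψ (a * x)) * (∑ y, (S y : A) * ψ (-a * y)) * ψ (a * g) =
      Fintype.card F * (-1) := by
    have h2 : ∀ a, (∑ x, (S x : A) * ψ (a * x)) * (∑ y, (S y : A) * ψ (-a * y)) * ψ (a * g) =
        Fintype.card F * (ψ (a * g) - if a = 0 then 1 else 0) := by
      intro a
      rw [hS, hS, hodd]
      by_cases ha : a = 0
      · subst ha; simp [h0]
      · have h3 : ((S a ^ 2 : ℤ) : A) = 1 := by rw [h1 a ha]; simp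
        rw [if_neg ha]
        push_cast at h3 ⊢
        linear_combination (-(S a) ^ 2 * ψ (a * g)) * hG + (Fintype.card F * ψ (a * g)) * h3
    simp_rw [h2]
    rw [← Finset.mul_sum, Finset.sum_sub_distrib, hsum, if_neg hg]
    simp
  rw [e1] at e2
  have := mul_left_cancel₀ hq e2
  exact_mod_cast this

lemma diffset_count (S : F → ℤ) (h0 : S 0 = 0)
    (h1 : ∀ x, x ≠ 0 → S x ^ 2 = 1) (hodd : ∀ x, S (-x) = - S x)
    (hcorr : ∀ g : F, g ≠ 0 → ∑ x, S x * S (x + g) = -1) (g : F) (hg : g ≠ 0) :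
    4 * (Nat.card {x : F × F // S x.1 = 1 ∧ S x.2 = 1 ∧ x.1 - x.2 = g} : ℤ) = Fintype.card F - 3 := by
  classical
  have e : {x : F × F // S x.1 = 1 ∧ S x.2 = 1 ∧ x.1 - x.2 = g} ≃ {y : F // S y = 1 ∧ S (y + g) = 1} :=
    { toFun := fun x => ⟨x.1.2, x.2.2.1, by
        have := x.2.2.2
        rw [show x.1.2 + g = x.1.1 by linear_combination -this]; exact x.2.1⟩
      invFun := fun y => ⟨(y.1 + g, y.1), y.2.2, y.2.1, by simp⟩
      left_inv := by
        rintro ⟨⟨a, b⟩, ha, hb, hab⟩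
        simp only at hab
        simp [← hab]
      right_inv := by rintro ⟨y, hy⟩; rfl }
  rw [Nat.card_congr e, Nat.card_eq_fintype_card, Fintype.card_subtype, Finset.card_filter]
  push_cast
  rw [Finset.mul_sum]
  have hval : ∀ x, S x ^ 2 = 1 - if x = 0 then 1 else 0 := by
    intro x
    by_cases hx : x = 0
    · subst hx; simp [h0]
    · simp [hx, h1 x hx]
  have h3 : ∀ y, (4 * if S y = 1 ∧ S (y + g) = 1 then (1 : ℤ) else 0) =
      (S y * S (y + g)) + S y * S (y + g) ^ 2 + S y ^ 2 * S (y + g) + S y ^ 2 * S (y + g) ^ 2 := by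
    intro y
    have hc : ∀ z, S z = 0 ∨ S z = 1 ∨ S z = -1 := by
      intro z
      by_cases hz : z = 0
      · subst hz; exact Or.inl h0
      · exact Or.inr ((by have := h1 z hz; rcases Int.isUnit_iff.mp (IsUnit.of_mul_eq_one (S z) (by rw [← sq]; exact this)) with h | h <;> simp [h]))
    rcases hc y with h | h | h <;> rcases hc (y + g) with h' | h' | h' <;> simp [h, h']
  simp_rw [h3]
  have hs0 := odd_sum_zero S hodd
  have hshift : ∑ y, S (y + g) = 0 := by
    rw [← hs0]; exact Fintype.sum_equiv (Equiv.addRight g) _ _ (fun _ => rfl)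
  rw [Finset.sum_add_distrib, Finset.sum_add_distrib, Finset.sum_add_distrib, hcorr g hg]
  have t1 : ∑ y, S y * S (y + g) ^ 2 = S g := by
    have : ∀ y, S y * S (y + g) ^ 2 = S y - if y = -g then S (-g) else 0 := by
      intro y
      rw [hval]
      by_cases hy : y = -g
      · subst hy; simp
      · rw [if_neg hy, if_neg (by intro h; exact hy (by linear_combination h))]; ring
    simp_rw [this]
    rw [Finset.sum_sub_distrib, hs0]; simp [hodd]
  have t2 : ∑ y, S y ^ 2 * S (y + g) = - S g := by
    have : ∀ y, S y ^ 2 * S (y + g) = S (y + g) - if y = 0 then S g else 0 := by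
      intro y
      rw [hval]
      by_cases hy : y = 0
      · subst hy; simp
      · rw [if_neg hy, if_neg hy]; ring
    simp_rw [this]
    rw [Finset.sum_sub_distrib, hshift]; simp
  have t3 : ∑ y, S y ^ 2 * S (y + g) ^ 2 = Fintype.card F - 2 := by
    have : ∀ y, S y ^ 2 * S (y + g) ^ 2 = 1 - (if y = 0 then 1 else 0) - if y = -g then 1 else 0 := by
      intro y
      rw [hval, hval]
      by_cases hy : y = 0
      · subst hy; simp [hg, eq_comm]
      · by_cases hy2 : y = -g
        · subst hy2; simp [hg]
        · rw [if_neg hy, if_neg hy2, if_neg (by intro h; exact hy2 (by linear_combination h))]; ring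
    simp_rw [this]
    rw [Finset.sum_sub_distrib, Finset.sum_sub_distrib]; simp; ring
  rw [t1, t2, t3]; ring
end
end

section
open Finset
set_option linter.unusedSectionVars false

section
variable {F : Type*} [Field F] [Fintype F] [DecidableEq F]
variable {A : Type*} [CommRing A] [IsDomain A] [CharZero A]

variable (F A) in
/-- quadratic character with values in `A` -/
noncomputable def qF : MulChar F A := (quadraticChar F).ringHomComp (Int.castRingHom A)

lemma qF_apply (x : F) : qF F A x = ((quadraticChar F x : ℤ) : A) := rfl

lemma qF_sq (hF : ringChar F ≠ 2) : qF F A * qF F A = 1 := by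
  ext x
  rw [MulChar.mul_apply, qF_apply, ← Int.cast_mul, ← sq, quadraticChar_sq_one x.ne_zero]
  simp

lemma jacobi_dup (hF : ringChar F ≠ 2) (χ : MulChar F A) (hχ : χ ≠ 1) (h4 : χ 2 = 1) :
    jacobiSum χ χ = jacobiSum χ (qF F A) := by
  have h2 : (2 : F) ≠ 0 := Ring.two_ne_zero hF
  have e1 : jacobiSum χ χ = ∑ u : F, χ (1 - u ^ 2) := by
    unfold jacobiSum
    symm
    have hb : Function.Bijective (fun u : F => (1 + u) / 2) := by
      constructor
      · intro a b hab
        simp only at hab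
        field_simp at hab
        exact add_left_cancel hab
      · intro y
        exact ⟨2 * y - 1, by simp only; field_simp; ring⟩
    refine Fintype.sum_bijective _ hb _ _ fun u => ?_
    rw [← map_mul]
    have : χ (1 - u ^ 2) = χ (2 * (2 * ((1 + u) / 2 * (1 - (1 + u) / 2)))) := by
      congr 1; field_simp; ring
    rw [this, map_mul, map_mul, h4, one_mul, one_mul]
  have e2 : ∑ u : F, χ (1 - u ^ 2) = ∑ v : F, χ (1 - v) * ((quadraticChar F v + 1 : ℤ) : A) := by
    have : ∀ v : F, χ (1 - v) * ((quadraticChar F v + 1 : ℤ) : A) =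
        ∑ u : F, if u ^ 2 = v then χ (1 - v) else 0 := by
      intro v
      rw [← quadraticChar_card_sqrts hF v, ← Finset.sum_filter, Finset.sum_const, nsmul_eq_mul, mul_comm]
      congr 1
      simp
    simp_rw [this]
    rw [Finset.sum_comm]
    refine Finset.sum_congr rfl fun u _ => ?_
    simp
  rw [e1, e2]
  push_cast
  simp_rw [mul_add, mul_one]
  rw [Finset.sum_add_distrib]
  have e3 : ∑ v : F, χ (1 - v) = 0 := by
    rw [← MulChar.sum_eq_zero_of_ne_one hχ]
    exact Fintype.sum_equiv (Equiv.subLeft 1) _ _ (fun _ => rfl)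
  rw [e3, add_zero, jacobiSum_comm]
  unfold jacobiSum
  refine Finset.sum_congr rfl fun v _ => ?_
  rw [qF_apply, mul_comm]

lemma gauss_dup (hF : ringChar F ≠ 2) (χ : MulChar F A) (h2 : χ 2 = 1) (hχ : χ ≠ 1) (hχ2 : χ * χ ≠ 1)
    (ψ : AddChar F A) (hψ : ψ.IsPrimitive) :
    gaussSum χ ψ * gaussSum (χ * qF F A) ψ = gaussSum (χ * χ) ψ * gaussSum (qF F A) ψ := by
  have hχη : χ * qF F A ≠ 1 := by
    intro h
    have h3 : χ = qF F A := by
      calc χ = χ * (qF F A * qF F A) := by rw [qF_sq hF, mul_one]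
        _ = qF F A := by rw [← mul_assoc, h, one_mul]
    rw [h3, qF_sq hF] at hχ2
    exact hχ2 rfl
  have j1 := jacobiSum_mul_nontrivial hχ2 ψ
  have j2 := jacobiSum_mul_nontrivial hχη ψ
  rw [jacobi_dup hF χ hχ h2] at j1
  have hq : (Fintype.card F : A) ≠ 0 := by exact_mod_cast Fintype.card_ne_zero
  apply mul_left_cancel₀ (gaussSum_ne_zero_of_nontrivial hq hχ hψ)
  linear_combination gaussSum (χ * χ) ψ * j2 - gaussSum (χ * qF F A) ψ * j1

lemma gauss_qF_sq (hq : Fintype.card F % 4 = 3) (ψ : AddChar F A) (hψ : ψ.IsPrimitive) :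
    gaussSum (qF F A) ψ ^ 2 = -(Fintype.card F : A) := by
  have hF : ringChar F ≠ 2 := by
    intro h
    have := FiniteField.even_card_of_char_two h
    omega
  have hquad : (qF F A).IsQuadratic := (quadraticChar_isQuadratic F).comp _
  have hm1 : quadraticChar F (-1) = -1 := by
    rw [quadraticChar_neg_one_iff_not_isSquare, FiniteField.isSquare_neg_one_iff]
    omega
  have hne : qF F A ≠ 1 := by
    intro h
    have h1 : qF F A (-1) = 1 := by rw [h, MulChar.one_apply isUnit_neg_one]
    rw [qF_apply, hm1] at h1
    have h3 : (2 : A) = 0 := by push_cast at h1; linear_combination -h1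
    exact two_ne_zero h3
  rw [gaussSum_sq hne hquad hψ, qF_apply, hm1]
  push_cast; ring
end
end

section
open Finset
set_option linter.unusedSectionVars false

section
variable {F : Type*} [Field F] [Fintype F] [DecidableEq F]
variable {A : Type*} [CommRing A] [IsDomain A] [CharZero A]
variable (p₁ : ℕ) [Fact p₁.Prime]

open scoped Classical in
/-- discrete log modulo `p₁` with respect to a character -/
noncomputable def lgc (θ : MulChar F A) (ζ₁ : A) (x : F) : ZMod p₁ :=
  if h : ∃ t : ZMod p₁, θ x = ζ₁ ^ t.val then h.choose else 0

lemma lgc_spec (θ : MulChar F A) (hθ : θ ^ p₁ = 1) (ζ₁ : A) (hζ₁ : IsPrimitiveRoot ζ₁ p₁)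
    (x : F) (hx : x ≠ 0) : θ x = ζ₁ ^ (lgc p₁ θ ζ₁ x).val := by
  have h := theta_exists p₁ θ hθ ζ₁ hζ₁ x hx
  unfold lgc
  rw [dif_pos h]
  exact h.choose_spec

lemma lgc_unique (θ : MulChar F A) (hθ : θ ^ p₁ = 1) (ζ₁ : A) (hζ₁ : IsPrimitiveRoot ζ₁ p₁)
    (x : F) (hx : x ≠ 0) (t : ZMod p₁) (ht : θ x = ζ₁ ^ t.val) : lgc p₁ θ ζ₁ x = t := by
  have h := lgc_spec p₁ θ hθ ζ₁ hζ₁ x hx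
  rw [ht] at h
  exact (root_pow_inj p₁ ζ₁ hζ₁ _ _ h).symm

/-- the sign function of the difference set -/
noncomputable def SS (θ : MulChar F A) (ζ₁ : A) (x : F) : ℤ :=
  quadraticChar F x * ((if lgc p₁ θ ζ₁ x = 0 then 1 else 0) - quadraticChar (ZMod p₁) (lgc p₁ θ ζ₁ x))

lemma SS_zero (θ : MulChar F A) (ζ₁ : A) : SS (F := F) p₁ θ ζ₁ 0 = 0 := by simp [SS]

lemma SS_sq (θ : MulChar F A) (ζ₁ : A) (x : F) (hx : x ≠ 0) : SS p₁ θ ζ₁ x ^ 2 = 1 := by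
  unfold SS
  rw [mul_pow, quadraticChar_sq_one hx, one_mul]
  by_cases h : lgc p₁ θ ζ₁ x = 0
  · simp [h]
  · rw [if_neg h, zero_sub, neg_sq, quadraticChar_sq_one h]

lemma quadF_neg_one (hq : Fintype.card F % 4 = 3) : quadraticChar F (-1) = -1 := by
  rw [quadraticChar_neg_one_iff_not_isSquare, FiniteField.isSquare_neg_one_iff]
  omega

lemma SS_odd (hq : Fintype.card F % 4 = 3) (hp₁ : Odd p₁) (θ : MulChar F A) (hθ : θ ^ p₁ = 1) (ζ₁ : A)
    (x : F) : SS p₁ θ ζ₁ (-x) = - SS p₁ θ ζ₁ x := by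
  have h1 : θ (-x) = θ x := by
    rw [← neg_one_mul, map_mul, theta_neg_one θ p₁ hp₁ hθ, one_mul]
  have h2 : quadraticChar F (-x) = - quadraticChar F x := by
    rw [← neg_one_mul, map_mul, quadF_neg_one hq]; ring
  unfold SS lgc
  rw [h1, h2]; ring

lemma chi_two (h8 : p₁ % 8 = 3) : quadraticChar (ZMod p₁) 2 = -1 := by
  rw [quadraticChar_neg_one_iff_not_isSquare, ZMod.exists_sq_eq_two_iff (by omega)]
  omega

lemma SS_fourier (h4 : p₁ % 4 = 3) (θ : MulChar F A) (hθ : θ ^ p₁ = 1) (ζ₁ : A)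
    (hζ₁ : IsPrimitiveRoot ζ₁ p₁) (x : F) :
    (p₁ : A) * (SS p₁ θ ζ₁ x : A) =
      ∑ j : ZMod p₁, (1 + qg p₁ ζ₁ * ((quadraticChar (ZMod p₁) j : ℤ) : A)) * (qF F A * θ ^ j.val) x := by
  by_cases hx : x = 0
  · subst hx; simp [SS_zero, MulChar.map_zero]
  set t := lgc p₁ θ ζ₁ x with ht
  have hs := lgc_spec p₁ θ hθ ζ₁ hζ₁ x hx
  rw [← ht] at hs
  have hu : IsUnit x := isUnit_iff_ne_zero.mpr hx
  have h1 : ∀ j : ZMod p₁, (θ ^ j.val) x = ζ₁ ^ (j.val * t.val) := by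
    intro j
    rw [← hu.unit_spec, MulChar.pow_apply_coe, hu.unit_spec, hs, ← pow_mul, mul_comm]
  simp_rw [MulChar.mul_apply, h1]
  have h2 : ∀ j : ZMod p₁, (1 + qg p₁ ζ₁ * ((quadraticChar (ZMod p₁) j : ℤ) : A)) * (qF F A x * ζ₁ ^ (j.val * t.val)) =
      qF F A x * (ζ₁ ^ (j.val * t.val) + qg p₁ ζ₁ * (((quadraticChar (ZMod p₁) j : ℤ) : A) * ζ₁ ^ (j.val * t.val))) := by
    intro j; ring
  simp_rw [h2]
  rw [← Finset.mul_sum, Finset.sum_add_distrib, ← Finset.mul_sum, qg_shift p₁ h4 ζ₁ hζ₁.pow_eq_one,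
    ZMod.natCast_val, ZMod.cast_id]
  have hg := qg_sq p₁ h4 ζ₁ hζ₁
  have h3 : ∑ j : ZMod p₁, ζ₁ ^ (j.val * t.val) = if t = 0 then (p₁ : A) else 0 := by
    split_ifs with h
    · rw [h]; simp
    · apply sum_root p₁ ζ₁ hζ₁
      intro hd
      apply h
      have := (ZMod.natCast_eq_zero_iff t.val p₁).mpr hd
      rwa [ZMod.natCast_val, ZMod.cast_id] at this
  rw [h3]
  unfold SS
  rw [← ht, qF_apply]
  push_cast
  split_ifs <;> linear_combination (-(quadraticChar F x : A) * (quadraticChar (ZMod p₁) t : A)) * hg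

lemma SS_hat (h8 : p₁ % 8 = 3) (hq : Fintype.card F % 4 = 3) (θ : MulChar F A) (hθ : θ ^ p₁ = 1)
    (hθ1 : θ ≠ 1) (hθ2 : θ 2 = 1) (ζ₁ : A)
    (hζ₁ : IsPrimitiveRoot ζ₁ p₁) (ψ : AddChar F A) (hψ : ψ.IsPrimitive) (c : A) (hc : c ≠ 0)
    (H : ∀ j : ℕ, ¬ p₁ ∣ j → 2 * gaussSum (θ ^ j) ψ =
      c * (1 + ((quadraticChar (ZMod p₁) (j : ZMod p₁) : ℤ) : A) * qg p₁ ζ₁)) (a : F) :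
    ∑ x, (SS p₁ θ ζ₁ x : A) * ψ (a * x) = gaussSum (qF F A) ψ * SS p₁ θ ζ₁ a := by
  have hp₁ : p₁.Prime := Fact.out
  have hF : ringChar F ≠ 2 := by
    intro h
    have := FiniteField.even_card_of_char_two h
    omega
  by_cases ha : a = 0
  · subst ha
    have := odd_sum_zero (SS (F := F) p₁ θ ζ₁) (SS_odd p₁ hq (Nat.odd_iff.mpr (by omega)) θ hθ ζ₁)
    simp only [zero_mul, AddChar.map_zero_eq_one, mul_one, SS_zero]
    rw [← Int.cast_sum, this]; simp
  have hp0 : (p₁ : A) ≠ 0 := by exact_mod_cast hp₁.ne_zero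
  have hord : orderOf θ = p₁ := orderOf_eq_prime hθ hθ1
  -- key identity
  have key : ∀ j : ZMod p₁, (1 + qg p₁ ζ₁ * ((quadraticChar (ZMod p₁) j : ℤ) : A)) * gaussSum (qF F A * θ ^ j.val) ψ =
      gaussSum (qF F A) ψ * (1 - qg p₁ ζ₁ * ((quadraticChar (ZMod p₁) j : ℤ) : A)) := by
    intro j
    by_cases hj : j = 0
    · subst hj; simp
    have hnd : ¬ p₁ ∣ j.val := by
      intro hd
      apply hj
      have := (ZMod.natCast_eq_zero_iff j.val p₁).mpr hd
      rwa [ZMod.natCast_val, ZMod.cast_id] at this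
    have hnd2 : ¬ p₁ ∣ 2 * j.val := by
      intro hd
      rcases hp₁.dvd_mul.mp hd with h | h
      · have := Nat.le_of_dvd (by norm_num) h
        omega
      · exact hnd h
    have h1 : θ ^ j.val ≠ 1 := by
      intro h; have hh := orderOf_dvd_of_pow_eq_one h; rw [hord] at hh; exact hnd hh
    have h2 : θ ^ j.val * θ ^ j.val ≠ 1 := by
      rw [← pow_add, ← two_mul]
      intro h; have hh := orderOf_dvd_of_pow_eq_one h; rw [hord] at hh; exact hnd2 hh
    have hval : (θ ^ j.val) 2 = 1 := by
      rw [MulChar.pow_apply' _ (by rintro h; simp [h] at hnd), hθ2, one_pow]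
    have hd := gauss_dup hF (θ ^ j.val) hval h1 h2 ψ hψ
    rw [← pow_add, ← two_mul] at hd
    have H1 := H _ hnd
    have H2 := H _ hnd2
    rw [ZMod.natCast_val, ZMod.cast_id] at H1
    rw [Nat.cast_mul, ZMod.natCast_val, ZMod.cast_id, map_mul, Nat.cast_ofNat, chi_two p₁ h8] at H2
    rw [mul_comm (θ ^ j.val) (qF F A)] at hd
    apply mul_left_cancel₀ hc
    push_cast at H2
    linear_combination 2 * hd - gaussSum (qF F A * θ ^ j.val) ψ * H1 + gaussSum (qF F A) ψ * H2
  apply mul_left_cancel₀ hp0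
  rw [mul_left_comm, SS_fourier p₁ (by omega) θ hθ ζ₁ hζ₁ a, Finset.mul_sum]
  have e1 : ∀ x, (p₁ : A) * ((SS p₁ θ ζ₁ x : A) * ψ (a * x)) =
      ∑ j : ZMod p₁, (1 + qg p₁ ζ₁ * ((quadraticChar (ZMod p₁) j : ℤ) : A)) * ((qF F A * θ ^ j.val) x * ψ (a * x)) := by
    intro x
    rw [← mul_assoc, SS_fourier p₁ (by omega) θ hθ ζ₁ hζ₁ x, Finset.sum_mul]
    simp_rw [mul_assoc]
  simp_rw [e1]
  rw [Finset.sum_comm]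
  simp_rw [← Finset.mul_sum]
  have e2 : ∀ j : ZMod p₁, ∑ x, (qF F A * θ ^ j.val) x * ψ (a * x) =
      (qF F A * θ ^ (-j).val) a * gaussSum (qF F A * θ ^ j.val) ψ := by
    intro j
    have := gaussSum_mulShift_eq (qF F A * θ ^ j.val) ψ (Units.mk0 a ha)
    simp only [gaussSum, AddChar.mulShift_apply, Units.val_mk0] at this ⊢
    rw [this]
    congr 2
    rw [mul_inv]
    congr 1
    · exact inv_eq_of_mul_eq_one_left (qF_sq hF)
    · rw [inv_eq_iff_mul_eq_one, ← pow_add, ← orderOf_dvd_iff_pow_eq_one, hord,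
        ← ZMod.natCast_eq_zero_iff]
      push_cast
      simp
  simp_rw [e2]
  rw [Finset.mul_sum]
  refine Fintype.sum_equiv (Equiv.neg _) _ _ fun j => ?_
  simp only [Equiv.neg_apply]
  rw [quadChar_neg p₁ (by omega)]
  push_cast
  linear_combination (qF F A * θ ^ (-j).val) a * key j
end
end

section
section
variable (p₁ : ℕ) [Fact p₁.Prime]

lemma cast_eq_iff_two_mul (N : ℕ) (hN : N = 2 * p₁) (h2 : p₁ % 2 = 1) (a b : ℕ) :
    (a : ZMod N) = b ↔ a % 2 = b % 2 ∧ (a : ZMod p₁) = b := by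
  subst hN
  rw [ZMod.natCast_eq_natCast_iff, ZMod.natCast_eq_natCast_iff,
    ← Nat.modEq_and_modEq_iff_modEq_mul]
  · rfl
  · exact (Nat.coprime_two_left).mpr (Nat.odd_iff.mpr h2)

lemma mem_I_iff (h8 : p₁ % 8 = 3) (N : ℕ) (hN : N = 2 * p₁) (p f : ℕ) (hp : p % 2 = 1)
    (h2f : 2 * f + 1 = p₁) (hord : orderOf (p : ZMod p₁) = f) (n : ℕ) :
    ((n : ZMod N) ∈ ({x : ZMod N | ∃ k : ℕ, x = (p : ZMod N) ^ k} ∪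
      {x : ZMod N | ∃ k : ℕ, x = 2 * (p : ZMod N) ^ k} ∪ {0} : Set (ZMod N))) ↔
    (-1 : ℤ) ^ n * ((if (n : ZMod p₁) = 0 then 1 else 0) - quadraticChar (ZMod p₁) (n : ZMod p₁)) = 1 := by
  have hc := cast_eq_iff_two_mul p₁ N hN (by omega)
  have e1 : ∀ k : ℕ, (n : ZMod N) = (p : ZMod N) ^ k ↔ n % 2 = 1 ∧ (n : ZMod p₁) = (p : ZMod p₁) ^ k := by
    intro k
    have := hc n (p ^ k)
    rw [Nat.odd_iff.mp ((Nat.odd_iff.mpr hp).pow)] at this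
    simpa using this
  have e2 : ∀ k : ℕ, (n : ZMod N) = 2 * (p : ZMod N) ^ k ↔ n % 2 = 0 ∧ (n : ZMod p₁) = 2 * (p : ZMod p₁) ^ k := by
    intro k
    have := hc n (2 * p ^ k)
    rw [Nat.mul_mod_right] at this
    simpa using this
  have e3 : (n : ZMod N) = 0 ↔ n % 2 = 0 ∧ (n : ZMod p₁) = 0 := by
    have := hc n 0
    simpa using this
  simp only [Set.mem_union, Set.mem_setOf_eq, Set.mem_singleton_iff, e1, e2, e3]
  have hchi : ∀ k : ℕ, quadraticChar (ZMod p₁) ((p : ZMod p₁) ^ k) = 1 := by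
    intro k; rw [map_pow, chi_p p₁ p f h2f hord, one_pow]
  have h0 : quadraticChar (ZMod p₁) (0 : ZMod p₁) = 0 := by simp
  rcases Nat.mod_two_eq_zero_or_one n with hn | hn
  · rw [(Nat.even_iff.mpr hn).neg_one_pow, one_mul]
    constructor
    · rintro ((⟨k, h, -⟩ | ⟨k, -, h⟩) | ⟨-, h⟩)
      · omega
      · have h1 : quadraticChar (ZMod p₁) (n : ZMod p₁) = -1 := by
          rw [h, map_mul, hchi, chi_two p₁ h8]; norm_num
        rw [h1, if_neg]
        · norm_num
        · intro h'; rw [h', h0] at h1; norm_num at h1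
      · rw [h, h0]; simp
    · intro h
      by_cases hz : (n : ZMod p₁) = 0
      · exact Or.inr ⟨hn, hz⟩
      · rw [if_neg hz] at h
        obtain ⟨m, rfl⟩ : ∃ m, n = 2 * m := ⟨n / 2, by omega⟩
        have h1 : quadraticChar (ZMod p₁) (m : ZMod p₁) = 1 := by
          rw [Nat.cast_mul, map_mul, Nat.cast_ofNat, chi_two p₁ h8] at h
          linarith
        obtain ⟨k, -, hk⟩ := gen_of_order p₁ p f h2f hord _ h1
        exact Or.inl (Or.inr ⟨k, hn, by rw [← hk]; push_cast; rfl⟩)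
  · rw [(Nat.odd_iff.mpr hn).neg_one_pow]
    constructor
    · rintro ((⟨k, -, h⟩ | ⟨k, h, -⟩) | ⟨h, -⟩)
      · have h1 : quadraticChar (ZMod p₁) (n : ZMod p₁) = 1 := by rw [h, hchi]
        rw [h1, if_neg]
        · norm_num
        · intro h'; rw [h', h0] at h1; norm_num at h1
      · omega
      · omega
    · intro h
      by_cases hz : (n : ZMod p₁) = 0
      · rw [if_pos hz, hz, h0] at h; norm_num at h
      · rw [if_neg hz] at h
        obtain ⟨k, -, hk⟩ := gen_of_order p₁ p f h2f hord n (by linarith)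
        exact Or.inl (Or.inl ⟨k, hn, hk⟩)

variable {F : Type*} [Field F] [Fintype F] [DecidableEq F]
variable {A : Type*} [CommRing A] [IsDomain A] [CharZero A]

lemma quadraticChar_gen (hF : ringChar F ≠ 2) (γ : Fˣ) (hγ : ∀ x : Fˣ, x ∈ Subgroup.zpowers γ) :
    quadraticChar F (γ : F) = -1 := by
  rw [quadraticChar_neg_one_iff_not_isSquare]
  rintro ⟨r, hr⟩
  have hsq : ∀ x : F, x ≠ 0 → quadraticChar F x = 1 := by
    intro x hx
    obtain ⟨k, hk⟩ := hγ (Units.mk0 x hx)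
    have hr0 : r ≠ 0 := by rintro rfl; exact γ.ne_zero (by simpa using hr)
    rw [quadraticChar_one_iff_isSquare hx]
    refine ⟨r ^ k, ?_⟩
    have : x = ((γ ^ k : Fˣ) : F) := by
      have := congrArg Units.val hk
      simpa using this.symm
    rw [this, Units.val_zpow_eq_zpow_val, hr, mul_zpow]
  obtain ⟨a, ha⟩ := quadraticChar_exists_neg_one hF
  have ha0 : a ≠ 0 := by rintro rfl; simp at ha
  rw [hsq a ha0] at ha
  norm_num at ha

lemma SS_pow (hF : ringChar F ≠ 2) (θ : MulChar F A) (hθ : θ ^ p₁ = 1) (γ : Fˣ)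
    (hγ : ∀ x : Fˣ, x ∈ Subgroup.zpowers γ) (hζ₁ : IsPrimitiveRoot (θ (γ : F)) p₁) (n : ℕ) :
    SS p₁ θ (θ (γ : F)) ((γ : F) ^ n) =
      (-1 : ℤ) ^ n * ((if (n : ZMod p₁) = 0 then 1 else 0) - quadraticChar (ZMod p₁) (n : ZMod p₁)) := by
  have h1 : lgc p₁ θ (θ (γ : F)) ((γ : F) ^ n) = n := by
    apply lgc_unique p₁ θ hθ _ hζ₁ _ (pow_ne_zero _ γ.ne_zero)
    rw [map_pow, ZMod.val_natCast]
    exact pow_eq_pow_mod n hζ₁.pow_eq_one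
  unfold SS
  rw [h1, map_pow, quadraticChar_gen hF γ hγ]
end
end

section
lemma mem_union_iff (p₁ : ℕ) [Fact p₁.Prime] {F : Type*} [Field F] [Fintype F] [DecidableEq F]
    {A : Type*} [CommRing A] [IsDomain A] [CharZero A]
    (h8 : p₁ % 8 = 3) (N : ℕ) (hN : N = 2 * p₁) (p f : ℕ) (hp : p % 2 = 1)
    (h2f : 2 * f + 1 = p₁) (hord : orderOf (p : ZMod p₁) = f)
    (hF : ringChar F ≠ 2) (θ : MulChar F A) (hθ : θ ^ p₁ = 1) (γ : Fˣ)
    (hγ : ∀ x : Fˣ, x ∈ Subgroup.zpowers γ) (hζ₁ : IsPrimitiveRoot (θ (γ : F)) p₁) (x : F) :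
    x ∈ (⋃ i ∈ ({x : ZMod N | ∃ k : ℕ, x = (p : ZMod N) ^ k} ∪
      {x : ZMod N | ∃ k : ℕ, x = 2 * (p : ZMod N) ^ k} ∪ {0} : Set (ZMod N)),
        cycClass γ N (ZMod.val i)) ↔ SS p₁ θ (θ (γ : F)) x = 1 := by
  have hp₁ : p₁.Prime := Fact.out
  have : NeZero N := ⟨by have := hp₁.pos; omega⟩
  simp only [Set.mem_iUnion]
  constructor
  · rintro ⟨i, hi, k, hk⟩
    obtain ⟨K, hK⟩ : ∃ K : ℕ, γ ^ K = γ ^ k := by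
      have : γ ^ k ∈ Submonoid.powers γ := by
        rw [mem_powers_iff_mem_zpowers]; exact hγ _
      exact this
    have hx : x = (γ : F) ^ (i.val + N * K) := by
      rw [hk, zpow_add, mul_comm (N : ℤ), zpow_mul, ← hK, mul_comm N, pow_add, pow_mul,
        zpow_natCast, zpow_natCast, Units.val_mul, Units.val_pow_eq_pow_val, Units.val_pow_eq_pow_val,
        Units.val_pow_eq_pow_val]
    rw [hx, SS_pow p₁ hF θ hθ γ hγ hζ₁, ← mem_I_iff p₁ h8 N hN p f hp h2f hord]
    simpa using hi
  · intro h
    have hx : x ≠ 0 := by rintro rfl; rw [SS_zero] at h; norm_num at h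
    obtain ⟨n, hn⟩ : ∃ n : ℕ, γ ^ n = Units.mk0 x hx := by
      have : Units.mk0 x hx ∈ Submonoid.powers γ := by
        rw [mem_powers_iff_mem_zpowers]; exact hγ _
      exact this
    have hxn : x = (γ : F) ^ n := by
      have := congrArg Units.val hn
      simpa using this.symm
    rw [hxn, SS_pow p₁ hF θ hθ γ hγ hζ₁, ← mem_I_iff p₁ h8 N hN p f hp h2f hord] at h
    refine ⟨_, h, ((n / N : ℕ) : ℤ), ?_⟩
    rw [ZMod.val_natCast]
    have : ((n % N : ℕ) : ℤ) + (N : ℤ) * ((n / N : ℕ) : ℤ) = (n : ℤ) := by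
      exact_mod_cast Nat.mod_add_div n N
    rw [this, zpow_natCast, hxn]
    simp

lemma skew_of_SS (p₁ : ℕ) [Fact p₁.Prime] {F : Type*} [Field F] [Fintype F] [DecidableEq F]
    {A : Type*} [CommRing A] [IsDomain A] [CharZero A]
    (h8 : p₁ % 8 = 3) (hq : Fintype.card F % 4 = 3) (θ : MulChar F A) (hθ : θ ^ p₁ = 1)
    (hθ1 : θ ≠ 1) (hθ2 : θ 2 = 1) (ζ₁ : A)
    (hζ₁ : IsPrimitiveRoot ζ₁ p₁) (ψ : AddChar F A) (hψ : ψ.IsPrimitive) (c : A) (hc : c ≠ 0)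
    (H : ∀ j : ℕ, ¬ p₁ ∣ j → 2 * gaussSum (θ ^ j) ψ =
      c * (1 + ((quadraticChar (ZMod p₁) (j : ZMod p₁) : ℤ) : A) * qg p₁ ζ₁)) :
    IsSkewHadamardDifferenceSet {x : F | SS p₁ θ ζ₁ x = 1} := by
  have hodd := SS_odd (F := F) p₁ hq (Nat.odd_iff.mpr (by omega)) θ hθ ζ₁
  have hsq := SS_sq (F := F) p₁ θ ζ₁
  have h0 := SS_zero (F := F) p₁ θ ζ₁
  have hcnt := diffset_count _ h0 hsq hodd (autocorr _ h0 hsq hodd ψ hψ _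
    (gauss_qF_sq hq ψ hψ) (SS_hat p₁ h8 hq θ hθ hθ1 hθ2 ζ₁ hζ₁ ψ hψ c hc H))
  refine ⟨?_, ?_, (Fintype.card F - 3) / 4, ?_⟩
  · simp [h0]
  · intro g hg
    simp only [Set.mem_ofPred_eq, hodd]
    rcases (mul_self_eq_one_iff.mp ((sq _).symm.trans (hsq g hg))) with h | h <;> rw [h] <;> norm_num
  · intro g hg
    have := hcnt g hg
    simp only [Set.mem_ofPred_eq]
    omega

end

section
lemma qg_inv (p₁ : ℕ) [Fact p₁.Prime] (h4 : p₁ % 4 = 3) {A : Type*} [CommRing A] [IsDomain A]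
    [CharZero A] (ζ : A) (hζ : ζ ^ p₁ = 1) : qg p₁ (ζ ^ (p₁ - 1)) = - qg p₁ ζ := by
  have hp₁ : p₁.Prime := Fact.out
  have h := qg_shift p₁ h4 ζ hζ (p₁ - 1)
  have hχ2 : quadraticChar (ZMod p₁) ((p₁ - 1 : ℕ) : ZMod p₁) = -1 := by
    rw [Nat.cast_sub hp₁.one_lt.le]
    simp only [CharP.cast_eq_zero, Nat.cast_one, zero_sub]
    rw [quadChar_neg p₁ h4, map_one]
  rw [hχ2] at h
  unfold qg at h ⊢
  simp_rw [← pow_mul, mul_comm (p₁ - 1)]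
  rw [h]; push_cast; ring

lemma charP_of_card (p f : ℕ) (hp : p.Prime) {F : Type*} [Field F] [Fintype F]
    (hcard : Fintype.card F = p ^ f) : CharP F p := by
  obtain ⟨n, h1, h2⟩ := FiniteField.card F (ringChar F)
  have h3 : ringChar F ∣ p := by
    apply h1.dvd_of_dvd_pow (n := f)
    rw [← hcard, h2]
    exact dvd_pow_self _ n.ne_zero
  have h4 : ringChar F = p := (Nat.prime_dvd_prime_iff_eq h1 hp).mp h3
  rw [← h4]
  exact ringChar.charP F

lemma main_core (p₁ : ℕ) [Fact p₁.Prime] (h8 : p₁ % 8 = 3) (N : ℕ) (hN : N = 2 * p₁)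
    (p : ℕ) [Fact p.Prime] (hpmod : p % 4 = 3) (f : ℕ) (h2f : 2 * f + 1 = p₁)
    (hord : orderOf (p : ZMod p₁) = f) (hf1 : 1 < f) {F : Type*} [Field F] [Fintype F]
    (hcard : Fintype.card F = p ^ f) (h : ℕ) (hcl : 1 + p₁ = 4 * p ^ h)
    (hB : |∑ x : ZMod p₁, (x.val : ℤ) * quadraticChar (ZMod p₁) x| ≤ h * p₁) :
    ∃ γ : Fˣ, (∀ x : Fˣ, x ∈ Subgroup.zpowers γ) ∧
      IsSkewHadamardDifferenceSet (⋃ i ∈ ({x : ZMod N | ∃ k : ℕ, x = (p : ZMod N) ^ k} ∪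
      {x : ZMod N | ∃ k : ℕ, x = 2 * (p : ZMod N) ^ k} ∪ {0} : Set (ZMod N)),
        cycClass γ N (ZMod.val i)) := by
  have hp : p.Prime := Fact.out
  have hp₁ : p₁.Prime := Fact.out
  have hchar : CharP F p := charP_of_card p f hp hcard
  letI : Algebra (ZMod p) F := ZMod.algebra F p
  have hp2 : p ≠ 2 := by omega
  have hfodd : Odd f := Nat.odd_iff.mpr (by omega)
  have hq : Fintype.card F % 4 = 3 := by
    rw [hcard, Nat.pow_mod, hpmod]
    obtain ⟨k, rfl⟩ := hfodd
    rw [pow_succ, pow_mul, Nat.mul_mod, Nat.pow_mod]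
    norm_num
  have hF : ringChar F ≠ 2 := by
    intro h
    have := FiniteField.even_card_of_char_two h
    omega
  have hpf : (p : ZMod p₁) ^ f = 1 := by rw [← hord]; exact pow_orderOf_eq_one _
  have hpos : 1 ≤ p ^ f := Nat.one_le_pow _ _ hp.pos
  obtain ⟨M, hM⟩ : p₁ ∣ p ^ f - 1 := by
    rw [← ZMod.natCast_eq_zero_iff, Nat.cast_sub hpos]
    push_cast
    rw [hpf]; simp
  have hcop : p₁.Coprime (p - 1) := by
    rw [hp₁.coprime_iff_not_dvd]
    intro hd
    have h1 : ((p - 1 : ℕ) : ZMod p₁) = 0 := (ZMod.natCast_eq_zero_iff _ _).mpr hd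
    rw [Nat.cast_sub hp.one_lt.le, Nat.cast_one, sub_eq_zero] at h1
    rw [h1, orderOf_one] at hord
    omega
  obtain ⟨A, _, _, _, _, ω, i, ζ, hω, hζ⟩ := exists_local p F
  have hM0 : 0 < M := by
    rcases Nat.eq_zero_or_pos M with h0 | h0
    · rw [h0] at hM; omega
    · exact h0
  set θ := (teichChar ω)⁻¹ ^ M with hθdef
  have hθ : θ ^ p₁ = 1 := by
    rw [hθdef, ← pow_mul, mul_comm, ← hM, ← hcard, teich_pow_card]
  have hθ1 : θ ≠ 1 := teich_pow_ne_one ω i hω M hM0 (by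
    rw [hcard, hM]; have := hp₁.one_lt; nlinarith)
  have hθ2 : θ 2 = 1 := by
    have h2 : (2 : ZMod p) ≠ 0 := by
      intro h0
      have : ((2 : ℕ) : ZMod p) = 0 := by exact_mod_cast h0
      rw [ZMod.natCast_eq_zero_iff] at this
      exact hp2 ((Nat.prime_dvd_prime_iff_eq hp Nat.prime_two).mp this)
    have := char_base_one p p₁ hcop θ hθ hp₁.ne_zero 2 h2
    rwa [show algebraMap (ZMod p) F 2 = 2 from map_ofNat _ 2] at this
  obtain ⟨γ, hγ⟩ := IsCyclic.exists_generator (α := Fˣ)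
  have hroot : ∀ γ : Fˣ, (∀ x : Fˣ, x ∈ Subgroup.zpowers γ) → IsPrimitiveRoot (θ (γ : F)) p₁ := by
    intro γ hγ
    have h1 : θ (γ : F) ^ p₁ = 1 := by
      rw [← MulChar.pow_apply' _ hp₁.ne_zero, hθ, MulChar.one_apply_coe]
    have h2 : θ (γ : F) ≠ 1 := by
      intro h2
      apply hθ1
      ext a
      obtain ⟨n, hn⟩ : ∃ n : ℕ, γ ^ n = a := by
        have : a ∈ Submonoid.powers γ := by
          rw [mem_powers_iff_mem_zpowers]; exact hγ _
        exact this
      rw [← hn, Units.val_pow_eq_pow_val, map_pow, h2, one_pow, map_pow, MulChar.one_apply_coe, one_pow]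
    exact orderOf_eq_prime h1 h2 ▸ IsPrimitiveRoot.orderOf _
  set ψ := trChar p F ζ hζ.pow_eq_one with hψdef
  have hψ : ψ.IsPrimitive := trChar_prim p F ζ hζ
  obtain ⟨m, x, y, hx, hy, hg⟩ := gauss_final p ω i hω p₁ (by omega) hp2 f M h hcard h2f hord hf1 hM
    hcl hB ζ hζ _ (hroot γ hγ)
  rw [← hθdef, ← hψdef] at hg
  have hc : (p : A) ^ m * (x : A) ≠ 0 := by
    apply mul_ne_zero
    · apply pow_ne_zero
      exact_mod_cast hp.ne_zero
    · have : x ≠ 0 := by rintro rfl; norm_num at hx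
      exact_mod_cast this
  have hfin : ∀ γ : Fˣ, (∀ x : Fˣ, x ∈ Subgroup.zpowers γ) →
      (∀ j : ℕ, ¬ p₁ ∣ j → 2 * gaussSum (θ ^ j) ψ = ((p : A) ^ m * (x : A)) *
        (1 + ((quadraticChar (ZMod p₁) (j : ZMod p₁) : ℤ) : A) * qg p₁ (θ (γ : F)))) →
      ∃ γ : Fˣ, (∀ x : Fˣ, x ∈ Subgroup.zpowers γ) ∧
      IsSkewHadamardDifferenceSet (⋃ i ∈ ({x : ZMod N | ∃ k : ℕ, x = (p : ZMod N) ^ k} ∪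
      {x : ZMod N | ∃ k : ℕ, x = 2 * (p : ZMod N) ^ k} ∪ {0} : Set (ZMod N)),
        cycClass γ N (ZMod.val i)) := by
    intro γ hγ H
    refine ⟨γ, hγ, ?_⟩
    have hD : (⋃ i ∈ ({x : ZMod N | ∃ k : ℕ, x = (p : ZMod N) ^ k} ∪
      {x : ZMod N | ∃ k : ℕ, x = 2 * (p : ZMod N) ^ k} ∪ {0} : Set (ZMod N)),
        cycClass γ N (ZMod.val i)) = {x : F | SS p₁ θ (θ (γ : F)) x = 1} := by
      ext z
      exact mem_union_iff p₁ h8 N hN p f (by omega) h2f hord hF θ hθ γ hγ (hroot γ hγ) z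
    rw [hD]
    exact skew_of_SS p₁ h8 hq θ hθ hθ1 hθ2 _ (hroot γ hγ) ψ hψ _ hc H
  have hxx : (x : A) * x = 1 := by have := congrArg (Int.cast : ℤ → A) hx; push_cast at this; rw [← sq]; exact this
  rcases sq_eq_sq_iff_eq_or_eq_neg.mp (hy.trans hx.symm) with hxy | hxy
  · apply hfin γ hγ
    intro j hj
    rw [hg j hj, hxy]; ring
  · apply hfin γ⁻¹ (by simpa using hγ)
    intro j hj
    have e : θ ((γ⁻¹ : Fˣ) : F) = θ (γ : F) ^ (p₁ - 1) := by
      have h1 : θ (γ : F) * θ ((γ⁻¹ : Fˣ) : F) = 1 := by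
        rw [← map_mul, Units.mul_inv, map_one]
      have h2 : θ (γ : F) * θ (γ : F) ^ (p₁ - 1) = 1 := by
        rw [← pow_succ', Nat.sub_add_cancel hp₁.one_lt.le, (hroot γ hγ).pow_eq_one]
      exact mul_left_cancel₀ (left_ne_zero_of_mul_eq_one h1) (h1.trans h2.symm)
    rw [e, qg_inv p₁ (by omega) _ (hroot γ hγ).pow_eq_one, hg j hj, hxy]; push_cast; ring

end

/-- Theorem 1.3(ii) of the paper. -/
theorem statement_6 (p₁ : ℕ) (hp₁ : p₁.Prime) (hp₁mod : p₁ % 8 = 3) (hp₁ne : p₁ ≠ 3)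
    (N : ℕ) (hN : N = 2 * p₁)
    (p : ℕ) (hp : p.Prime) (hpmod : p % 4 = 3)
    (f : ℕ) (hf : f = orderOf ((p : ZMod N))) (hford : 2 * f = Nat.totient N)
    (F : Type*) [Field F] [Fintype F] (hcard : Fintype.card F = p ^ f)
    -- `I = ⟨p⟩ ∪ 2⟨p⟩ ∪ {0} ⊆ Z_N`, where `⟨p⟩` is the subgroup of `Z_N^*` generated by `p`
    (I : Set (ZMod N))
    (hI : I = {x : ZMod N | ∃ k : ℕ, x = (p : ZMod N) ^ k} ∪
      {x : ZMod N | ∃ k : ℕ, x = 2 * (p : ZMod N) ^ k} ∪ {0})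
    -- `h` is the class number of `ℚ(√-p₁)`
    (K : Type*) [Field K] [NumberField K] (α : K)
    (hα : α ^ 2 = -(p₁ : K)) (hKα : Algebra.adjoin ℚ {α} = ⊤)
    (h : ℕ) (hh : h = NumberField.classNumber K)
    (hcl : 1 + p₁ = 4 * p ^ h) :
    ∃ γ : Fˣ, (∀ x : Fˣ, x ∈ Subgroup.zpowers γ) ∧
      IsSkewHadamardDifferenceSet (⋃ i ∈ I, cycClass γ N (ZMod.val i)) := by
  haveI : Fact p₁.Prime := ⟨hp₁⟩
  haveI : Fact p.Prime := ⟨hp⟩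
  have h2f : 2 * f + 1 = p₁ := by
    rw [hford, hN, Nat.totient_mul ((Nat.coprime_two_left).mpr (Nat.odd_iff.mpr (by omega))),
      Nat.totient_two, one_mul, Nat.totient_prime hp₁]
    have := hp₁.pos
    omega
  have hord : orderOf (p : ZMod p₁) = f := by
    rw [hf, orderOf_eq_orderOf_iff]
    intro n
    have hc := cast_eq_iff_two_mul p₁ N hN (by omega) (p ^ n) 1
    rw [Nat.odd_iff.mp ((Nat.odd_iff.mpr (show p % 2 = 1 by omega)).pow)] at hc
    push_cast at hc
    rw [hc]
    simp
  have hf1 : 1 < f := by omega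
  rw [hI]
  refine main_core p₁ hp₁mod N hN p hpmod f h2f hord hf1 hcard h hcl ?_
  rw [hh]
  exact class_bound p₁ hp₁mod α hα hKα
end

section
/- Let N = p₁^m p₂^n, where m, n ≥ 1 and p₁, p₂ are primes with p₁ ≡ 1 (mod 4) and p₂ ≡ 3 (mod 4). Let p be a prime with ord_{p₁^m}(p) = φ(p₁^m), ord_{p₂^n}(p) = φ(p₂^n), and f := ord_N(p) = φ(N)/2. Let q = p^f, let γ be a primitive element of F_q, let C_i = γ^i⟨γ^N⟩ be the cyclotomic classes of order N, and let D = ⋃_{i=0}^{p₁^{m−1}−1} ⋃_{j=0}^{p₂^{n−1}−1} C_{p₂^n i + p₁^m j}. Then the set {Σ_{x∈D} ψ(γ^a x) : a = 0, 1, …, q−2} of character sums has at most five elements. -/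
open scoped Classical

/-- The canonical additive character `ψ(x) = exp(2πi·Tr_{q/p}(x)/p)` of a finite field of
characteristic `p`. -/
noncomputable def psi (p : ℕ) {F : Type*} [Field F] [Fintype F] [Algebra (ZMod p) F]
    (x : F) : ℂ :=
  Complex.exp (2 * Real.pi * Complex.I * ((Algebra.trace (ZMod p) F x).val : ℂ) / p)


lemma aux_two_dim {R₁ R₂ Q₁ Q₂ ι₁ ι₂ : Type*} [Fintype ι₁] [Fintype ι₂] [Zero Q₁] [Zero Q₂]
    (π₁ : R₁ → Q₁) (π₂ : R₂ → Q₂) (f : R₁ → R₂ → ℂ)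
    (h1 : ∀ w w' y, π₁ w = π₁ w' → π₁ w ≠ 0 → f w y = f w' y)
    (h2 : ∀ x w w', π₂ w = π₂ w' → π₂ w ≠ 0 → f x w = f x w')
    (s₁ t₁ : ι₁ → R₁) (s₂ t₂ : ι₂ → R₂)
    (hs₁ : Function.Bijective (fun i => π₁ (s₁ i))) (ht₁ : Function.Bijective (fun i => π₁ (t₁ i)))
    (hs₂ : Function.Bijective (fun i => π₂ (s₂ i))) (ht₂ : Function.Bijective (fun i => π₂ (t₂ i)))
    (e₁ : ∀ i k, π₁ (s₁ i) = 0 → π₁ (t₁ k) = 0 → s₁ i = t₁ k)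
    (e₂ : ∀ i k, π₂ (s₂ i) = 0 → π₂ (t₂ k) = 0 → s₂ i = t₂ k) :
    ∑ i, ∑ j, f (s₁ i) (s₂ j) = ∑ i, ∑ j, f (t₁ i) (t₂ j) := by
  let E₁ := (Equiv.ofBijective _ hs₁).trans (Equiv.ofBijective _ ht₁).symm
  let E₂ := (Equiv.ofBijective _ hs₂).trans (Equiv.ofBijective _ ht₂).symm
  have hE₁ : ∀ i, π₁ (t₁ (E₁ i)) = π₁ (s₁ i) := fun i =>
    (Equiv.ofBijective _ ht₁).apply_symm_apply (π₁ (s₁ i))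
  have hE₂ : ∀ i, π₂ (t₂ (E₂ i)) = π₂ (s₂ i) := fun i =>
    (Equiv.ofBijective _ ht₂).apply_symm_apply (π₂ (s₂ i))
  rw [← Equiv.sum_comp E₁ (fun i => ∑ j, f (t₁ i) (t₂ j))]
  refine Finset.sum_congr rfl fun i _ => ?_
  rw [← Equiv.sum_comp E₂ (fun j => f (t₁ (E₁ i)) (t₂ j))]
  refine Finset.sum_congr rfl fun j _ => ?_
  have a1 : f (s₁ i) (s₂ j) = f (t₁ (E₁ i)) (s₂ j) := by
    by_cases h : π₁ (s₁ i) = 0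
    · rw [e₁ i (E₁ i) h ((hE₁ i).trans h)]
    · exact h1 _ _ _ (hE₁ i).symm h
  have a2 : f (t₁ (E₁ i)) (s₂ j) = f (t₁ (E₁ i)) (t₂ (E₂ j)) := by
    by_cases h : π₂ (s₂ j) = 0
    · rw [e₂ j (E₂ j) h ((hE₂ j).trans h)]
    · exact h2 _ _ _ (hE₂ j).symm h
  rw [a1, a2]

/-- reduction map -/
def aux_pi (r k : ℕ) : ZMod (r ^ k) →+* ZMod (r ^ (k - 1)) :=
  ZMod.castHom (pow_dvd_pow r (Nat.sub_le k 1)) _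

lemma aux_unit_coprime {r k c : ℕ} (hr : r.Prime) (hc : ¬ r ∣ c) : IsUnit (c : ZMod (r ^ k)) := by
  rw [ZMod.isUnit_iff_coprime]
  exact (((Nat.Prime.coprime_iff_not_dvd hr).2 hc).pow_left k).symm

lemma aux_bij {r k c : ℕ} (hr : r.Prime) (hc : ¬ r ∣ c) (u : (ZMod (r ^ k))ˣ) (x : ZMod (r ^ k)) :
    Function.Bijective (fun i : Fin (r ^ (k - 1)) =>
      aux_pi r k ((u : ZMod (r ^ k)) * (x + (c : ZMod (r ^ k)) * ((i : ℕ) : ZMod (r ^ k))))) := by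
  have : Fact r.Prime := ⟨hr⟩
  have : NeZero (r ^ (k - 1)) := ⟨pow_ne_zero _ hr.ne_zero⟩
  rw [Fintype.bijective_iff_injective_and_card]
  refine ⟨?_, by simp [ZMod.card]⟩
  intro i j hij
  simp only [map_mul, map_add, map_natCast] at hij
  have hu : IsUnit (aux_pi r k u) := u.isUnit.map _
  have h1 := add_left_cancel (hu.mul_left_cancel hij)
  have h2 := (aux_unit_coprime (k := k - 1) hr hc).mul_left_cancel h1
  rw [ZMod.natCast_eq_natCast_iff'] at h2
  rw [Nat.mod_eq_of_lt i.2, Nat.mod_eq_of_lt j.2] at h2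
  exact Fin.ext h2

lemma aux_pi_zero {r k : ℕ} (hr : r.Prime) (hk : 1 ≤ k) (b : ZMod (r ^ k)) (hb : aux_pi r k b = 0) :
    b = 0 ∨ ∃ w : (ZMod (r ^ k))ˣ, b = ((r ^ (k - 1) : ℕ) : ZMod (r ^ k)) * w := by
  have : NeZero (r ^ k) := ⟨pow_ne_zero _ hr.ne_zero⟩
  obtain ⟨B, rfl⟩ := ZMod.natCast_zmod_surjective b
  rw [map_natCast, ZMod.natCast_eq_zero_iff] at hb
  obtain ⟨c, rfl⟩ := hb
  by_cases hc : r ∣ c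
  · left
    obtain ⟨d, rfl⟩ := hc
    rw [ZMod.natCast_eq_zero_iff]
    refine ⟨d, ?_⟩
    obtain ⟨l, rfl⟩ : ∃ l, k = l + 1 := ⟨k - 1, by omega⟩
    simp [pow_succ]; ring
  · right
    exact ⟨(aux_unit_coprime hr hc).unit, by simp⟩

lemma aux_pi_pow {r k : ℕ} (w : ZMod (r ^ k)) :
    aux_pi r k (((r ^ (k - 1) : ℕ) : ZMod (r ^ k)) * w) = 0 := by
  rw [map_mul, map_natCast, ZMod.natCast_self, zero_mul]

lemma aux_ring {R : Type*} [CommRing R] {r i d : ℕ} (hr : r ≠ 0) (hr2 : r % 2 = 1)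
    (h5 : (r : R) ^ (i + 1 + d + 1) = 0) (C : Rˣ) (w z w' : R) (hw : w = (r : R) ^ i * C)
    (hw' : w' = (r : R) ^ i * C + (r : R) ^ (i + 1 + d) * z) :
    ∃ v : Rˣ, w' = ((v ^ 2 : Rˣ) : R) * w := by
  let u : R := 1 + r * (r ^ d * z * ((C⁻¹ : Rˣ) : R))
  have hu : w' = u * w := by
    rw [hw', hw]
    have hinv : ((C⁻¹ : Rˣ) : R) * C = 1 := by simp
    simp only [u]
    linear_combination (- (r : R) ^ (i + 1 + d) * z) * hinv
  have hpow : u ^ (r ^ (i + 1 + d)) = 1 := by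
    have h3 : (r : R) ∣ u - 1 := ⟨r ^ d * z * ((C⁻¹ : Rˣ) : R), by simp only [u]; ring⟩
    have h4 := dvd_sub_pow_of_dvd_sub h3 (i + 1 + d)
    rw [h5, zero_dvd_iff, one_pow] at h4
    exact sub_eq_zero.1 h4
  have huu : IsUnit u := IsUnit.of_pow_eq_one hpow (pow_ne_zero _ hr)
  obtain ⟨U, hU⟩ := huu
  have hUp : U ^ (r ^ (i + 1 + d)) = 1 := by ext; simpa [hU] using hpow
  have hodd : (r ^ (i + 1 + d)) % 2 = 1 := by rw [Nat.pow_mod, hr2]; simp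
  refine ⟨U ^ ((r ^ (i + 1 + d) + 1) / 2), ?_⟩
  rw [← pow_mul, show (r ^ (i + 1 + d) + 1) / 2 * 2 = r ^ (i + 1 + d) + 1 by omega, pow_succ, hUp,
    one_mul, hU]
  exact hu

/-- two elements with the same nonzero reduction differ by a unit square of the form `(v, ..)`. -/
lemma aux_same {r k : ℕ} (hr : r.Prime) (hr2 : r % 2 = 1) (hk : 1 ≤ k) (w w' : ZMod (r ^ k))
    (h : aux_pi r k w = aux_pi r k w') (h0 : aux_pi r k w ≠ 0) :
    ∃ v : (ZMod (r ^ k))ˣ, w' = ((v ^ 2 : (ZMod (r ^ k))ˣ) : ZMod (r ^ k)) * w := by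
  have : NeZero (r ^ k) := ⟨pow_ne_zero _ hr.ne_zero⟩
  obtain ⟨l, rfl⟩ : ∃ l, k = l + 1 := ⟨k - 1, by omega⟩
  -- difference
  have hd : ∃ z : ZMod (r ^ (l + 1)), w' - w = (r : ZMod (r ^ (l + 1))) ^ l * z := by
    have h1 : aux_pi r (l + 1) (w' - w) = 0 := by rw [map_sub, h, sub_self]
    rcases aux_pi_zero hr (by omega) _ h1 with h2 | ⟨z, h2⟩
    · exact ⟨0, by simpa using h2⟩
    · exact ⟨z, by simpa using h2⟩
  obtain ⟨z, hz⟩ := hd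
  obtain ⟨W, rfl⟩ := ZMod.natCast_zmod_surjective w
  rw [map_natCast, Ne, ZMod.natCast_eq_zero_iff] at h0
  have hW0 : W ≠ 0 := by rintro rfl; simp at h0
  obtain ⟨i, c, hc, rfl⟩ := Nat.exists_eq_pow_mul_and_not_dvd hW0 r hr.one_lt.ne'
  have hil : i < l := by
    by_contra hcon
    exact h0 (dvd_mul_of_dvd_left (pow_dvd_pow r (by simp; omega)) c)
  obtain ⟨d, rfl⟩ : ∃ d, l = i + 1 + d := ⟨l - i - 1, by omega⟩
  obtain ⟨C, hC⟩ := aux_unit_coprime (k := i + 1 + d + 1) hr hc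
  have h5 : ((r : ZMod (r ^ (i + 1 + d + 1))) ^ (i + 1 + d + 1)) = 0 := by
    have := ZMod.natCast_self (r ^ (i + 1 + d + 1))
    push_cast at this
    exact this
  refine aux_ring hr.ne_zero hr2 h5 C _ z _ ?_ ?_
  · rw [hC]; push_cast; rfl
  · push_cast at hz
    rw [hC, ← hz]
    ring

lemma aux_const {α : Type*} (g : α → ℂ) (P : α → Prop) (h : ∀ a a', P a → P a' → g a = g a') :
    ∃ z, ∀ a, P a → g a = z := by
  by_cases hP : ∃ a, P a
  · obtain ⟨a, ha⟩ := hP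
    exact ⟨g a, fun b hb => h _ _ hb ha⟩
  · exact ⟨0, fun a ha => (hP ⟨a, ha⟩).elim⟩

theorem aux_comb {p₁ p₂ m n c₁ c₂ : ℕ} (hp₁ : p₁.Prime) (hp₂ : p₂.Prime)
    (ho₁ : p₁ % 2 = 1) (ho₂ : p₂ % 2 = 1) (hm : 1 ≤ m) (hn : 1 ≤ n)
    (hc₁ : ¬ p₁ ∣ c₁) (hc₂ : ¬ p₂ ∣ c₂)
    (f : ZMod (p₁ ^ m) → ZMod (p₂ ^ n) → ℂ)
    (H : Subgroup ((ZMod (p₁ ^ m))ˣ × (ZMod (p₂ ^ n))ˣ)) (hH : H.index = 2)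
    (hH₁ : ∀ u, ∃ v, (u, v) ∈ H) (hH₂ : ∀ v, ∃ u, (u, v) ∈ H)
    (hf : ∀ g ∈ H, ∀ x y, f (g.1 * x) (g.2 * y) = f x y) :
    ∃ z₁ z₂ z₃ z₄ z₅ : ℂ, ∀ x y,
      (∑ i : Fin (p₁ ^ (m - 1)), ∑ j : Fin (p₂ ^ (n - 1)),
        f (x + c₁ * ((i : ℕ) : ZMod (p₁ ^ m))) (y + c₂ * ((j : ℕ) : ZMod (p₂ ^ n)))) ∈
        ({z₁, z₂, z₃, z₄, z₅} : Set ℂ) := by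
  have hsq : ∀ g : (ZMod (p₁ ^ m))ˣ × (ZMod (p₂ ^ n))ˣ, g ^ 2 ∈ H := fun g =>
    Subgroup.sq_mem_of_index_two hH g
  have h1 : ∀ w w' y, aux_pi p₁ m w = aux_pi p₁ m w' → aux_pi p₁ m w ≠ 0 → f w y = f w' y := by
    intro w w' y h h0
    obtain ⟨v, rfl⟩ := aux_same hp₁ ho₁ hm w w' h h0
    have := hf _ (hsq (v, 1)) w y
    simpa using this.symm
  have h2 : ∀ x w w', aux_pi p₂ n w = aux_pi p₂ n w' → aux_pi p₂ n w ≠ 0 → f x w = f x w' := by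
    intro x w w' h h0
    obtain ⟨v, rfl⟩ := aux_same hp₂ ho₂ hn w w' h h0
    have := hf _ (hsq (1, v)) x w
    simpa using this.symm
  let G : ZMod (p₁ ^ m) × ZMod (p₂ ^ n) → ℂ := fun a =>
    ∑ i : Fin (p₁ ^ (m - 1)), ∑ j : Fin (p₂ ^ (n - 1)),
        f (a.1 + c₁ * ((i : ℕ) : ZMod (p₁ ^ m))) (a.2 + c₂ * ((j : ℕ) : ZMod (p₂ ^ n)))
  let r₁ : ZMod (p₁ ^ m) → ZMod (p₁ ^ m) → Prop := fun x b =>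
    aux_pi p₁ m b = 0 ∧ ∃ i : Fin (p₁ ^ (m - 1)), x + c₁ * ((i : ℕ) : ZMod (p₁ ^ m)) = b
  let r₂ : ZMod (p₂ ^ n) → ZMod (p₂ ^ n) → Prop := fun x b =>
    aux_pi p₂ n b = 0 ∧ ∃ i : Fin (p₂ ^ (n - 1)), x + c₂ * ((i : ℕ) : ZMod (p₂ ^ n)) = b
  have gen : ∀ {r k c : ℕ} (hr : r.Prime) (hc : ¬ r ∣ c) (x b x' b' : ZMod (r ^ k))
      (u : (ZMod (r ^ k))ˣ)
      (_ : aux_pi r k b = 0 ∧ ∃ i : Fin (r ^ (k - 1)), x + c * ((i : ℕ) : ZMod (r ^ k)) = b)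
      (_ : aux_pi r k b' = 0 ∧ ∃ i : Fin (r ^ (k - 1)), x' + c * ((i : ℕ) : ZMod (r ^ k)) = b')
      (_ : b' = u * b),
      ∀ i j : Fin (r ^ (k - 1)), aux_pi r k (u * (x + c * ((i : ℕ) : ZMod (r ^ k)))) = 0 →
        aux_pi r k (x' + c * ((j : ℕ) : ZMod (r ^ k))) = 0 →
        u * (x + c * ((i : ℕ) : ZMod (r ^ k))) = x' + c * ((j : ℕ) : ZMod (r ^ k)) := by
    intro r k c hr hc x b x' b' u hb hb' hbb i j hi hj
    obtain ⟨hb0, i0, hi0⟩ := hb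
    obtain ⟨hb0', j0, hj0⟩ := hb'
    have e1 : i = i0 := by
      apply (aux_bij hr hc u x).injective
      simp only
      rw [hi, hi0, map_mul, hb0, mul_zero]
    have e2 : j = j0 := by
      apply (aux_bij hr hc 1 x').injective
      simp only [Units.val_one, one_mul]
      rw [hj, hj0, hb0']
    rw [e1, e2, hi0, hj0, hbb]
  have core : ∀ (a a' : ZMod (p₁ ^ m) × ZMod (p₂ ^ n)) (b₁ b₁' : ZMod (p₁ ^ m))
      (b₂ b₂' : ZMod (p₂ ^ n)) (u : (ZMod (p₁ ^ m))ˣ) (v : (ZMod (p₂ ^ n))ˣ), (u, v) ∈ H →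
      r₁ a.1 b₁ → r₂ a.2 b₂ → r₁ a'.1 b₁' → r₂ a'.2 b₂' → b₁' = u * b₁ → b₂' = v * b₂ →
      G a = G a' := by
    intro a a' b₁ b₁' b₂ b₂' u v huv k1 k2 k1' k2' e1 e2
    have := aux_two_dim (aux_pi p₁ m) (aux_pi p₂ n) f h1 h2
      (fun i : Fin (p₁ ^ (m - 1)) => u * (a.1 + c₁ * ((i : ℕ) : ZMod (p₁ ^ m))))
      (fun i : Fin (p₁ ^ (m - 1)) => (a'.1 + c₁ * ((i : ℕ) : ZMod (p₁ ^ m))))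
      (fun i : Fin (p₂ ^ (n - 1)) => v * (a.2 + c₂ * ((i : ℕ) : ZMod (p₂ ^ n))))
      (fun i : Fin (p₂ ^ (n - 1)) => (a'.2 + c₂ * ((i : ℕ) : ZMod (p₂ ^ n))))
      (aux_bij hp₁ hc₁ u a.1) (by simpa using aux_bij hp₁ hc₁ 1 a'.1)
      (aux_bij hp₂ hc₂ v a.2) (by simpa using aux_bij hp₂ hc₂ 1 a'.2)
      (gen hp₁ hc₁ _ _ _ _ u k1 k1' e1) (gen hp₂ hc₂ _ _ _ _ v k2 k2' e2)
    simp only [G]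
    rw [← this]
    refine Finset.sum_congr rfl fun i _ => Finset.sum_congr rfl fun j _ => ?_
    exact (hf _ huv _ _).symm
  let q₁ : ZMod (p₁ ^ m) := ((p₁ ^ (m - 1) : ℕ) : ZMod (p₁ ^ m))
  let q₂ : ZMod (p₂ ^ n) := ((p₂ ^ (n - 1) : ℕ) : ZMod (p₂ ^ n))
  obtain ⟨z₁, hz₁⟩ := aux_const G (fun a => r₁ a.1 0 ∧ r₂ a.2 0) (by
    rintro a a' ⟨h1, h2⟩ ⟨h3, h4⟩
    exact core a a' 0 0 0 0 1 1 H.one_mem h1 h2 h3 h4 (by simp) (by simp))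
  obtain ⟨z₂, hz₂⟩ := aux_const G
    (fun a => r₁ a.1 0 ∧ ∃ w : (ZMod (p₂ ^ n))ˣ, r₂ a.2 (q₂ * w)) (by
    rintro a a' ⟨h1, w, h2⟩ ⟨h3, w', h4⟩
    obtain ⟨u, hu⟩ := hH₂ (w' * w⁻¹)
    exact core a a' _ _ _ _ u _ hu h1 h2 h3 h4 (by simp) (by
      rw [mul_left_comm, ← Units.val_mul]; simp))
  obtain ⟨z₃, hz₃⟩ := aux_const G
    (fun a => (∃ w : (ZMod (p₁ ^ m))ˣ, r₁ a.1 (q₁ * w)) ∧ r₂ a.2 0) (by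
    rintro a a' ⟨⟨w, h1⟩, h2⟩ ⟨⟨w', h3⟩, h4⟩
    obtain ⟨v, hv⟩ := hH₁ (w' * w⁻¹)
    exact core a a' _ _ _ _ _ v hv h1 h2 h3 h4 (by
      rw [mul_left_comm, ← Units.val_mul]; simp) (by simp))
  obtain ⟨z₄, hz₄⟩ := aux_const G
    (fun a => ∃ (w₁ : (ZMod (p₁ ^ m))ˣ) (w₂ : (ZMod (p₂ ^ n))ˣ), r₁ a.1 (q₁ * w₁) ∧
      r₂ a.2 (q₂ * w₂) ∧ (w₁, w₂) ∈ H) (by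
    rintro a a' ⟨w₁, w₂, h1, h2, hw⟩ ⟨w₁', w₂', h3, h4, hw'⟩
    have hmem := H.mul_mem hw' (H.inv_mem hw)
    exact core a a' _ _ _ _ _ _ hmem h1 h2 h3 h4 (by
      rw [mul_left_comm, ← Units.val_mul]; simp) (by
      rw [mul_left_comm, ← Units.val_mul]; simp))
  obtain ⟨z₅, hz₅⟩ := aux_const G
    (fun a => ∃ (w₁ : (ZMod (p₁ ^ m))ˣ) (w₂ : (ZMod (p₂ ^ n))ˣ), r₁ a.1 (q₁ * w₁) ∧
      r₂ a.2 (q₂ * w₂) ∧ (w₁, w₂) ∉ H) (by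
    rintro a a' ⟨w₁, w₂, h1, h2, hw⟩ ⟨w₁', w₂', h3, h4, hw'⟩
    have hmem : (w₁', w₂') * (w₁, w₂)⁻¹ ∈ H := by
      rw [Subgroup.mul_mem_iff_of_index_two hH, H.inv_mem_iff]
      tauto
    exact core a a' _ _ _ _ _ _ hmem h1 h2 h3 h4 (by
      rw [mul_left_comm, ← Units.val_mul]; simp) (by
      rw [mul_left_comm, ← Units.val_mul]; simp))
  refine ⟨z₁, z₂, z₃, z₄, z₅, fun x y => ?_⟩
  change G (x, y) ∈ _
  have ex₁ : r₁ x 0 ∨ ∃ w : (ZMod (p₁ ^ m))ˣ, r₁ x (q₁ * w) := by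
    obtain ⟨i, hi⟩ := (aux_bij hp₁ hc₁ 1 x).surjective 0
    simp only [Units.val_one, one_mul] at hi
    rcases aux_pi_zero hp₁ hm _ hi with h | ⟨w, h⟩
    · exact Or.inl ⟨map_zero _, i, h⟩
    · exact Or.inr ⟨w, aux_pi_pow _, i, h⟩
  have ex₂ : r₂ y 0 ∨ ∃ w : (ZMod (p₂ ^ n))ˣ, r₂ y (q₂ * w) := by
    obtain ⟨i, hi⟩ := (aux_bij hp₂ hc₂ 1 y).surjective 0
    simp only [Units.val_one, one_mul] at hi
    rcases aux_pi_zero hp₂ hn _ hi with h | ⟨w, h⟩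
    · exact Or.inl ⟨map_zero _, i, h⟩
    · exact Or.inr ⟨w, aux_pi_pow _, i, h⟩
  rcases ex₁ with k1 | ⟨w₁, k1⟩ <;> rcases ex₂ with k2 | ⟨w₂, k2⟩
  · rw [hz₁ (x, y) ⟨k1, k2⟩]; simp
  · rw [hz₂ (x, y) ⟨k1, w₂, k2⟩]; simp
  · rw [hz₃ (x, y) ⟨⟨w₁, k1⟩, k2⟩]; simp
  · by_cases hw : (w₁, w₂) ∈ H
    · rw [hz₄ (x, y) ⟨w₁, w₂, k1, k2, hw⟩]; simp
    · rw [hz₅ (x, y) ⟨w₁, w₂, k1, k2, hw⟩]; simp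

/-- cyclotomic class indexed by a residue -/
def aux_cls {F : Type*} [Field F] (γ : Fˣ) (N : ℕ) (k : ZMod N) : Set F :=
  {x : F | ∃ l : ℤ, (l : ZMod N) = k ∧ x = ((γ ^ l : Fˣ) : F)}

lemma aux_cls_eq {F : Type*} [Field F] (γ : Fˣ) (N i : ℕ) :
    cycClass γ N i = aux_cls γ N (i : ZMod N) := by
  ext x
  constructor
  · rintro ⟨k, hk⟩
    exact ⟨_, by simp, hk⟩
  · rintro ⟨l, hl, hx⟩
    have h : ((l - i : ℤ) : ZMod N) = 0 := by push_cast; rw [hl, sub_self]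
    rw [ZMod.intCast_zmod_eq_zero_iff_dvd] at h
    obtain ⟨k, hk⟩ := h
    exact ⟨k, by rw [hx, ← hk]; congr 2; ring⟩

section
variable {F : Type*} [Field F] [Fintype F] (γ : Fˣ) (N : ℕ)

lemma aux_log (hN : (N : ℤ) ∣ orderOf γ) {l l' : ℤ} (h : γ ^ l = γ ^ l') :
    (l : ZMod N) = (l' : ZMod N) := by
  rw [zpow_eq_zpow_iff_modEq] at h
  rw [ZMod.intCast_eq_intCast_iff]
  exact h.of_dvd hN

lemma aux_cls_disj (hN : (N : ℤ) ∣ orderOf γ) {k k' : ZMod N} (h : k ≠ k') :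
    Disjoint (aux_cls γ N k) (aux_cls γ N k') := by
  rw [Set.disjoint_left]
  rintro x ⟨l, hl, hx⟩ ⟨l', hl', hx'⟩
  apply h
  rw [← hl, ← hl']
  apply aux_log γ N hN
  ext
  rw [← hx, ← hx']

/-- Gauss period -/
noncomputable def aux_eta (p : ℕ) [Algebra (ZMod p) F] (k : ZMod N) : ℂ :=
  ∑ᶠ x ∈ aux_cls γ N k, psi p x

lemma aux_shift (p : ℕ) [Algebra (ZMod p) F] (a : ℕ) (k : ZMod N) :
    ∑ᶠ x ∈ aux_cls γ N k, psi p ((γ : F) ^ a * x) = aux_eta γ N p (a + k) := by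
  apply finsum_mem_eq_of_bijOn (fun x => (γ : F) ^ a * x)
  · refine ⟨?_, ?_, ?_⟩
    · rintro x ⟨l, hl, rfl⟩
      refine ⟨a + l, by push_cast; rw [hl], ?_⟩
      rw [zpow_add]; simp
    · intro x _ y _ h
      exact mul_left_cancel₀ (pow_ne_zero _ γ.ne_zero) h
    · rintro x ⟨l, hl, rfl⟩
      refine ⟨((γ ^ (l - a) : Fˣ) : F), ⟨l - a, by push_cast; rw [hl]; ring, rfl⟩, ?_⟩
      simp only
      rw [← Units.val_pow_eq_pow_val, ← Units.val_mul, ← zpow_natCast, ← zpow_add]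
      congr 2; ring
  · intro x _; rfl

lemma aux_frob (p : ℕ) (hp : p.Prime) [Algebra (ZMod p) F] (hN : (N : ℤ) ∣ orderOf γ)
    (hγ : ∀ x : Fˣ, x ∈ Subgroup.zpowers γ)
    (hu : IsUnit (p : ZMod N)) (k : ZMod N) :
    aux_eta γ N p k = aux_eta γ N p (p * k) := by
  have : Fact p.Prime := ⟨hp⟩
  let φ := FiniteField.frobeniusAlgEquivOfAlgebraic (ZMod p) F
  have hφ : ∀ x, φ x = x ^ p := fun x => by
    simp [φ, ZMod.card]
  apply finsum_mem_eq_of_bijOn φ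
  · refine ⟨?_, φ.injective.injOn, ?_⟩
    · rintro x ⟨l, hl, rfl⟩
      refine ⟨p * l, by push_cast; rw [hl], ?_⟩
      rw [hφ, mul_comm, zpow_mul]; simp
    · rintro x ⟨l, hl, rfl⟩
      obtain ⟨y, hy⟩ := φ.surjective ((γ ^ l : Fˣ) : F)
      refine ⟨y, ?_, hy⟩
      have hy0 : y ≠ 0 := by
        rintro rfl
        rw [map_zero] at hy
        exact (γ ^ l).ne_zero hy.symm
      obtain ⟨l', hl'⟩ := hγ (Units.mk0 y hy0)
      have hy' : y = ((γ ^ l' : Fˣ) : F) := by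
        have := congrArg Units.val hl'
        simpa using this.symm
      refine ⟨l', ?_, hy'⟩
      apply hu.mul_left_cancel
      rw [← hl]
      have : γ ^ ((p : ℤ) * l') = γ ^ l := by
        ext
        rw [← hy, hφ, hy', mul_comm, zpow_mul]; simp
      have := aux_log γ N hN this
      push_cast at this
      exact this
  · intro x _
    simp only [psi]
    rw [Algebra.trace_eq_of_algEquiv φ]

end

/-- Theorem 3.2 of the paper: the set `{ψ(γ^a D) : a = 0, …, q-2}` has at
most five elements. -/
theorem statement_12 (p₁ p₂ m n : ℕ) (hp₁ : p₁.Prime) (hp₂ : p₂.Prime)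
    (hp₁mod : p₁ % 4 = 1) (hp₂mod : p₂ % 4 = 3) (hm : 1 ≤ m) (hn : 1 ≤ n)
    (N : ℕ) (hN : N = p₁ ^ m * p₂ ^ n)
    (p : ℕ) (hp : p.Prime)
    (hord₁ : orderOf ((p : ZMod (p₁ ^ m))) = Nat.totient (p₁ ^ m))
    (hord₂ : orderOf ((p : ZMod (p₂ ^ n))) = Nat.totient (p₂ ^ n))
    (f : ℕ) (hf : f = orderOf ((p : ZMod N))) (hford : 2 * f = Nat.totient N)
    (F : Type*) [Field F] [Fintype F] [Algebra (ZMod p) F]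
    (hcard : Fintype.card F = p ^ f)
    (γ : Fˣ) (hγ : ∀ x : Fˣ, x ∈ Subgroup.zpowers γ)
    (D : Set F)
    (hD : D = ⋃ i < p₁ ^ (m - 1), ⋃ j < p₂ ^ (n - 1),
      cycClass γ N (p₂ ^ n * i + p₁ ^ m * j)) :
    Set.ncard
      {z : ℂ | ∃ a : ℕ, a < p ^ f - 1 ∧ z = ∑ᶠ x ∈ D, psi p ((γ : F) ^ a * x)} ≤ 5 := by
  subst hN
  have hne : p₁ ≠ p₂ := by rintro rfl; omega
  have hc₁ : ¬ p₁ ∣ p₂ ^ n := fun h =>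
    hne ((Nat.prime_dvd_prime_iff_eq hp₁ hp₂).1 (hp₁.dvd_of_dvd_pow h))
  have hc₂ : ¬ p₂ ∣ p₁ ^ m := fun h =>
    hne ((Nat.prime_dvd_prime_iff_eq hp₂ hp₁).1 (hp₂.dvd_of_dvd_pow h)).symm
  have hcop : (p₁ ^ m).Coprime (p₂ ^ n) :=
    Nat.Coprime.pow _ _ ((Nat.coprime_primes hp₁ hp₂).2 hne)
  have : NeZero (p₁ ^ m) := ⟨pow_ne_zero _ hp₁.ne_zero⟩
  have : NeZero (p₂ ^ n) := ⟨pow_ne_zero _ hp₂.ne_zero⟩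
  have htot : 0 < Nat.totient (p₁ ^ m * p₂ ^ n) :=
    Nat.totient_pos.2 (Nat.mul_pos (pow_pos hp₁.pos _) (pow_pos hp₂.pos _))
  have hf0 : f ≠ 0 := by omega
  have hpf : (p : ZMod (p₁ ^ m * p₂ ^ n)) ^ f = 1 := by rw [hf]; exact pow_orderOf_eq_one _
  have hu : IsUnit (p : ZMod (p₁ ^ m * p₂ ^ n)) := IsUnit.of_pow_eq_one hpf hf0
  have hoγ : orderOf γ = p ^ f - 1 := by
    rw [orderOf_eq_card_of_forall_mem_zpowers hγ, Nat.card_units, Nat.card_eq_fintype_card, hcard]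
  have hNd : ((p₁ ^ m * p₂ ^ n : ℕ) : ℤ) ∣ orderOf γ := by
    rw [hoγ, Int.natCast_dvd_natCast, ← ZMod.natCast_eq_zero_iff,
      Nat.cast_sub (Nat.one_le_pow _ _ hp.pos)]
    push_cast
    rw [hpf, sub_self]
  -- the subgroup
  let e := ZMod.chineseRemainder hcop
  have hu₁ : IsUnit (p : ZMod (p₁ ^ m)) := by
    have := hu.map ((RingHom.fst (ZMod (p₁ ^ m)) (ZMod (p₂ ^ n))).comp e.toRingHom)
    rwa [map_natCast] at this
  have hu₂ : IsUnit (p : ZMod (p₂ ^ n)) := by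
    have := hu.map ((RingHom.snd (ZMod (p₁ ^ m)) (ZMod (p₂ ^ n))).comp e.toRingHom)
    rwa [map_natCast] at this
  obtain ⟨P₁, hP₁⟩ := hu₁
  obtain ⟨P₂, hP₂⟩ := hu₂
  have ho₁ : orderOf P₁ = Nat.totient (p₁ ^ m) := by rw [← orderOf_units, hP₁, hord₁]
  have ho₂ : orderOf P₂ = Nat.totient (p₂ ^ n) := by rw [← orderOf_units, hP₂, hord₂]
  have hof : orderOf (P₁, P₂) = f := by
    rw [hf, ← MulEquiv.orderOf_eq e.toMulEquiv (p : ZMod (p₁ ^ m * p₂ ^ n)), Prod.orderOf, Prod.orderOf, ho₁, ho₂]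
    simp [hord₁, hord₂]
  let H := Subgroup.zpowers (P₁, P₂)
  have hH : H.index = 2 := by
    have h := H.index_mul_card
    rw [Nat.card_zpowers, hof, Nat.card_prod, Nat.card_eq_fintype_card, Nat.card_eq_fintype_card,
      ZMod.card_units_eq_totient, ZMod.card_units_eq_totient, ← Nat.totient_mul hcop, ← hford] at h
    exact Nat.eq_of_mul_eq_mul_right (Nat.pos_of_ne_zero hf0) h
  have htop₁ : Subgroup.zpowers P₁ = ⊤ := by
    apply Subgroup.eq_top_of_card_eq
    rw [Nat.card_zpowers, ho₁, Nat.card_eq_fintype_card, ZMod.card_units_eq_totient]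
  have htop₂ : Subgroup.zpowers P₂ = ⊤ := by
    apply Subgroup.eq_top_of_card_eq
    rw [Nat.card_zpowers, ho₂, Nat.card_eq_fintype_card, ZMod.card_units_eq_totient]
  have hH₁ : ∀ u, ∃ v, (u, v) ∈ H := by
    intro u
    obtain ⟨k, hk⟩ : u ∈ Subgroup.zpowers P₁ := by rw [htop₁]; trivial
    exact ⟨P₂ ^ k, k, by simpa using hk⟩
  have hH₂ : ∀ v, ∃ u, (u, v) ∈ H := by
    intro u
    obtain ⟨k, hk⟩ : u ∈ Subgroup.zpowers P₂ := by rw [htop₂]; trivial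
    exact ⟨P₁ ^ k, k, by simpa using hk⟩
  let η := aux_eta γ (p₁ ^ m * p₂ ^ n) p
  let g : ZMod (p₁ ^ m) → ZMod (p₂ ^ n) → ℂ := fun x y => η (e.symm (x, y))
  have hg0 : ∀ x y, g (P₁ * x) (P₂ * y) = g x y := by
    intro x y
    have h1 : e.symm ((P₁ : ZMod (p₁ ^ m)) * x, (P₂ : ZMod (p₂ ^ n)) * y) = p * e.symm (x, y) := by
      rw [e.symm_apply_eq, map_mul, map_natCast, RingEquiv.apply_symm_apply, hP₁, hP₂]
      rfl
    simp only [g]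
    rw [h1]
    exact (aux_frob γ _ p hp hNd hγ hu _).symm
  have hg1 : ∀ (k : ℕ) x y, g (((P₁ ^ k : (ZMod (p₁ ^ m))ˣ) : ZMod (p₁ ^ m)) * x)
      (((P₂ ^ k : (ZMod (p₂ ^ n))ˣ) : ZMod (p₂ ^ n)) * y) = g x y := by
    intro k
    induction k with
    | zero => intro x y; simp
    | succ k ih =>
      intro x y
      rw [pow_succ', pow_succ', Units.val_mul, Units.val_mul, mul_assoc, mul_assoc, hg0, ih]
  have hg : ∀ h ∈ H, ∀ x y, g (h.1 * x) (h.2 * y) = g x y := by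
    intro h hh x y
    rw [← mem_powers_iff_mem_zpowers] at hh
    obtain ⟨k, rfl⟩ := hh
    exact hg1 k x y
  obtain ⟨z₁, z₂, z₃, z₄, z₅, hz⟩ := aux_comb hp₁ hp₂ (by omega) (by omega) hm hn hc₁ hc₂ g H hH
    hH₁ hH₂ hg
  -- the character sum
  let s : Fin (p₁ ^ (m - 1)) × Fin (p₂ ^ (n - 1)) → ZMod (p₁ ^ m * p₂ ^ n) := fun t =>
    ((p₂ ^ n * (t.1 : ℕ) + p₁ ^ m * (t.2 : ℕ) : ℕ) : ZMod (p₁ ^ m * p₂ ^ n))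
  have hes : ∀ (a : ℕ) t, e (a + s t) =
      ((a : ZMod (p₁ ^ m)) + ((p₂ ^ n : ℕ) : ZMod (p₁ ^ m)) * ((t.1 : ℕ) : ZMod (p₁ ^ m)),
       (a : ZMod (p₂ ^ n)) + ((p₁ ^ m : ℕ) : ZMod (p₂ ^ n)) * ((t.2 : ℕ) : ZMod (p₂ ^ n))) := by
    intro a t
    have z1 : ((p₁ ^ m : ℕ) : ZMod (p₁ ^ m)) = 0 := ZMod.natCast_self _
    have z2 : ((p₂ ^ n : ℕ) : ZMod (p₂ ^ n)) = 0 := ZMod.natCast_self _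
    simp only [s]
    rw [map_add, map_natCast, map_natCast]
    ext
    · simp only [Prod.fst_add, Prod.fst_natCast]
      rw [Nat.cast_add, Nat.cast_mul, Nat.cast_mul, z1]; ring
    · simp only [Prod.snd_add, Prod.snd_natCast]
      rw [Nat.cast_add, Nat.cast_mul, Nat.cast_mul, z2]; ring
  have hsinj : Function.Injective s := by
    intro t t' htt
    have h1 := hes 0 t
    rw [htt, hes 0 t', Prod.ext_iff] at h1
    simp only at h1
    have i1 := (aux_bij (k := m) hp₁ hc₁ 1 ((0 : ℕ) : ZMod (p₁ ^ m))).injective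
      (a₁ := t'.1) (a₂ := t.1) (congrArg (fun x => aux_pi p₁ m (((1 : (ZMod (p₁ ^ m))ˣ) : ZMod (p₁ ^ m)) * x)) h1.1)
    have i2 := (aux_bij (k := n) hp₂ hc₂ 1 ((0 : ℕ) : ZMod (p₂ ^ n))).injective
      (a₁ := t'.2) (a₂ := t.2) (congrArg (fun x => aux_pi p₂ n (((1 : (ZMod (p₂ ^ n))ˣ) : ZMod (p₂ ^ n)) * x)) h1.2)
    exact (Prod.ext i1 i2).symm
  have hD' : D = ⋃ t ∈ (Set.univ : Set (Fin (p₁ ^ (m - 1)) × Fin (p₂ ^ (n - 1)))),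
      aux_cls γ (p₁ ^ m * p₂ ^ n) (s t) := by
    rw [hD]
    ext x
    simp only [Set.mem_iUnion, aux_cls_eq]
    constructor
    · rintro ⟨i, hi, j, hj, h⟩
      exact ⟨(⟨i, hi⟩, ⟨j, hj⟩), trivial, h⟩
    · rintro ⟨⟨i, j⟩, _, h⟩
      exact ⟨i, i.2, j, j.2, h⟩
  have hsum : ∀ a : ℕ, ∑ᶠ x ∈ D, psi p ((γ : F) ^ a * x) ∈ ({z₁, z₂, z₃, z₄, z₅} : Set ℂ) := by
    intro a
    have h := hz a a
    rw [hD', finsum_mem_biUnion (fun t _ t' _ htt => aux_cls_disj γ _ hNd (hsinj.ne htt))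
      Set.finite_univ (fun _ _ => Set.toFinite _), finsum_mem_univ, finsum_eq_sum_of_fintype,
      Fintype.sum_prod_type]
    convert h using 4 with i _ j _
    rw [aux_shift]
    simp only [g, η]
    congr 1
    rw [e.eq_symm_apply, hes]
  have hsub : {z : ℂ | ∃ a : ℕ, a < p ^ f - 1 ∧ z = ∑ᶠ x ∈ D, psi p ((γ : F) ^ a * x)} ⊆
      (([z₁, z₂, z₃, z₄, z₅].toFinset : Finset ℂ) : Set ℂ) := by
    rintro z ⟨a, _, rfl⟩
    simpa using hsum a
  refine (Set.ncard_le_ncard hsub (Finset.finite_toSet _)).trans ?_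
  rw [Set.ncard_coe_finset]
  exact (List.toFinset_card_le _).trans (by simp)
end
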